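/- arXiv:2404.15476 — 4 statements merged into one kernel-verified Lean document; each statement's English description precedes it below -/
import Mathlib

section
/- There exists a nonempty closed shift-invariant subset X of {0,1}^ℤ such that the restriction of the shift σ to X is chaotic almost minimal, and moreover there exist two distinct σ-invariant ergodic Borel probability measures on X, each of which is nonatomic. -/
/-!
The subshift is built from complementary words `W true m` and `W false m`, starting from single
letters, by the recursion
`W b (m + 1) = (W b m) ^ reps m ++ W (!b) m ++ (W b n ++ W (!b) n) ^ m ++ W b m`,
where `n ≤ m` is the first coordinate of `m` under the pairing function, so that every `n` recurs
infinitely often. The subshift `XX` consists of the sequences all of whose factors are factors of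
these words. As arbitrarily high powers of `W true n ++ W false n` occur, `XX` contains the periodic
points `pp n = (W true n ++ W false n) ^ ∞`, which are dense since every word of the language is a
factor of `pp n` for large `n`.

Almost minimality rests on a parsing of words of stage at least `m` into blocks `W b m` separated by
single pieces of `pp n` with `n < m` (`Parse.infix_cases`). A point of `XX` missing both blocks of
level `m` is therefore in the orbit of some `pp n` with `n < m`, while a point that meets a block of
every level contains every word of the language and has a dense orbit (`orb_or_fac`). So a proper
closed invariant set consists of finitely many periodic orbits, and the shift on `XX` is chaotic
almost minimal (`isCAMZ_TX`).

For the measures, `reps m` grows so fast that the letter `b` keeps a proportion of at least `3 / 4`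
in `W b m` for all `m` (`exc_W`). The uniform measures on the orbits of `(W b m) ^ ∞` accumulate, by
compactness, at an invariant measure on `XX` giving `{x | x 0 = b}` mass at least `3 / 4`
(`exists_mem_KK`). Maximizing this mass first, and then lexicographically the masses of a countable
generating family of clopen events (`exists_lex_max`), selects an extreme point of the set of
invariant measures, which is ergodic (`exists_ergodic`). Such a measure has no atom: by ergodicity
it would be carried by the orbit of some `pp n`, where both letters have frequency `1 / 2` because
translation by `len n` complements `pp n` (`nonatomic`). The measures obtained for `b = true` and
`b = false` differ since their frequencies of the letter `true` do.
-/

open Set MeasureTheory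

instance homeomorphGroup {X : Type*} [TopologicalSpace X] : Group (X ≃ₜ X) where
  mul f g := g.trans f
  one := Homeomorph.refl X
  inv f := f.symm
  mul_assoc f g h := Homeomorph.ext fun _ => rfl
  one_mul f := Homeomorph.ext fun _ => rfl
  mul_one f := Homeomorph.ext fun _ => rfl
  inv_mul_cancel f := Homeomorph.ext fun x => f.symm_apply_apply x

def shiftHomeo (A : Type*) [TopologicalSpace A] : (ℤ → A) ≃ₜ (ℤ → A) where
  toFun x := fun n => x (n + 1)
  invFun x := fun n => x (n - 1)
  left_inv x := funext fun n => by simp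
  right_inv x := funext fun n => by simp
  continuous_toFun := continuous_pi fun n => continuous_apply (n + 1)
  continuous_invFun := continuous_pi fun n => continuous_apply (n - 1)

def restrictHomeo {X : Type*} [TopologicalSpace X] (e : X ≃ₜ X) (s : Set X)
    (h : ∀ x, x ∈ s ↔ e x ∈ s) : s ≃ₜ s where
  toEquiv := e.toEquiv.subtypeEquiv h
  continuous_toFun := by
    exact Continuous.subtype_mk (e.continuous.comp continuous_subtype_val) _
  continuous_invFun := by
    exact Continuous.subtype_mk (e.symm.continuous.comp continuous_subtype_val) _

def IsCAMZ {X : Type*} [TopologicalSpace X] (T : X ≃ₜ X) : Prop :=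
  (∀ n : ℤ, n ≠ 0 → T ^ n ≠ 1) ∧
  (∀ U V : Set X, IsOpen U → IsOpen V → U.Nonempty → V.Nonempty →
      ∃ n : ℤ, ((T ^ n) '' U ∩ V).Nonempty) ∧
  Dense {x : X | ∃ k : ℕ, 0 < k ∧ (T ^ k) x = x} ∧
  ∀ A : Set X, IsClosed A → T '' A = A → A ≠ Set.univ → A.Finite

def IsCAM {G X : Type*} [Group G] [TopologicalSpace X] (T : G →* (X ≃ₜ X)) : Prop :=
  Function.Injective T ∧
  (∀ U V : Set X, IsOpen U → IsOpen V → U.Nonempty → V.Nonempty →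
      ∃ g : G, ((T g) '' U ∩ V).Nonempty) ∧
  Dense {x : X | (Set.range fun g : G => T g x).Finite} ∧
  ∀ A : Set X, IsClosed A → (∀ g : G, T g '' A = A) → A ≠ Set.univ → A.Finite


namespace CAMShift

/-! ### Finite words and their occurrences in bi-infinite sequences -/

/-- The power `w ^ k` of a word. -/
def rep (w : List Bool) (k : ℕ) : List Bool := (List.replicate k w).flatten

@[simp] lemma rep_zero (w : List Bool) : rep w 0 = [] := rfl

lemma rep_succ (w : List Bool) (k : ℕ) : rep w (k + 1) = w ++ rep w k := by
  simp [rep, List.replicate_succ]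

lemma rep_succ' (w : List Bool) (k : ℕ) : rep w (k + 1) = rep w k ++ w := by
  induction k with
  | zero => simp [rep_succ]
  | succ k ih => rw [rep_succ, ih, ← List.append_assoc, ← rep_succ, ih]

@[simp] lemma length_rep (w : List Bool) (k : ℕ) : (rep w k).length = k * w.length := by
  simp [rep]

lemma rep_prefix_of_le (w : List Bool) {k l : ℕ} (h : k ≤ l) : rep w k <+: rep w l := by
  induction l, h using Nat.le_induction with
  | base => exact List.prefix_rfl
  | succ l _ ih => rw [rep_succ']; exact ih.trans (List.prefix_append _ _)

/-- The bi-infinite periodic sequence `w ^ ∞`, with a copy of `w` starting at coordinate `0`. The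
default value `false` is used only for the empty word. -/
def per (w : List Bool) (i : ℤ) : Bool := w.getD (i % w.length).toNat false

lemma per_add (w : List Bool) (i k : ℤ) : per w (i + k * w.length) = per w i := by
  simp [per, Int.add_mul_emod_self_right]

lemma per_add_length (w : List Bool) (i : ℤ) : per w (i + w.length) = per w i := by
  simpa using per_add w i 1

lemma getElem?_eq_per (w : List Bool) {i : ℕ} (h : i < w.length) :
    w[i]? = some (per w i) := by
  have : ((i : ℤ) % w.length).toNat = i := by
    rw [Int.emod_eq_of_lt (by positivity) (by exact_mod_cast h)]; simp
  simp [per, this, List.getD, List.getElem?_eq_getElem h]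

lemma rep_getElem? (w : List Bool) (k : ℕ) {i : ℕ} (h : i < k * w.length) :
    (rep w k)[i]? = some (per w i) := by
  induction k generalizing i with
  | zero => simp at h
  | succ k ih =>
    rw [rep_succ]
    by_cases hi : i < w.length
    · rw [List.getElem?_append_left hi, getElem?_eq_per w hi]
    · push Not at hi
      rw [List.getElem?_append_right hi, ih (by rw [Nat.succ_mul] at h; omega)]
      rw [← per_add_length w ((i - w.length : ℕ) : ℤ)]
      congr 2
      omega

/-- The word `t` occurs in `x` at position `s`. -/
def Occ (t : List Bool) (x : ℤ → Bool) (s : ℤ) : Prop :=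
  ∀ j : ℕ, j < t.length → t[j]? = some (x (s + j))

/-- The word `t` occurs somewhere in `x`. -/
def Fac (t : List Bool) (x : ℤ → Bool) : Prop := ∃ s, Occ t x s

lemma Fac.mono {t t' : List Bool} {x : ℤ → Bool} (h : Fac t x) (ht : t' <:+: t) :
    Fac t' x := by
  obtain ⟨s, h⟩ := h
  obtain ⟨a, b, rfl⟩ := ht
  refine ⟨s + a.length, fun j hj => ?_⟩
  have := h (a.length + j) (by simp; omega)
  rw [List.append_assoc, List.getElem?_append_right (by omega),
    List.getElem?_append_left (by omega)] at this
  simpa [add_assoc] using this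

/-- The word read off `x` on the interval `[s, s + L)`. -/
def window (x : ℤ → Bool) (s : ℤ) (L : ℕ) : List Bool :=
  (List.range L).map fun j : ℕ => x (s + j)

@[simp] lemma length_window (x : ℤ → Bool) (s : ℤ) (L : ℕ) : (window x s L).length = L := by
  simp [window]

lemma occ_window (x : ℤ → Bool) (s : ℤ) (L : ℕ) : Occ (window x s L) x s := by
  intro j hj
  simp at hj
  simp [window, List.getElem?_range hj]

lemma window_occ {x y : ℤ → Bool} {s r : ℤ} {L : ℕ} (h : Occ (window x s L) y r) {j : ℕ}
    (hj : j < L) : y (r + j) = x (s + j) := by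
  have := h j (by simpa)
  simpa [window, List.getElem?_range hj] using this.symm

lemma window_drop_take (x : ℤ → Bool) (s : ℤ) (a L b : ℕ) :
    ((window x s (a + L + b)).drop a).take L = window x (s + a) L := by
  apply List.ext_getElem
  · simp; omega
  · intro i h1 h2
    simp [window, add_assoc]

lemma occ_rep (w : List Bool) (k : ℕ) : Occ (rep w k) (per w) 0 := by
  intro j hj
  rw [rep_getElem? w k (by simpa using hj)]
  simp

lemma infix_rep_of_fac {w t : List Bool} (hw : w ≠ []) (h : Fac t (per w)) {k : ℕ}
    (hk : t.length + w.length ≤ k * w.length) : t <:+: rep w k := by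
  obtain ⟨s, h⟩ := h
  have hw' : (0 : ℤ) < w.length := by exact_mod_cast List.length_pos_iff.2 hw
  obtain ⟨r, hr⟩ := Int.eq_ofNat_of_zero_le (Int.emod_nonneg s hw'.ne')
  have hr' : (r : ℤ) < w.length := by rw [← hr]; exact Int.emod_lt_of_pos s hw'
  have ht : t = ((rep w k).drop r).take t.length := by
    apply List.ext_getElem?
    intro j
    by_cases hj : j < t.length
    · rw [h j hj, List.getElem?_take_of_lt hj, List.getElem?_drop, rep_getElem? w k (by omega)]
      congr 1
      have : s + j = ((r + j : ℕ) : ℤ) + (s / w.length) * w.length := by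
        have := Int.emod_add_mul_ediv s w.length
        push_cast
        linarith
      rw [this, per_add]
    · rw [List.getElem?_eq_none (by omega), List.getElem?_take_eq_none (by omega)]
  rw [ht]
  exact (List.take_prefix _ _).isInfix.trans (List.drop_suffix _ _).isInfix

/-! ### The hierarchy of words -/

/-- The number of repetitions of the main block at stage `m`. It grows fast enough for the letter
imbalance of the words to survive in the limit. -/
def reps (m : ℕ) : ℕ := 2 * (m + 1) * (m + 2) ^ 2

/-- The words `W b m`, with `W (!b) m` the letterwise complement of `W b m`. Stage `m + 1` contains
a run `(W b n ++ W (!b) n) ^ m`, where `n` is the first coordinate of `m` under the pairing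
bijection `ℕ ≃ ℕ × ℕ`, so that each `n` is served infinitely often. -/
def W (b : Bool) : ℕ → List Bool
  | 0 => [b]
  | m + 1 => rep (W b m) (reps m) ++ W (!b) m ++
      rep (W b (Nat.unpair m).1 ++ W (!b) (Nat.unpair m).1) m ++ W b m
termination_by m => m
decreasing_by all_goals have := Nat.unpair_left_le m; omega

lemma W_zero (b : Bool) : W b 0 = [b] := by rw [W]

lemma W_succ (b : Bool) (m : ℕ) : W b (m + 1) = rep (W b m) (reps m) ++ W (!b) m ++
      rep (W b (Nat.unpair m).1 ++ W (!b) (Nat.unpair m).1) m ++ W b m := by rw [W]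

/-- The common length of the words of stage `m`. -/
def len (m : ℕ) : ℕ := (W true m).length

lemma map_not_rep (w : List Bool) (k : ℕ) : (rep w k).map not = rep (w.map not) k := by
  simp [rep]

lemma W_not (b : Bool) (m : ℕ) : W (!b) m = (W b m).map not := by
  induction m using Nat.strong_induction_on generalizing b with
  | _ m ih =>
    cases m with
    | zero => simp [W_zero]
    | succ m =>
      have h1 : ∀ b, (W b m).map not = W (!b) m := fun b => (ih m (by omega) b).symm
      have h2 : ∀ b, (W b (Nat.unpair m).1).map not = W (!b) (Nat.unpair m).1 := fun b =>
        (ih _ (by have := Nat.unpair_left_le m; omega) b).symm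
      rw [W_succ, W_succ]
      simp only [List.map_append, map_not_rep, h1, h2]

lemma length_W (b : Bool) (m : ℕ) : (W b m).length = len m := by
  cases b
  · have := W_not true m
    simp only [Bool.not_true] at this
    rw [this, List.length_map, len]
  · rfl

lemma len_succ (m : ℕ) :
    len (m + 1) = (reps m + 2) * len m + 2 * m * len (Nat.unpair m).1 := by
  rw [← length_W true, W_succ]
  simp only [List.length_append, length_rep, length_W]
  ring

lemma len_zero : len 0 = 1 := by simp [len, W_zero]

lemma lt_len (m : ℕ) : m < len m := by
  induction m with
  | zero => simp [len_zero]
  | succ m ih => rw [len_succ]; nlinarith [Nat.zero_le (reps m * len m),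
      Nat.zero_le (2 * m * len (Nat.unpair m).1)]

lemma len_pos (m : ℕ) : 0 < len m := by have := lt_len m; omega

lemma len_mono : Monotone len :=
  monotone_nat_of_le_succ fun m => by
    rw [len_succ]; nlinarith [Nat.zero_le (reps m * len m),
      Nat.zero_le (2 * m * len (Nat.unpair m).1)]

lemma W_ne_nil (b : Bool) (m : ℕ) : W b m ≠ [] := by
  rw [← List.length_pos_iff, length_W]; exact len_pos m

lemma W_suffix_succ (b : Bool) (m : ℕ) : W b m <:+ W b (m + 1) := by
  rw [W_succ]; exact List.suffix_append _ _

lemma W_infix_of_le (b : Bool) {m k : ℕ} (h : m ≤ k) : W b m <:+: W b k := by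
  induction k, h using Nat.le_induction with
  | base => exact List.infix_rfl
  | succ k _ ih => exact ih.trans (W_suffix_succ b k).isInfix

lemma W_not_infix_succ (b : Bool) (m : ℕ) : W (!b) m <:+: W b (m + 1) := by
  rw [W_succ]
  exact ⟨rep (W b m) (reps m), _, by rw [List.append_assoc (_ ++ _)]⟩

lemma W_infix_succ (b c : Bool) (m : ℕ) : W c m <:+: W b (m + 1) := by
  rcases eq_or_ne c b with rfl | h
  · exact (W_suffix_succ c m).isInfix
  · rw [← Bool.eq_not.2 h |>.symm]; exact W_not_infix_succ b m

/-- The words of the subshift. Being a factor of a single `W b m` is equivalent, as `W b m` is a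
factor of both words of stage `m + 1`. -/
def Lang (t : List Bool) : Prop := ∃ m, ∀ b, t <:+: W b m

lemma lang_of_factor {t : List Bool} {b : Bool} {m : ℕ} (h : t <:+: W b m) : Lang t :=
  ⟨m + 1, fun c => h.trans (W_infix_succ c b m)⟩

/-- The block whose powers are the periodic sequences of the subshift. -/
def blk (n : ℕ) : List Bool := W true n ++ W false n

lemma length_blk (n : ℕ) : (blk n).length = 2 * len n := by
  simp [blk, length_W]; ring

lemma blk_ne_nil (n : ℕ) : blk n ≠ [] := by simp [blk, W_ne_nil]

/-- The periodic sequence `(W true n ++ W false n) ^ ∞`. -/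
def pp (n : ℕ) : ℤ → Bool := per (blk n)

lemma pp_add (n : ℕ) (i : ℤ) : pp n (i + len n) = !(pp n i) := by
  have key : ∀ j : ℕ, j < len n → pp n (j + len n) = !(pp n j) := by
    intro j hj
    have h1 := getElem?_eq_per (blk n) (i := j) (by rw [length_blk]; omega)
    have h2 := getElem?_eq_per (blk n) (i := j + len n) (by rw [length_blk]; omega)
    have h3 : (W false n)[j]? = ((W true n)[j]?).map not := by
      rw [← List.getElem?_map, ← W_not, Bool.not_true]
    rw [blk, List.getElem?_append_left (by rwa [length_W])] at h1
    rw [blk, List.getElem?_append_right (by rw [length_W]; omega), length_W,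
      Nat.add_sub_cancel, h3, h1] at h2
    simpa [pp, blk] using h2.symm
  have hper : ∀ i k : ℤ, pp n (i + k * (2 * len n)) = pp n i := by
    intro i k
    have := per_add (blk n) i k
    rw [length_blk] at this
    exact_mod_cast this
  have hpos := len_pos n
  set r := i % (2 * len n) with hr
  have hi : i = r + (i / (2 * len n)) * (2 * len n) := by
    have := Int.emod_add_mul_ediv i (2 * len n); linarith
  have hr0 : 0 ≤ r := Int.emod_nonneg _ (by omega)
  have hr1 : r < 2 * len n := Int.emod_lt_of_pos _ (by omega)
  have main : pp n (r + len n) = !(pp n r) := by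
    by_cases h : r < len n
    · obtain ⟨j, hj⟩ := Int.eq_ofNat_of_zero_le hr0
      rw [hj]; exact key j (by omega)
    · obtain ⟨j, hj⟩ := Int.eq_ofNat_of_zero_le (show 0 ≤ r - len n by omega)
      have h1 := key j (by omega)
      have h2 := hper j 1
      rw [show r + len n = (j : ℤ) + 1 * (2 * len n) by omega,
        show r = j + len n by omega, h1, h2, Bool.not_not]
  rw [hi, show r + i / (2 * len n) * (2 * len n) + len n = r + len n + i / (2 * len n) * (2 * len n)
    by ring, hper, hper, main]

lemma pp_period (n : ℕ) (i k : ℤ) : pp n (i + k * (2 * len n)) = pp n i := by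
  have := per_add (blk n) i k
  rw [length_blk] at this
  exact_mod_cast this

lemma lang_rep_blk (n k : ℕ) : Lang (rep (blk n) k) := by
  set m := Nat.pair n k
  refine lang_of_factor (b := true) (m := m + 1) ?_
  refine (rep_prefix_of_le (blk n) (Nat.right_le_pair n k)).isInfix.trans ?_
  rw [W_succ, Nat.unpair_pair]
  exact ⟨rep (W true m) (reps m) ++ W (!true) m, W true m, rfl⟩

lemma lang_of_fac_pp {t : List Bool} {n : ℕ} (h : Fac t (pp n)) : Lang t := by
  obtain ⟨m, hm⟩ := lang_rep_blk n (t.length + 1)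
  refine ⟨m, fun b => (infix_rep_of_fac (blk_ne_nil n) h ?_).trans (hm b)⟩
  have := List.length_pos_iff.2 (blk_ne_nil n)
  nlinarith

lemma fac_pp_W (b : Bool) (n : ℕ) : Fac (W b n) (pp n) := by
  refine Fac.mono ⟨0, occ_rep (blk n) 1⟩ ?_
  rw [rep_succ, rep_zero, List.append_nil, blk]
  cases b
  · exact (List.suffix_append _ _).isInfix
  · exact (List.prefix_append _ _).isInfix

lemma lang_of_fac_perW {t : List Bool} {b : Bool} {m : ℕ} (ht : t.length ≤ len m)
    (h : Fac t (per (W b m))) : Lang t := by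
  have h1 := infix_rep_of_fac (W_ne_nil b m) h (k := 2) (by rw [length_W]; omega)
  refine lang_of_factor (b := b) (m := m + 1) (h1.trans ?_)
  rw [W_succ, List.append_assoc, List.append_assoc]
  refine (rep_prefix_of_le _ ?_).isInfix.trans (List.prefix_append _ _).isInfix
  rw [reps]; nlinarith [Nat.zero_le (m ^ 3), Nat.zero_le (m ^ 2)]

/-! ### Letter imbalance -/

/-- The number of occurrences of `b` minus the number of occurrences of the other letter. -/
def exc (b : Bool) (l : List Bool) : ℤ := (l.map fun c => if c = b then (1 : ℤ) else -1).sum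

lemma exc_append (b : Bool) (l l' : List Bool) : exc b (l ++ l') = exc b l + exc b l' := by
  simp [exc]

lemma exc_rep (b : Bool) (l : List Bool) (k : ℕ) : exc b (rep l k) = k * exc b l := by
  induction k with
  | zero => simp [exc]
  | succ k ih => rw [rep_succ, exc_append, ih]; push_cast; ring

lemma exc_not (b : Bool) (l : List Bool) : exc b (l.map not) = - exc b l := by
  induction l with
  | nil => simp [exc]
  | cons c l ih =>
    simp only [exc, List.map_cons, List.sum_cons] at ih ⊢
    rw [ih]; cases b <;> cases c <;> simp <;> ring

lemma exc_W_succ (b : Bool) (m : ℕ) : exc b (W b (m + 1)) = reps m * exc b (W b m) := by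
  rw [W_succ]
  simp only [exc_append, exc_rep, W_not, exc_not]
  ring

/-- The relative imbalance of `W b m` is at least `(m + 2) / (2 * (m + 1))`, in particular more than
`1 / 2` at every stage. -/
lemma exc_W (b : Bool) (m : ℕ) : ((m : ℤ) + 2) * len m ≤ 2 * (m + 1) * exc b (W b m) := by
  induction m with
  | zero => simp [W_zero, len_zero, exc]
  | succ m ih =>
    rw [exc_W_succ, len_succ]
    have h1 : (len (Nat.unpair m).1 : ℤ) ≤ len m := by
      exact_mod_cast len_mono (Nat.unpair_left_le m)
    have h0 : (0 : ℤ) < len m := by exact_mod_cast len_pos m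
    have hm : (0 : ℤ) ≤ m := by positivity
    set e := exc b (W b m)
    set q : ℤ := (len m : ℤ)
    have h2 : (2 * m * len (Nat.unpair m).1 : ℤ) ≤ 2 * m * q := by gcongr
    push_cast
    have h3 : ((m : ℤ) + 1 + 2) * ((reps m + 2) * q + 2 * m * len (Nat.unpair m).1)
        ≤ (m + 3) * ((reps m + 2 + 2 * m) * q) := by
      have : ((m : ℤ) + 1 + 2) * ((reps m + 2) * q + 2 * m * len (Nat.unpair m).1)
        ≤ (m + 1 + 2) * ((reps m + 2) * q + 2 * m * q) := by gcongr
      linarith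
    refine h3.trans ?_
    have hr : (reps m : ℤ) = 2 * (m + 1) * (m + 2) ^ 2 := by simp [reps]
    rw [hr]
    have h4 : 2 * ((m : ℤ) + 2) ^ 3 * ((m + 2) * q) ≤ 2 * (m + 2) ^ 3 * (2 * (m + 1) * e) := by
      gcongr
    have h5 : ((m : ℤ) + 3) * ((2 * (m + 1) * (m + 2) ^ 2 + 2 + 2 * m) * q)
        ≤ 2 * (m + 2) ^ 3 * ((m + 2) * q) := by
      have : 0 ≤ (2 * ((m : ℤ) + 2) ^ 4 - (m + 3) * (2 * (m + 1) * (m + 2) ^ 2 + 2 + 2 * m)) := by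
        ring_nf; positivity
      nlinarith
    nlinarith

end CAMShift

namespace CAMShift

/-! ### Parsing at a given level -/

/-- A run at level `m`: a piece of one of the periodic sequences of level below `m`. -/
def Run (m : ℕ) (r : List Bool) : Prop := r = [] ∨ ∃ n < m, Fac r (pp n)

lemma Run.mono {m : ℕ} {r t : List Bool} (h : Run m r) (ht : t <:+: r) : Run m t := by
  rcases h with rfl | ⟨n, hn, h⟩
  · exact .inl (List.infix_nil.1 ht)
  · exact .inr ⟨n, hn, Fac.mono h ht⟩

/-- Words that are concatenations of blocks `W b m` in which consecutive blocks may be separated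
by a single run of level `m`. -/
inductive Parse (m : ℕ) : List Bool → Prop
  | block (b : Bool) : Parse m (W b m)
  | join {w r w' : List Bool} : Parse m w → Run m r → Parse m w' → Parse m (w ++ r ++ w')

lemma Parse.append {m : ℕ} {w w' : List Bool} (h : Parse m w) (h' : Parse m w') :
    Parse m (w ++ w') := by
  simpa using Parse.join h (.inl rfl) h'

lemma Parse.rep {m : ℕ} {w : List Bool} (h : Parse m w) (k : ℕ) : Parse m (rep w (k + 1)) := by
  induction k with
  | zero => simpa [rep_succ] using h
  | succ k ih => rw [rep_succ]; exact h.append ih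

lemma fac_rep_pp (b : Bool) (n k : ℕ) : Fac (rep (W b n ++ W (!b) n) k) (pp n) := by
  cases b
  · refine Fac.mono ⟨0, occ_rep (blk n) (k + 1)⟩ ⟨W true n, W false n, ?_⟩
    induction k with
    | zero => simp [rep_succ, blk]
    | succ k ih => rw [rep_succ (blk n), ← ih, rep_succ, blk]; simp [List.append_assoc]
  · exact ⟨0, occ_rep (blk n) k⟩

lemma parse_W (m : ℕ) (b : Bool) {j : ℕ} (hj : m ≤ j) : Parse m (W b j) := by
  induction j using Nat.strong_induction_on generalizing b with
  | _ j ih =>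
    rcases hj.eq_or_lt with rfl | hlt
    · exact .block b
    · obtain ⟨i, rfl⟩ : ∃ i, j = i + 1 := ⟨j - 1, by omega⟩
      have hi : ∀ c, Parse m (W c i) := fun c => ih i (by omega) c (by omega)
      have hle := Nat.unpair_left_le i
      obtain ⟨k, hk⟩ : ∃ k, reps i = k + 1 :=
        ⟨reps i - 1, by have : 0 < reps i := by { unfold reps; positivity }
                        omega⟩
      rw [W_succ, hk]
      have hfirst := ((hi b).rep k).append (hi (!b))
      by_cases hn : (Nat.unpair i).1 < m
      · exact .join hfirst (.inr ⟨_, hn, fac_rep_pp b _ i⟩) (hi b)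
      · push Not at hn
        rcases Nat.eq_zero_or_pos i with rfl | hpos
        · exact .join hfirst (.inl rfl) (hi b)
        · obtain ⟨l, hl⟩ : ∃ l, i = l + 1 := ⟨i - 1, by omega⟩
          have hmid : Parse m (CAMShift.rep
              (W b (Nat.unpair i).1 ++ W (!b) (Nat.unpair i).1) i) := by
            nth_rw 3 [hl]
            exact ((ih _ (by omega) b hn).append (ih _ (by omega) (!b) hn)).rep l
          exact (hfirst.append hmid).append (hi b)

lemma Parse.exists_prefix_eq {m : ℕ} {w : List Bool} (h : Parse m w) : ∃ b, W b m <+: w := by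
  induction h with
  | block b => exact ⟨b, List.prefix_rfl⟩
  | join _ _ _ ih _ =>
    obtain ⟨b, hb⟩ := ih
    exact ⟨b, by rw [List.append_assoc]; exact hb.trans (List.prefix_append _ _)⟩

lemma Parse.exists_suffix {m : ℕ} {w : List Bool} (h : Parse m w) : ∃ b, W b m <:+ w := by
  induction h with
  | block b => exact ⟨b, List.suffix_rfl⟩
  | join _ _ _ _ ih =>
    obtain ⟨b, hb⟩ := ih
    exact ⟨b, hb.trans (List.suffix_append _ _)⟩

lemma infix_append_cases {t A B : List Bool} (h : t <:+: A ++ B) :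
    t <:+: A ∨ t <:+: B ∨ ∃ t₁ t₂, t = t₁ ++ t₂ ∧ t₁ <:+ A ∧ t₂ <+: B := by
  obtain ⟨p, s, h⟩ := h
  rw [List.append_assoc] at h
  rcases List.append_eq_append_iff.1 h with ⟨c, h1, h2⟩ | ⟨c, h1, h2⟩
  · rcases List.append_eq_append_iff.1 h2 with ⟨d, h3, h4⟩ | ⟨d, h3, h4⟩
    · exact .inl ⟨p, d, by rw [h1, h3]; simp⟩
    · exact .inr (.inr ⟨c, d, h3, ⟨p, h1.symm⟩, ⟨s, h4.symm⟩⟩)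
  · exact .inr (.inl ⟨c, s, by rw [h2]; simp⟩)

lemma suffix_append_cases {t A B : List Bool} (h : t <:+ A ++ B) :
    t <:+ B ∨ ∃ t₁, t = t₁ ++ B ∧ t₁ <:+ A := by
  obtain ⟨p, h⟩ := h
  rcases List.append_eq_append_iff.1 h with ⟨c, h1, h2⟩ | ⟨c, h1, h2⟩
  · exact .inr ⟨c, h2, ⟨p, h1.symm⟩⟩
  · exact .inl ⟨c, h2.symm⟩

/-- A piece of a parsed word that contains no complete block is a run up to boundary pieces no
longer than a block. -/
lemma Parse.infix_cases {m : ℕ} {w : List Bool} (h : Parse m w) {t : List Bool} (ht : t <:+: w) :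
    (∃ b, W b m <:+: t) ∨
      ∃ a r c, t = a ++ r ++ c ∧ a.length ≤ len m ∧ c.length ≤ len m ∧ Run m r := by
  induction h generalizing t with
  | block b =>
    exact .inr ⟨t, [], [], by simp, by simpa [length_W] using ht.length_le, by simp, .inl rfl⟩
  | @join w r w' hw hr hw' ih ih' =>
    have hsuf : ∀ {t₁}, t₁ <:+ w → (∃ b, W b m <:+: t₁) ∨ t₁.length ≤ len m := by
      intro t₁ h
      obtain ⟨b, hb⟩ := hw.exists_suffix
      rcases le_total t₁.length (len m) with h' | h'
      · exact .inr h'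
      · exact .inl ⟨b, (List.suffix_of_suffix_length_le hb h (by rwa [length_W])).isInfix⟩
    have hpre : ∀ {t₁}, t₁ <+: w' → (∃ b, W b m <:+: t₁) ∨ t₁.length ≤ len m := by
      intro t₁ h
      obtain ⟨b, hb⟩ := hw'.exists_prefix_eq
      rcases le_total t₁.length (len m) with h' | h'
      · exact .inr h'
      · exact .inl ⟨b, (List.prefix_of_prefix_length_le hb h (by rwa [length_W])).isInfix⟩
    rcases infix_append_cases ht with h | h | ⟨t₁, t₂, rfl, h1, h2⟩
    · rcases infix_append_cases h with h | h | ⟨t₁, t₂, rfl, h1, h2⟩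
      · exact ih h
      · exact .inr ⟨[], t, [], by simp, by simp, by simp, hr.mono h⟩
      · rcases hsuf h1 with ⟨b, hb⟩ | h3
        · exact .inl ⟨b, hb.trans (List.prefix_append _ _).isInfix⟩
        · exact .inr ⟨t₁, t₂, [], by simp, h3, by simp, hr.mono h2.isInfix⟩
    · exact ih' h
    · rcases hpre h2 with ⟨b, hb⟩ | h3
      · exact .inl ⟨b, hb.trans (List.suffix_append _ _).isInfix⟩
      · rcases suffix_append_cases h1 with h | ⟨t₃, rfl, h⟩
        · exact .inr ⟨[], t₁, t₂, by simp, by simp, h3, hr.mono h.isInfix⟩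
        · rcases hsuf h with ⟨b, hb⟩ | h4
          · refine .inl ⟨b, hb.trans ?_⟩
            rw [List.append_assoc]
            exact (List.prefix_append _ _).isInfix
          · exact .inr ⟨t₃, r, t₂, rfl, h4, h3, hr⟩

/-! ### The subshift and its points -/

/-- The translate of `x` by `s` coordinates. -/
def tr (s : ℤ) (x : ℤ → Bool) : ℤ → Bool := fun i => x (i + s)

@[simp] lemma tr_zero (x : ℤ → Bool) : tr 0 x = x := by
  funext i; simp [tr]

/-- The shift orbit of `x`. -/
def orb (x : ℤ → Bool) : Set (ℤ → Bool) := range fun s => tr s x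

lemma mem_orb_self (x : ℤ → Bool) : x ∈ orb x := ⟨0, tr_zero x⟩

lemma tr_tr (s r : ℤ) (x : ℤ → Bool) : tr s (tr r x) = tr (s + r) x := by
  funext i; simp [tr, add_assoc]

lemma tr_mem_orb {x y : ℤ → Bool} (s : ℤ) (h : y ∈ orb x) : tr s y ∈ orb x := by
  obtain ⟨r, rfl⟩ := h; exact ⟨s + r, (tr_tr s r x).symm⟩

lemma orb_symm {x y : ℤ → Bool} (h : y ∈ orb x) : x ∈ orb y := by
  obtain ⟨r, rfl⟩ := h; exact ⟨-r, by simp [tr_tr]⟩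

lemma finite_orb {x : ℤ → Bool} {k : ℤ} (hk : 0 < k) (h : ∀ i, x (i + k) = x i) :
    (orb x).Finite := by
  have hz : ∀ n : ℤ, ∀ i, x (i + n * k) = x i := by
    intro n
    induction n using Int.induction_on with
    | zero => simp
    | succ n ih => intro i; rw [← ih i, ← h (i + n * k)]; congr 1; ring
    | pred n ih => intro i; rw [← ih i, ← h (i + (-n - 1) * k)]; congr 1; ring
  refine ((Set.finite_Ico (0 : ℤ) k).image fun s => tr s x).subset ?_
  rintro _ ⟨s, rfl⟩
  refine ⟨s % k, ⟨Int.emod_nonneg _ hk.ne', Int.emod_lt_of_pos _ hk⟩, ?_⟩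
  funext i
  simp only [tr]
  rw [← hz (s / k) (i + s % k)]
  congr 1
  have := Int.emod_add_mul_ediv s k
  linarith

lemma finite_orb_pp (n : ℕ) : (orb (pp n)).Finite := by
  refine finite_orb (k := 2 * len n) (by have := len_pos n; omega) fun i => ?_
  simpa using pp_period n i 1

/-- The subshift whose language is `Lang`. -/
def XX : Set (ℤ → Bool) := {x | ∀ t, Fac t x → Lang t}

lemma fac_tr {t : List Bool} {x : ℤ → Bool} {s : ℤ} (h : Fac t (tr s x)) : Fac t x := by
  obtain ⟨r, h⟩ := h
  refine ⟨r + s, fun j hj => ?_⟩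
  rw [h j hj, tr]; congr 2; ring

lemma fac_tr_iff {t : List Bool} {x : ℤ → Bool} {s : ℤ} : Fac t (tr s x) ↔ Fac t x := by
  refine ⟨fac_tr, fun h => fac_tr (s := -s) ?_⟩
  simpa [tr_tr] using h

lemma tr_mem_XX {x : ℤ → Bool} (s : ℤ) : tr s x ∈ XX ↔ x ∈ XX := by
  simp [XX, fac_tr_iff]

lemma pp_mem (n : ℕ) : pp n ∈ XX := fun _ h => lang_of_fac_pp h

lemma exists_window_subset {U : Set (ℤ → Bool)} (hU : IsOpen U) {x : ℤ → Bool} (hx : x ∈ U) :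
    ∃ L : ℕ, ∀ y : ℤ → Bool, (∀ i : ℤ, -L ≤ i → i < L → y i = x i) → y ∈ U := by
  obtain ⟨I, u, h1, h2⟩ := isOpen_pi_iff.1 hU x hx
  refine ⟨I.sup Int.natAbs + 1, fun y hy => h2 fun i hi => ?_⟩
  have : i.natAbs ≤ I.sup Int.natAbs := Finset.le_sup (f := Int.natAbs) hi
  rw [hy i (by push_cast; omega) (by push_cast; omega)]
  exact (h1 i hi).2

lemma mem_of_closed {F : Set (ℤ → Bool)} (hF : IsClosed F) {x : ℤ → Bool}
    (h : ∀ L : ℕ, ∃ y ∈ F, ∀ i : ℤ, -L ≤ i → i < L → y i = x i) : x ∈ F := by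
  by_contra hx
  obtain ⟨L, hL⟩ := exists_window_subset hF.isOpen_compl hx
  obtain ⟨y, hy, hyx⟩ := h L
  exact hL y hyx hy

/-- A translate of `y` agrees with `x` near the origin as soon as the central window of `x` occurs
in `y`. -/
lemma exists_tr_agree {x y : ℤ → Bool} {L : ℕ} (h : Fac (window x (-L) (2 * L)) y) :
    ∃ s, ∀ i : ℤ, -L ≤ i → i < L → tr s y i = x i := by
  obtain ⟨r, h⟩ := h
  refine ⟨r + L, fun i h1 h2 => ?_⟩
  obtain ⟨j, hj⟩ := Int.eq_ofNat_of_zero_le (show 0 ≤ i + L by omega)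
  have := window_occ h (j := j) (by omega)
  rw [tr]
  convert this using 2 <;> omega

lemma isClopen_occ (t : List Bool) (s : ℤ) : IsClopen {x | Occ t x s} := by
  have : {x | Occ t x s} = ⋂ j ∈ Finset.range t.length, (fun x : ℤ → Bool => x (s + j)) ⁻¹'
      {b | t[j]? = some b} := by
    ext x; simp [Occ]
  rw [this]
  exact isClopen_biInter_finset fun j _ =>
    (isClopen_discrete _).preimage (continuous_apply _)

lemma isClosed_XX : IsClosed XX := by
  have : XX = ⋂ t, ⋂ s, ⋂ (_ : ¬ Lang t), {x | Occ t x s}ᶜ := by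
    ext x
    simp only [XX, Fac, mem_ofPred_eq, mem_iInter, mem_compl_iff]
    exact ⟨fun h t s ht ho => ht (h t ⟨s, ho⟩), fun h t ⟨s, ho⟩ => by
      by_contra ht; exact h t s ht ho⟩
  rw [this]
  exact isClosed_iInter fun t => isClosed_iInter fun s => isClosed_iInter fun _ =>
    (isClopen_occ t s).compl.isClosed

/-- A point of the subshift containing neither block of level `m` is periodic:
all its windows occur in the finitely many periodic sequences `pp n` with `n < m`. -/
lemma exists_orb_of_not_fac {x : ℤ → Bool} (hx : x ∈ XX) {m : ℕ} (h : ∀ b, ¬ Fac (W b m) x) :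
    ∃ n, x ∈ orb (pp n) := by
  have hfin : (⋃ n ∈ Finset.range m, orb (pp n)).Finite :=
    (Finset.range m).finite_toSet.biUnion fun n _ => finite_orb_pp n
  suffices x ∈ ⋃ n ∈ Finset.range m, orb (pp n) by
    simp only [mem_iUnion] at this
    obtain ⟨n, _, hn⟩ := this
    exact ⟨n, hn⟩
  refine mem_of_closed hfin.isClosed fun L => ?_
  -- the central window `[-(L+1), L+1)`, enlarged by a block length on both sides
  set t := window x (-((L + 1 : ℕ) : ℤ) - len m) (len m + 2 * (L + 1) + len m) with ht
  have htx : Fac t x := ⟨_, occ_window _ _ _⟩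
  obtain ⟨M, hM⟩ := hx t htx
  have hM' : t <:+: W true (max m M) := (hM true).trans (W_infix_of_le true (le_max_right _ _))
  rcases (parse_W m true (le_max_left m M)).infix_cases hM' with ⟨b, hb⟩ | ⟨a, r, c, h1, h2, h3, h4⟩
  · exact absurd (Fac.mono htx hb) (h b)
  have hmid : (t.drop (len m)).take (2 * (L + 1)) = window x (-((L + 1 : ℕ) : ℤ)) (2 * (L + 1)) := by
    rw [ht, window_drop_take]; congr 1; ring
  have hlen : t.length = len m + 2 * (L + 1) + len m := by simp [ht]
  have hsub : window x (-((L + 1 : ℕ) : ℤ)) (2 * (L + 1)) <:+: r := by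
    rw [← hmid, h1]
    rw [h1] at hlen
    simp only [List.length_append] at hlen
    have e : (List.drop (len m) (a ++ r ++ c)).take (2 * (L + 1)) =
        (r.drop (len m - a.length)).take (2 * (L + 1)) := by
      rw [List.append_assoc, List.drop_append, List.drop_eq_nil_of_le h2, List.nil_append,
        List.drop_append_of_le_length (by omega), List.take_append_of_le_length (by simp; omega)]
    rw [e]
    exact (List.take_prefix _ _).isInfix.trans (List.drop_suffix _ _).isInfix
  rcases h4 with rfl | ⟨n, hn, h4⟩
  · have := hsub.length_le; simp at this
  · obtain ⟨s, hs⟩ := exists_tr_agree (Fac.mono h4 hsub)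
    refine ⟨tr s (pp n), ?_, fun i h1 h2 => hs i (by push_cast; omega) (by push_cast; omega)⟩
    simp only [mem_iUnion]
    exact ⟨n, Finset.mem_range.2 hn, s, rfl⟩

/-- Every point of the subshift is periodic of the form `pp n` up to translation, or contains every
word of the language. -/
lemma orb_or_fac {x : ℤ → Bool} (hx : x ∈ XX) :
    (∃ n, x ∈ orb (pp n)) ∨ ∀ t, Lang t → Fac t x := by
  by_cases h : ∀ m, ∃ b, Fac (W b m) x
  · right
    rintro t ⟨m, hm⟩
    obtain ⟨b, hb⟩ := h m
    exact Fac.mono hb (hm b)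
  · push Not at h
    obtain ⟨m, hm⟩ := h
    exact .inl (exists_orb_of_not_fac hx hm)

lemma subset_of_lang {A : Set (ℤ → Bool)} (hA : IsClosed A) (htr : ∀ x ∈ A, ∀ s, tr s x ∈ A)
    (h : ∀ t, Lang t → ∃ x ∈ A, Fac t x) : XX ⊆ A := by
  intro x hx
  refine mem_of_closed hA fun L => ?_
  obtain ⟨y, hy, hf⟩ := h _ (hx _ ⟨_, occ_window x (-L) (2 * L)⟩)
  obtain ⟨s, hs⟩ := exists_tr_agree hf
  exact ⟨tr s y, htr y hy s, hs⟩

lemma finite_of_invariant {A : Set (ℤ → Bool)} (hAX : A ⊆ XX) (hA : IsClosed A)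
    (htr : ∀ x ∈ A, ∀ s, tr s x ∈ A) (hne : ¬ XX ⊆ A) : A.Finite := by
  have h : ¬ ∀ t, Lang t → ∃ x ∈ A, Fac t x := fun h => hne (subset_of_lang hA htr h)
  push Not at h
  obtain ⟨t, ht, hno⟩ := h
  obtain ⟨m, hm⟩ := id ht
  have hfin : (⋃ n ∈ Finset.range m, orb (pp n)).Finite :=
    (Finset.range m).finite_toSet.biUnion fun n _ => finite_orb_pp n
  refine hfin.subset fun x hx => ?_
  rcases orb_or_fac (hAX hx) with ⟨n, hn⟩ | h
  · simp only [mem_iUnion]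
    refine ⟨n, Finset.mem_range.2 ?_, hn⟩
    by_contra hmn
    push Not at hmn
    obtain ⟨s, rfl⟩ := hn
    exact hno _ hx (fac_tr_iff.2
      (Fac.mono (fac_pp_W true n) ((hm true).trans (W_infix_of_le true hmn))))
  · exact absurd (h t ht) (hno x hx)

/-- Every point of `XX` is approximated by translates of all the periodic points `pp n` with `n`
large. -/
lemma exists_pp_approx {U : Set (ℤ → Bool)} (hU : IsOpen U) {x : ℤ → Bool} (hx : x ∈ XX)
    (hxU : x ∈ U) : ∃ m, ∀ n ≥ m, ∃ s, tr s (pp n) ∈ U := by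
  obtain ⟨L, hL⟩ := exists_window_subset hU hxU
  obtain ⟨m, hm⟩ := hx _ ⟨_, occ_window x (-L) (2 * L)⟩
  refine ⟨m, fun n hn => ?_⟩
  obtain ⟨s, hs⟩ := exists_tr_agree
    (Fac.mono (fac_pp_W true n) ((hm true).trans (W_infix_of_le true hn)))
  exact ⟨s, hL _ hs⟩

lemma mem_XX_iff (x : ℤ → Bool) : x ∈ XX ↔ shiftHomeo Bool x ∈ XX := (tr_mem_XX 1).symm

/-- The shift on the subshift. -/
abbrev TX : XX ≃ₜ XX := restrictHomeo (shiftHomeo Bool) XX mem_XX_iff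

lemma TX_zpow (n : ℤ) (x : XX) : ((TX ^ n) x : ℤ → Bool) = tr n x := by
  induction n using Int.induction_on generalizing x with
  | zero => rw [zpow_zero]; funext i; simp only [tr, add_zero]; rfl
  | succ n ih =>
    rw [zpow_add_one]
    refine (ih (TX x)).trans ?_
    funext i
    exact congrArg x.1 (by ring)
  | pred n ih =>
    rw [zpow_sub_one]
    refine (ih (TX.symm x)).trans ?_
    funext i
    exact congrArg x.1 (by ring)

lemma TX_pow (n : ℕ) (x : XX) : ((TX ^ n) x : ℤ → Bool) = tr n x := by
  rw [← zpow_natCast, TX_zpow]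

lemma isCAMZ_TX (hinf : (univ : Set XX).Infinite) : IsCAMZ TX := by
  refine ⟨fun n hn h => ?_, fun U V hU hV ⟨x, hx⟩ ⟨y, hy⟩ => ?_, ?_, fun A hA hTA hne => ?_⟩
  · -- a sequence of period `|n|` is determined by its coordinates in `[0, |n|)`
    have hper : ∀ x : XX, ∀ i : ℤ, x.1 (i + n) = x.1 i := by
      intro x i
      have := TX_zpow n x
      rw [h] at this
      exact (congrFun this i).symm
    have hper' : ∀ x : XX, ∀ i k : ℤ, x.1 (i + n * k) = x.1 i := by
      intro x i k
      induction k using Int.induction_on with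
      | zero => simp
      | succ k ih => rw [← ih, ← hper x (i + n * k)]; ring_nf
      | pred k ih => rw [← ih, ← hper x (i + n * (-k - 1))]; ring_nf
    refine hinf ?_
    have : Function.Injective (fun x : XX => fun j : Fin n.natAbs => x.1 (j : ℕ)) := by
      intro x y hxy
      ext i
      have h1 : 0 ≤ i % n := Int.emod_nonneg _ hn
      have h2 : i % n < n.natAbs := by simpa using Int.emod_lt_abs i hn
      have h3 := congrFun hxy ⟨(i % n).toNat, by omega⟩
      simp only [Int.toNat_of_nonneg h1] at h3
      rw [← Int.emod_add_mul_ediv i n, hper', hper', h3]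
    have := Finite.of_injective _ this
    exact Set.finite_univ
  · obtain ⟨U', hU', rfl⟩ := isOpen_induced_iff.1 hU
    obtain ⟨V', hV', rfl⟩ := isOpen_induced_iff.1 hV
    obtain ⟨m, hm⟩ := exists_pp_approx hU' x.2 hx
    obtain ⟨m', hm'⟩ := exists_pp_approx hV' y.2 hy
    obtain ⟨s, hs⟩ := hm _ (le_max_left m m')
    obtain ⟨s', hs'⟩ := hm' _ (le_max_right m m')
    refine ⟨s' - s, (TX ^ (s' - s)) ⟨tr s (pp (max m m')), (tr_mem_XX s).2 (pp_mem _)⟩,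
      ⟨_, hs, rfl⟩, ?_⟩
    rw [mem_preimage, TX_zpow, tr_tr, sub_add_cancel]
    exact hs'
  · rw [dense_iff_inter_open]
    rintro U hU ⟨x, hx⟩
    obtain ⟨U', hU', rfl⟩ := isOpen_induced_iff.1 hU
    obtain ⟨m, hm⟩ := exists_pp_approx hU' x.2 hx
    obtain ⟨s, hs⟩ := hm m le_rfl
    refine ⟨⟨tr s (pp m), (tr_mem_XX s).2 (pp_mem _)⟩, hs, 2 * len m,
      by have := len_pos m; omega, ?_⟩
    ext i
    rw [TX_pow]
    simp only [tr]
    have := pp_period m (i + s) 1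
    rw [← this]
    congr 1
    push_cast
    ring
  · have hmem : ∀ x, x ∈ A ↔ TX x ∈ A := by
      intro x
      constructor
      · intro hx; rw [← hTA]; exact ⟨x, hx, rfl⟩
      · intro hx; rw [← hTA] at hx; obtain ⟨y, hy, hyx⟩ := hx; rwa [← TX.injective hyx]
    have hpow : ∀ n : ℤ, ∀ x, x ∈ A → (TX ^ n) x ∈ A := by
      intro n
      induction n using Int.induction_on with
      | zero => intro x hx; rw [zpow_zero]; exact hx
      | succ n ih => intro x hx; rw [zpow_add_one]; exact ih _ ((hmem x).1 hx)
      | pred n ih =>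
        intro x hx
        rw [zpow_sub_one]
        refine ih (TX.symm x) ((hmem _).2 ?_)
        rwa [Homeomorph.apply_symm_apply]
    have hfin : ((fun x : XX => (x : ℤ → Bool)) '' A).Finite := by
      refine finite_of_invariant ?_ (isClosed_XX.isClosedMap_subtype_val _ hA) ?_ ?_
      · rintro _ ⟨x, _, rfl⟩; exact x.2
      · rintro _ ⟨x, hx, rfl⟩ s
        exact ⟨(TX ^ s) x, hpow s x hx, TX_zpow s x⟩
      · intro hsub
        refine hne (eq_univ_of_forall fun x => ?_)
        obtain ⟨y, hy, hyx⟩ := hsub x.2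
        rwa [← Subtype.ext hyx]
    exact hfin.of_finite_image Subtype.val_injective.injOn

end CAMShift

namespace CAMShift

open Filter Topology
open scoped ENNReal

/-! ### Invariant measures carried by periodic orbits -/

lemma exc_eq_sum (b : Bool) (w : List Bool) :
    exc b w = ∑ j ∈ Finset.range w.length, if per w (j : ℕ) = b then (1 : ℤ) else -1 := by
  have hw : w = (List.range w.length).map fun j : ℕ => per w j := by
    apply List.ext_getElem?
    intro j
    by_cases hj : j < w.length
    · rw [getElem?_eq_per w hj]; simp [List.getElem?_range hj]
    · rw [List.getElem?_eq_none (by omega), List.getElem?_eq_none (by simp; omega)]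
  have hsum : ∀ (f : ℕ → ℤ) (n : ℕ), ((List.range n).map f).sum = ∑ j ∈ Finset.range n, f j := by
    intro f n
    induction n with
    | zero => simp
    | succ n ih => simp [List.range_succ, Finset.sum_range_succ, ih]
  rw [← hsum]
  conv_lhs => rw [hw]
  rw [exc, List.map_map]
  rfl

lemma shift_eq_tr (x : ℤ → Bool) : shiftHomeo Bool x = tr 1 x := rfl

lemma iterate_shift (n : ℕ) (x : ℤ → Bool) : (shiftHomeo Bool)^[n] x = tr n x := by
  induction n generalizing x with
  | zero => simp
  | succ n ih => rw [Function.iterate_succ_apply, ih, shift_eq_tr, tr_tr]; push_cast; rfl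

lemma measurable_shift : Measurable (shiftHomeo Bool) := (shiftHomeo Bool).continuous.measurable

lemma measurableSet_letter (b : Bool) : MeasurableSet {x : ℤ → Bool | x 0 = b} :=
  (measurableSet_singleton b).preimage (measurable_pi_apply (0 : ℤ))

lemma measurableSet_occ (t : List Bool) (s : ℤ) : MeasurableSet {x | Occ t x s} :=
  (isClopen_occ t s).isOpen.measurableSet

/-- The witness is the uniform measure on the orbit of `w ^ ∞`. -/
lemma exists_periodic_measure {w : List Bool} (hw : w ≠ []) (b : Bool) :
    ∃ μ : ProbabilityMeasure (ℤ → Bool),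
      MeasurePreserving (shiftHomeo Bool) (μ : Measure (ℤ → Bool)) μ ∧
      (∀ t s, ¬ Fac t (per w) → (μ : Measure (ℤ → Bool)) {x | Occ t x s} = 0) ∧
      2 * w.length * (μ : Measure (ℤ → Bool)).real {x | x 0 = b} = w.length + exc b w := by
  set n := w.length with hn
  have hn0 : 0 < n := List.length_pos_iff.2 hw
  have hn0' : (n : ℝ≥0∞) ≠ 0 := by exact_mod_cast hn0.ne'
  set ν : Measure (ℤ → Bool) := (n : ℝ≥0∞)⁻¹ • ∑ j ∈ Finset.range n, Measure.dirac (tr j (per w))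
    with hν
  have happ : ∀ E, MeasurableSet E →
      ν E = (n : ℝ≥0∞)⁻¹ * ∑ j ∈ Finset.range n, E.indicator 1 (tr (j : ℕ) (per w)) := by
    intro E hE
    simp [hν, Measure.finsetSum_apply, hE]
  have hprob : IsProbabilityMeasure ν := by
    constructor
    rw [happ _ .univ]
    simp [ENNReal.inv_mul_cancel hn0' (by simp)]
  refine ⟨⟨ν, hprob⟩, ⟨measurable_shift, ?_⟩, fun t s ht => ?_, ?_⟩
  · ext E hE
    rw [ProbabilityMeasure.coe_mk, Measure.map_apply measurable_shift hE,
      happ _ (measurable_shift hE), happ _ hE]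
    congr 1
    have hf : ∀ j : ℕ, ((shiftHomeo Bool) ⁻¹' E).indicator (1 : (ℤ → Bool) → ℝ≥0∞) (tr j (per w)) =
        E.indicator 1 (tr ((j + 1 : ℕ) : ℤ) (per w)) := by
      intro j
      have : shiftHomeo Bool (tr j (per w)) = tr ((j + 1 : ℕ) : ℤ) (per w) := by
        rw [shift_eq_tr, tr_tr]; congr 1; push_cast; ring
      rw [← this]; rfl
    simp only [hf]
    have hlast : tr (n : ℤ) (per w) = tr ((0 : ℕ) : ℤ) (per w) := by
      funext i; simp [tr, hn, per_add_length]
    obtain ⟨k, hk⟩ : ∃ k, n = k + 1 := ⟨n - 1, by omega⟩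
    rw [hk, Finset.sum_range_succ, Finset.sum_range_succ' _ k, ← hk, hlast]
  · rw [ProbabilityMeasure.coe_mk, happ _ (measurableSet_occ t s), Finset.sum_eq_zero, mul_zero]
    intro j _
    refine indicator_of_notMem (fun h => ht (fac_tr ⟨s, h⟩)) _
  · rw [ProbabilityMeasure.coe_mk, Measure.real, happ _ (measurableSet_letter b), exc_eq_sum,
      ENNReal.toReal_mul, ENNReal.toReal_sum (by
        intro j _; unfold indicator; split_ifs <;> simp)]
    have hn0'' : (n : ℝ) ≠ 0 := by exact_mod_cast hn0.ne'
    simp only [ENNReal.toReal_inv, ENNReal.toReal_natCast]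
    have : ∀ j : ℕ, (({x : ℤ → Bool | x 0 = b}).indicator (1 : (ℤ → Bool) → ℝ≥0∞)
        (tr j (per w))).toReal = ((if per w j = b then (1 : ℤ) else -1 : ℤ) + 1 : ℝ) / 2 := by
      intro j
      simp only [indicator, mem_ofPred_eq, tr, zero_add]
      split_ifs <;> simp
    simp only [this]
    rw [← Finset.sum_div, Finset.sum_add_distrib]
    simp only [Finset.sum_const, Finset.card_range, nsmul_eq_mul, mul_one]
    push_cast
    field_simp
    ring

/-! ### Existence of an ergodic measure with a prescribed majority letter -/

lemma continuous_measureReal {E : Set (ℤ → Bool)} (hE : IsClopen E) :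
    Continuous fun μ : ProbabilityMeasure (ℤ → Bool) => (μ : Measure (ℤ → Bool)).real E := by
  rw [continuous_iff_continuousAt]
  intro μ
  have := ProbabilityMeasure.tendsto_measure_of_isClopen_of_tendsto (tendsto_id (x := 𝓝 μ)) hE
  simp only [ProbabilityMeasure.measureReal_eq_coe_coeFn]
  exact (NNReal.continuous_coe.tendsto _).comp this

lemma isClosed_invariant : IsClosed {μ : ProbabilityMeasure (ℤ → Bool) |
    MeasurePreserving (shiftHomeo Bool) (μ : Measure (ℤ → Bool)) μ} := by
  have h := ProbabilityMeasure.continuous_map (shiftHomeo Bool).continuous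
  have : {μ : ProbabilityMeasure (ℤ → Bool) |
      MeasurePreserving (shiftHomeo Bool) (μ : Measure (ℤ → Bool)) μ} =
      {μ | μ.map (shiftHomeo Bool).continuous.measurable.aemeasurable = μ} := by
    ext μ
    simp only [mem_ofPred_eq]
    rw [← ProbabilityMeasure.toMeasure_injective.eq_iff, ProbabilityMeasure.toMeasure_map]
    exact ⟨fun h => h.map_eq, fun h => ⟨measurable_shift, h⟩⟩
  rw [this]
  exact isClosed_eq h continuous_id

lemma isClosed_null (P : List Bool → Prop) : IsClosed {μ : ProbabilityMeasure (ℤ → Bool) |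
    ∀ t s, P t → (μ : Measure (ℤ → Bool)) {x | Occ t x s} = 0} := by
  simp only [ofPred_forall]
  refine isClosed_iInter fun t => isClosed_iInter fun s => isClosed_iInter fun _ => ?_
  have : {μ : ProbabilityMeasure (ℤ → Bool) | (μ : Measure (ℤ → Bool)) {x | Occ t x s} = 0} =
      {μ : ProbabilityMeasure (ℤ → Bool) | (μ : Measure (ℤ → Bool)).real {x | Occ t x s} = 0} := by
    ext μ; simp [Measure.real, ENNReal.toReal_eq_zero_iff]
  rw [this]
  exact isClosed_eq (continuous_measureReal (isClopen_occ t s)) continuous_const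

lemma isClopen_letter (i : ℤ) (b : Bool) : IsClopen {x : ℤ → Bool | x i = b} :=
  (isClopen_discrete {b}).preimage (continuous_apply i)

/-- The invariant probability measures carried by the subshift, expressed through cylinders. -/
def KK : Set (ProbabilityMeasure (ℤ → Bool)) :=
  {μ | MeasurePreserving (shiftHomeo Bool) (μ : Measure (ℤ → Bool)) μ} ∩
    {μ | ∀ t s, ¬ Lang t → (μ : Measure (ℤ → Bool)) {x | Occ t x s} = 0}

lemma isClosed_KK : IsClosed KK := isClosed_invariant.inter (isClosed_null _)

/-- The measures on the orbits of `(W b m) ^ ∞` accumulate at a measure of `KK`. Each of them sees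
only words of `Lang` up to length `m`, and `exc_W` bounds the frequency of `b` from below. -/
lemma exists_mem_KK (b : Bool) :
    ∃ μ ∈ KK, 3 / 4 ≤ (μ : Measure (ℤ → Bool)).real {x | x 0 = b} := by
  let F : ℕ → Set (ProbabilityMeasure (ℤ → Bool)) := fun M =>
    ({μ | MeasurePreserving (shiftHomeo Bool) (μ : Measure (ℤ → Bool)) μ} ∩
      {μ | ∀ t s, (¬ Lang t ∧ t.length ≤ M) → (μ : Measure (ℤ → Bool)) {x | Occ t x s} = 0}) ∩
      {μ | 3 / 4 ≤ (μ : Measure (ℤ → Bool)).real {x | x 0 = b}}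
  have hclosed : ∀ M, IsClosed (F M) := fun M =>
    (isClosed_invariant.inter (isClosed_null _)).inter
      (isClosed_le continuous_const (continuous_measureReal (isClopen_letter 0 b)))
  have hne : ∀ M, (F M).Nonempty := by
    intro M
    obtain ⟨μ, h1, h2, h3⟩ := exists_periodic_measure (W_ne_nil b M) b
    refine ⟨μ, ⟨h1, fun t s ht => h2 t s fun hf => ht.1 ?_⟩, ?_⟩
    · exact lang_of_fac_perW (ht.2.trans (lt_len M).le) hf
    · have h4 := exc_W b M
      rw [length_W] at h3
      have hpos : (0 : ℝ) < len M := by exact_mod_cast len_pos M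
      have h4' : ((M : ℝ) + 2) * len M ≤ 2 * (M + 1) * (exc b (W b M) : ℝ) := by exact_mod_cast h4
      have hM : (0 : ℝ) ≤ M := by positivity
      have h5 : (len M : ℝ) ≤ 2 * exc b (W b M) := by
        by_contra hcon
        push Not at hcon
        nlinarith
      rw [mem_ofPred_eq]
      nlinarith
  obtain ⟨μ, hμ⟩ := IsCompact.nonempty_iInter_of_sequence_nonempty_isCompact_isClosed F
    (fun M μ h => ⟨⟨h.1.1, fun t s ht => h.1.2 t s ⟨ht.1, ht.2.trans (Nat.le_succ M)⟩⟩, h.2⟩)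
    hne (hclosed 0).isCompact hclosed
  rw [mem_iInter] at hμ
  exact ⟨μ, ⟨(hμ 0).1.1, fun t s ht => (hμ t.length).1.2 t s ⟨ht, le_rfl⟩⟩, (hμ 0).2⟩

/-- A sequence of continuous functions on a compact set has a lexicographic maximizer. -/
lemma exists_lex_max {α : Type*} [TopologicalSpace α] {K : Set α} (hK : IsCompact K)
    (hKc : IsClosed K) (hne : K.Nonempty) (f : ℕ → α → ℝ) (hf : ∀ k, Continuous (f k)) :
    ∃ x ∈ K, ∀ y ∈ K, ∀ k, (∀ i < k, f i y = f i x) → f k y ≤ f k x := by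
  -- `F k` is the set of points maximizing `f 0, …, f (k - 1)` lexicographically
  let F : ℕ → Set α := fun k => Nat.rec K (fun k S => {x ∈ S | ∀ y ∈ S, f k y ≤ f k x}) k
  have hsucc : ∀ k, F (k + 1) = {x ∈ F k | ∀ y ∈ F k, f k y ≤ f k x} := fun k => rfl
  have hanti : ∀ k, F (k + 1) ⊆ F k := fun k x hx => hx.1
  have hall : ∀ k, IsClosed (F k) ∧ IsCompact (F k) ∧ (F k).Nonempty := by
    intro k
    induction k with
    | zero => exact ⟨hKc, hK, hne⟩
    | succ k ih =>
      obtain ⟨h1, h2, h3⟩ := ih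
      have hc : IsClosed (F (k + 1)) := by
        have : F (k + 1) = F k ∩ ⋂ y ∈ F k, {x | f k y ≤ f k x} := by
          rw [hsucc]; ext x; simp
        rw [this]
        exact h1.inter (isClosed_biInter fun y _ => isClosed_le continuous_const (hf k))
      obtain ⟨x, hx, hmax⟩ := h2.exists_isMaxOn h3 (hf k).continuousOn
      exact ⟨hc, h2.of_isClosed_subset hc (hanti k), x, hx, fun y hy => hmax hy⟩
  obtain ⟨x, hx⟩ := IsCompact.nonempty_iInter_of_sequence_nonempty_isCompact_isClosed F
    hanti (fun k => (hall k).2.2) hK (fun k => (hall k).1)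
  rw [mem_iInter] at hx
  refine ⟨x, hx 0, fun y hy k hk => ?_⟩
  have : ∀ j ≤ k, y ∈ F j := by
    intro j
    induction j with
    | zero => exact fun _ => hy
    | succ j ih =>
      intro hj
      refine ⟨ih (by omega), fun z hz => ?_⟩
      rw [hk j (by omega)]
      exact (hx (j + 1)).2 z hz
  exact (hx (k + 1)).2 y (this k le_rfl)

/-- The event that all coordinates in `F` are `true`. These events form a countable generating
π-system. -/
def allTrue (F : Finset ℤ) : Set (ℤ → Bool) := {x | ∀ i ∈ F, x i = true}

lemma isClopen_allTrue (F : Finset ℤ) : IsClopen (allTrue F) := by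
  have : allTrue F = ⋂ i ∈ F, {x : ℤ → Bool | x i = true} := by ext x; simp [allTrue]
  rw [this]
  exact isClopen_biInter_finset fun i _ => isClopen_letter i true

lemma measure_ext {μ ν : Measure (ℤ → Bool)} [IsProbabilityMeasure μ] [IsProbabilityMeasure ν]
    (h : ∀ F, μ (allTrue F) = ν (allTrue F)) : μ = ν := by
  refine ext_of_generate_finite (range allTrue) (le_antisymm ?_ ?_) ?_ ?_ (by simp)
  · refine iSup_le fun i => measurable_iff_comap_le.1 ?_
    refine @measurable_to_bool _ (_) _ (MeasurableSpace.measurableSet_generateFrom ⟨{i}, ?_⟩)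
    ext x; simp [allTrue]
  · refine MeasurableSpace.generateFrom_le ?_
    rintro _ ⟨F, rfl⟩
    exact (isClopen_allTrue F).isOpen.measurableSet
  · rintro _ ⟨F, rfl⟩ _ ⟨G, rfl⟩ _
    refine ⟨F ∪ G, ?_⟩
    ext x
    simp only [allTrue, Finset.mem_union, mem_ofPred_eq, mem_inter_iff]
    exact ⟨fun h => ⟨fun i hi => h i (.inl hi), fun i hi => h i (.inr hi)⟩,
      fun h i hi => hi.elim (h.1 i) (h.2 i)⟩
  · rintro _ ⟨F, rfl⟩
    exact h F

/-- Among the measures of `KK`, one that lexicographically maximizes first the frequency of `b`, then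
the masses of all events `allTrue F`, is an extreme invariant measure, hence ergodic. -/
lemma exists_ergodic (b : Bool) : ∃ μ : Measure (ℤ → Bool), IsProbabilityMeasure μ ∧
    Ergodic (shiftHomeo Bool) μ ∧ μ XXᶜ = 0 ∧ 3 / 4 ≤ μ.real {x | x 0 = b} := by
  obtain ⟨g, hg⟩ := exists_surjective_nat (Finset ℤ)
  let E : ℕ → Set (ℤ → Bool) := fun k => Nat.casesOn k {x | x 0 = b} fun k => allTrue (g k)
  have hE : ∀ k, IsClopen (E k) := by
    rintro (_ | k)
    · exact isClopen_letter 0 b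
    · exact isClopen_allTrue _
  obtain ⟨μ₀, hμ₀, hμ₀b⟩ := exists_mem_KK b
  obtain ⟨μ, hμ, hmax⟩ := exists_lex_max isClosed_KK.isCompact isClosed_KK ⟨μ₀, hμ₀⟩
    (fun k (μ : ProbabilityMeasure (ℤ → Bool)) => (μ : Measure (ℤ → Bool)).real (E k))
    fun k => continuous_measureReal (hE k)
  refine ⟨μ, inferInstance, Ergodic.of_mem_extremePoints ?_, ?_, ?_⟩
  · rw [mem_extremePoints_iff_left]
    refine ⟨⟨hμ.1, inferInstance⟩, ?_⟩
    rintro ν₁ ⟨h1, hp1⟩ ν₂ ⟨h2, hp2⟩ ⟨p, q, hp, hq, hpq, hμν⟩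
    have hp' : p ≠ ∞ := fun h => by simp [h] at hpq
    have hq' : q ≠ ∞ := fun h => by simp [h] at hpq
    have happ : ∀ s, (μ : Measure (ℤ → Bool)) s = p * ν₁ s + q * ν₂ s := by
      intro s; rw [← hμν]; simp
    have hK1 : (⟨ν₁, hp1⟩ : ProbabilityMeasure (ℤ → Bool)) ∈ KK := by
      refine ⟨h1, fun t s ht => ?_⟩
      have := hμ.2 t s ht
      rw [happ] at this
      simpa [hp.ne'] using (add_eq_zero.1 this).1
    have hK2 : (⟨ν₂, hp2⟩ : ProbabilityMeasure (ℤ → Bool)) ∈ KK := by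
      refine ⟨h2, fun t s ht => ?_⟩
      have := hμ.2 t s ht
      rw [happ] at this
      simpa [hq.ne'] using (add_eq_zero.1 this).2
    have hreal : ∀ s, (μ : Measure (ℤ → Bool)).real s = p.toReal * ν₁.real s + q.toReal * ν₂.real s := by
      intro s
      rw [Measure.real, happ, ENNReal.toReal_add (ENNReal.mul_ne_top hp' (measure_ne_top _ _))
        (ENNReal.mul_ne_top hq' (measure_ne_top _ _)), ENNReal.toReal_mul, ENNReal.toReal_mul]
      rfl
    have hp0 : 0 < p.toReal := ENNReal.toReal_pos hp.ne' hp'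
    have hq0 : 0 < q.toReal := ENNReal.toReal_pos hq.ne' hq'
    have hpq' : p.toReal + q.toReal = 1 := by rw [← ENNReal.toReal_add hp' hq', hpq]; simp
    have key : ∀ k, ν₁.real (E k) = (μ : Measure (ℤ → Bool)).real (E k) ∧
        ν₂.real (E k) = (μ : Measure (ℤ → Bool)).real (E k) := by
      intro k
      induction k using Nat.strong_induction_on with
      | _ k ih =>
        have i1 : ν₁.real (E k) ≤ _ := hmax _ hK1 k fun i hi => (ih i hi).1
        have i2 : ν₂.real (E k) ≤ _ := hmax _ hK2 k fun i hi => (ih i hi).2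
        have i3 := hreal (E k)
        have i4 : p.toReal * (μ : Measure (ℤ → Bool)).real (E k) +
            q.toReal * (μ : Measure (ℤ → Bool)).real (E k) =
            (μ : Measure (ℤ → Bool)).real (E k) := by rw [← add_mul, hpq', one_mul]
        constructor
        · by_contra hne
          have a1 := mul_lt_mul_of_pos_left (lt_of_le_of_ne i1 hne) hp0
          have a2 := mul_le_mul_of_nonneg_left i2 hq0.le
          linarith
        · by_contra hne
          have a1 := mul_lt_mul_of_pos_left (lt_of_le_of_ne i2 hne) hq0
          have a2 := mul_le_mul_of_nonneg_left i1 hp0.le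
          linarith
    refine measure_ext fun F => ?_
    obtain ⟨k, rfl⟩ := hg F
    have := (key (k + 1)).1
    exact (ENNReal.toReal_eq_toReal_iff' (measure_ne_top _ _) (measure_ne_top _ _)).1 this
  · have : XXᶜ = ⋃ (t : List Bool), ⋃ (s : ℤ), ⋃ (_ : ¬ Lang t), {x | Occ t x s} := by
      ext x
      simp only [XX, Fac, mem_compl_iff, mem_ofPred_eq, mem_iUnion]
      push Not
      exact ⟨fun ⟨t, ⟨s, h⟩, h'⟩ => ⟨t, s, h', h⟩, fun ⟨t, s, h', h⟩ => ⟨t, ⟨s, h⟩, h'⟩⟩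
    rw [this]
    exact measure_iUnion_null fun t => measure_iUnion_null fun s => measure_iUnion_null fun h =>
      hμ.2 t s h
  · exact hμ₀b.trans (hmax μ₀ hμ₀ 0 fun i hi => absurd hi (Nat.not_lt_zero i))

/-! ### Nonatomicity, and passage to the subshift -/

/-- The letters are balanced on the periodic orbits of the subshift, so an ergodic measure with an
unbalanced letter frequency has no atoms. -/
lemma nonatomic {μ : Measure (ℤ → Bool)} [IsProbabilityMeasure μ]
    (hμ : Ergodic (shiftHomeo Bool) μ) (hX : μ XXᶜ = 0) {b : Bool}
    (hb : 3 / 4 ≤ μ.real {x | x 0 = b}) (x : ℤ → Bool) : μ {x} = 0 := by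
  by_contra hx
  have hxX : x ∈ XX := by
    by_contra h
    exact hx (measure_mono_null (singleton_subset_iff.2 h) hX)
  obtain ⟨y, hy, k, hk, hky⟩ := hμ.toMeasurePreserving.exists_mem_iterate_mem
    (measurableSet_singleton x).nullMeasurableSet hx
  obtain rfl : y = x := hy
  rw [mem_singleton_iff, iterate_shift] at hky
  have hfin : (orb y).Finite := finite_orb (k := k) (by omega) fun i => congrFun hky i
  obtain ⟨n, hn⟩ : ∃ n, y ∈ orb (pp n) := by
    rcases orb_or_fac hxX with h | h
    · exact h
    -- the finite orbit of `y` is closed and dense, so it contains `pp 0`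
    · exact ⟨0, orb_symm (subset_of_lang hfin.isClosed (fun z hz s => tr_mem_orb s hz)
        (fun t ht => ⟨y, mem_orb_self y, h t ht⟩) (pp_mem 0))⟩
  have hmeas : MeasurableSet (orb (pp n)) := (finite_orb_pp n).measurableSet
  have hinv : shiftHomeo Bool ⁻¹' orb (pp n) = orb (pp n) := by
    ext z
    refine ⟨fun hz => ?_, fun hz => tr_mem_orb 1 hz⟩
    have := tr_mem_orb (-1) (show tr 1 z ∈ orb (pp n) from hz)
    simpa [tr_tr] using this
  have hnull : μ (orb (pp n))ᶜ = 0 := by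
    rcases hμ.toPreErgodic.measure_self_or_compl_eq_zero hmeas hinv with h | h
    · exact absurd (measure_mono_null (singleton_subset_iff.2 hn) h) hx
    · exact h
  have hflip : (shiftHomeo Bool)^[len n] ⁻¹' {z | z 0 = b} =ᵐ[μ] {z | z 0 = b}ᶜ := by
    have : ∀ᵐ z ∂μ, z ∈ orb (pp n) := hnull
    filter_upwards [this] with z hz
    obtain ⟨s, rfl⟩ := hz
    refine propext ?_
    change ((shiftHomeo Bool)^[len n] (tr s (pp n))) 0 = b ↔ ¬ (tr s (pp n)) 0 = b
    rw [iterate_shift, tr_tr]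
    simp only [tr, zero_add]
    rw [add_comm, pp_add]
    cases pp n s <;> cases b <;> simp
  have h1 : μ {z | z 0 = b} = μ {z | z 0 = b}ᶜ := by
    refine Eq.trans ?_ (measure_congr hflip)
    exact ((hμ.toMeasurePreserving.iterate (len n)).measure_preimage
      (measurableSet_letter b).nullMeasurableSet).symm
  have h2 := probReal_compl_eq_one_sub (μ := μ) (measurableSet_letter b)
  rw [Measure.real, ← h1] at h2
  change μ.real {z | z 0 = b} = _ at h2
  linarith

lemma image_TX_preimage (s : Set XX) :
    Subtype.val '' (TX ⁻¹' s) = shiftHomeo Bool ⁻¹' (Subtype.val '' s) := by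
  ext z
  constructor
  · rintro ⟨x, hx, rfl⟩
    exact ⟨TX x, hx, rfl⟩
  · rintro ⟨x, hx, hxz⟩
    have hz : z ∈ XX := (mem_XX_iff z).2 (hxz ▸ x.2)
    refine ⟨⟨z, hz⟩, ?_, rfl⟩
    have : TX ⟨z, hz⟩ = x := Subtype.ext hxz.symm
    rwa [mem_preimage, this]

lemma exists_ergodic_sub (b : Bool) : ∃ μ : Measure XX, IsProbabilityMeasure μ ∧
    Ergodic TX μ ∧ (∀ x, μ {x} = 0) ∧ 3 / 4 ≤ μ.real {x | x.1 0 = b} := by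
  obtain ⟨μ, hprob, herg, hX, hb⟩ := exists_ergodic b
  have hXm : MeasurableSet XX := isClosed_XX.measurableSet
  have happ : ∀ s : Set XX, μ.comap Subtype.val s = μ (Subtype.val '' s) := fun s =>
    comap_subtype_coe_apply hXm μ s
  have hTm : Measurable TX := TX.continuous.measurable
  refine ⟨μ.comap Subtype.val, ⟨?_⟩, ⟨⟨hTm, ?_⟩, ⟨fun s hs hTs => ?_⟩⟩, fun x => ?_, ?_⟩
  · rw [happ, image_univ, Subtype.range_coe]
    exact (prob_compl_eq_zero_iff hXm).1 hX
  · ext s hs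
    rw [Measure.map_apply hTm hs, happ, happ, image_TX_preimage]
    exact herg.toMeasurePreserving.measure_preimage
      (hXm.subtype_image hs).nullMeasurableSet
  · have hinv : shiftHomeo Bool ⁻¹' (Subtype.val '' s) = Subtype.val '' s := by
      rw [← image_TX_preimage, hTs]
    rw [eventuallyConst_set]
    rcases herg.toPreErgodic.measure_self_or_compl_eq_zero (hXm.subtype_image hs) hinv with h | h
    · refine .inr ?_
      change μ.comap Subtype.val {x | ¬ x ∉ s} = 0
      rw [happ]
      simpa using h
    · refine .inl ?_
      change μ.comap Subtype.val sᶜ = 0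
      rw [happ]
      refine measure_mono_null ?_ h
      rintro _ ⟨x, hx, rfl⟩ ⟨y, hy, hyx⟩
      exact hx (Subtype.ext hyx ▸ hy)
  · rw [happ, image_singleton]
    exact nonatomic herg hX hb x
  · refine hb.trans ?_
    rw [Measure.real, Measure.real, happ]
    refine ENNReal.toReal_mono (measure_ne_top _ _) ?_
    refine (measure_mono (t := Subtype.val '' {x : XX | x.1 0 = b} ∪ XXᶜ) ?_).trans
      ((measure_union_le _ _).trans (by rw [hX, add_zero]))
    intro z hz
    by_cases h : z ∈ XX
    · exact .inl ⟨⟨z, h⟩, hz, rfl⟩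
    · exact .inr h

end CAMShift

/-- There exists a nonempty closed shift-invariant subset `X` of `{0,1}^ℤ`
such that the restriction of the shift to `X` is chaotic almost minimal, and there exist
two distinct shift-invariant ergodic Borel probability measures on `X`, each nonatomic. -/
theorem statement0 :
    ∃ (X : Set (ℤ → Bool)) (hinv : ∀ x, x ∈ X ↔ shiftHomeo Bool x ∈ X),
      X.Nonempty ∧ IsClosed X ∧
      IsCAMZ (restrictHomeo (shiftHomeo Bool) X hinv) ∧
      ∃ μ ν : Measure X,
        IsProbabilityMeasure μ ∧ IsProbabilityMeasure ν ∧
        Ergodic (⇑(restrictHomeo (shiftHomeo Bool) X hinv)) μ ∧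
        Ergodic (⇑(restrictHomeo (shiftHomeo Bool) X hinv)) ν ∧
        (∀ x : X, μ {x} = 0) ∧ (∀ x : X, ν {x} = 0) ∧ μ ≠ ν := by
  obtain ⟨μ, hμ, hμe, hμ0, hμb⟩ := CAMShift.exists_ergodic_sub true
  obtain ⟨ν, hν, hνe, hν0, hνb⟩ := CAMShift.exists_ergodic_sub false
  refine ⟨CAMShift.XX, CAMShift.mem_XX_iff, ⟨_, CAMShift.pp_mem 0⟩, CAMShift.isClosed_XX,
    CAMShift.isCAMZ_TX fun hfin => ?_, μ, ν, hμ, hν, hμe, hνe, hμ0, hν0, ?_⟩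
  · have : NullSingletonClass μ := ⟨hμ0⟩
    have h := hfin.measure_zero μ
    simp at h
  · rintro rfl
    have hdisj : Disjoint {x : CAMShift.XX | x.1 0 = true} {x : CAMShift.XX | x.1 0 = false} := by
      rw [Set.disjoint_left]
      intro x hx hx'
      exact Bool.noConfusion ((show x.1 0 = true from hx).symm.trans hx')
    have hm : MeasurableSet {x : CAMShift.XX | x.1 0 = false} :=
      measurable_subtype_coe (CAMShift.measurableSet_letter false)
    have h1 := measureReal_union (μ := μ) hdisj hm
    have h2 : μ.real ({x : CAMShift.XX | x.1 0 = true} ∪ {x : CAMShift.XX | x.1 0 = false}) ≤ 1 :=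
      measureReal_le_one
    linarith
end

section
/- For every d ≥ 1 there exists a nonempty closed shift-invariant subset X of {0,1}^(ℤ^d) such that the ℤ^d-shift action restricted to X is chaotic almost minimal, and moreover there exist two distinct shift-invariant ergodic Borel probability measures on X, each of which is nonatomic. -/
/-!
The subshift is the orbit closure of a hierarchy of periodic configurations `word m` on `ℤ^d`. The first
two are constant, `word 0 = false` and `word 1 = true`. The configuration `word (l + 2)` is periodic with
respect to cubes of side `side d (l + 1)`, each divided into `ratio d l ^ d` cells of side `side d l`, and
each cell is filled with one of `word 0, ..., word (l + 1)`. The rule `pat l` puts `word (l + 1)` on the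
boundary cells and on a few separating slabs, puts each of `word 0, ..., word l` on a slab between two
separators, and fills the vast majority of the cells with `word l`.

*Almost minimality.* Two adjacent cells of level `l` which both avoid the symbol `l + 1` carry the same
symbol, in every word (`level_structure`). Consequently a point of the subshift that omits the basic block
of `word (l + 1)` is a translate of some `word j` with `j ≤ l` (`mem_periodicPoints`), and there are only
finitely many of those. On the other hand a block of high level contains every prescribed pattern
(`exists_shift_mem`). Hence a closed invariant set either omits some block and is finite, or contains
blocks of all levels and is everything. Transitivity follows from `exists_shift_mem` too, periodic points
are dense by construction, and the action is faithful because a block of high level admits no short period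
(`not_periodic_of_contains`).

*Measures.* Since most cells of `word (l + 2)` carry `word l`, the words of even index converge in a
measure-theoretic sense, and so do those of odd index. Concretely, `ℤ^d` acts on the odometer `ℤ_2^d` by
translation, and for a Haar-random `g` the value of `word (b + 2 * n)` at the residue of `g` modulo the
side length is eventually constant in `n`: it can only change when `g` lies in `bad (b + 2 * n)`, and these
sets have summable measures (`haar_bad_le`), so the Borel–Cantelli lemma applies. The limits define an
equivariant measurable map `pointX b` to the subshift. The image `limitMeasure d b` of Haar measure is
invariant, and it is ergodic because `ℤ^d` is dense in `ℤ_2^d`. It is nonatomic because almost every image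
point contains blocks of arbitrarily high level and so has no periods. Finally `b = 0` and `b = 1` give
different measures, because with probability at least `3/4` the letter at the origin is that of the
constant configuration `word b`.
-/

open Set MeasureTheory

/-- The shift by `v ∈ ℤ^d` on `{0,1}^(ℤ^d)`. -/
def shiftZdHomeo (d : ℕ) (v : Fin d → ℤ) :
    ((Fin d → ℤ) → Bool) ≃ₜ ((Fin d → ℤ) → Bool) where
  toFun x := fun u => x (u + v)
  invFun x := fun u => x (u - v)
  left_inv x := funext fun u => by simp
  right_inv x := funext fun u => by simp
  continuous_toFun := continuous_pi fun u => continuous_apply (u + v)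
  continuous_invFun := continuous_pi fun u => continuous_apply (u - v)

/-! ### The hierarchy of periodic words -/

section Combinatorics

/-- Exponent of `ratio d l`. The additive constants make the slabs used in `pat l` fit inside a cube
and make the bound in `haar_bad_le` summable in `l`. -/
def kExp (d l : ℕ) : ℕ := 2 * d + 3 * l + 5

/-- Exponent of `side d l`. -/
def aExp (d : ℕ) : ℕ → ℕ
  | 0 => 0
  | l + 1 => aExp d l + kExp d l

/-- Side length of a cell of level `l`, a power of two. -/
def side (d l : ℕ) : ℤ := 2 ^ aExp d l

/-- Number of cells of level `l` along each edge of a cell of level `l + 1`. -/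
def ratio (d l : ℕ) : ℤ := 2 ^ kExp d l

theorem side_pos (d l : ℕ) : 0 < side d l := by unfold side; positivity

theorem side_zero (d : ℕ) : side d 0 = 1 := by simp [side, aExp]

theorem side_succ (d l : ℕ) : side d (l + 1) = side d l * ratio d l := by
  simp [side, ratio, aExp, pow_add]

theorem ratio_large (d l : ℕ) : 2 * (d : ℤ) + 3 * l + 5 < ratio d l := by
  have h : kExp d l < 2 ^ kExp d l := Nat.lt_two_pow_self
  unfold ratio
  have h2 : ((kExp d l : ℕ) : ℤ) < ((2 ^ kExp d l : ℕ) : ℤ) := by exact_mod_cast h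
  have h3 : ((kExp d l : ℕ) : ℤ) = 2 * (d : ℤ) + 3 * l + 5 := by simp [kExp]
  push_cast at h2
  omega

theorem side_dvd (d : ℕ) {l m : ℕ} (h : l ≤ m) : side d l ∣ side d m := by
  induction m, h using Nat.le_induction with
  | base => exact dvd_rfl
  | succ m _ ih => rw [side_succ]; exact ih.mul_right _

theorem side_le (d : ℕ) {l m : ℕ} (h : l ≤ m) : side d l ≤ side d m :=
  Int.le_of_dvd (side_pos d m) (side_dvd d h)

theorem lt_side (d l : ℕ) : (l : ℤ) < side d l := by
  induction l with
  | zero => simp [side_zero]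
  | succ l ih =>
    rw [side_succ]
    have h1 := ratio_large d l
    have h2 := side_pos d l
    push_cast
    nlinarith

variable {d : ℕ} [NeZero d]

/-- The symbol of the cell with coordinates `c` (read modulo `ratio d l`) in the substitution rule
for `word (l + 2)`. Boundary cells, and the slabs on which the first coordinate is even and less than
`2 * (l + 1)`, get the symbol `l + 1`; between these separators the slab with first coordinate
`2 * j + 1` gets the symbol `j` for each `j ≤ l`; all the remaining cells get `l`. -/
def pat (l : ℕ) (c : Fin d → ℤ) : ℕ :=
  if (∃ i, c i % ratio d l = 0 ∨ c i % ratio d l = ratio d l - 1) ∨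
      (c 0 % ratio d l % 2 = 0 ∧ c 0 % ratio d l < 2 * (l + 1)) then l + 1
  else min (c 0 % ratio d l / 2).toNat l

theorem pat_le (l : ℕ) (c : Fin d → ℤ) : pat l c ≤ l + 1 := by
  unfold pat
  split_ifs
  · exact le_rfl
  · exact (min_le_right _ _).trans (Nat.le_succ l)

theorem pat_congr (l : ℕ) {c c' : Fin d → ℤ} (h : ∀ i, c i % ratio d l = c' i % ratio d l) :
    pat l c = pat l c' := by
  simp [pat, h]

theorem pat_boundary (l : ℕ) {c : Fin d → ℤ} (i : Fin d)
    (h : c i % ratio d l = 0 ∨ c i % ratio d l = ratio d l - 1) : pat l c = l + 1 :=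
  if_pos (Or.inl ⟨i, h⟩)

theorem int_adj {K a b : ℤ} (hK : 0 < K) (h : |a - b| ≤ 1) : |a / K - b / K| ≤ 1 := by
  rw [abs_le] at h ⊢
  have h1 := Int.emod_add_mul_ediv a K
  have h2 := Int.emod_add_mul_ediv b K
  have h3 := Int.emod_nonneg a hK.ne'
  have h4 := Int.emod_nonneg b hK.ne'
  have h5 := Int.emod_lt_of_pos a hK
  have h6 := Int.emod_lt_of_pos b hK
  constructor <;> by_contra hc <;> push Not at hc <;> nlinarith

/-- Two integers at distance at most `1` lying in different blocks of length `K` both sit at an end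
of their block. -/
theorem int_adj_cross {K a b : ℤ} (hK : 0 < K) (h : |a - b| ≤ 1) (hne : a / K ≠ b / K) :
    (a % K = 0 ∨ a % K = K - 1) ∧ (b % K = 0 ∨ b % K = K - 1) := by
  have h0 := int_adj hK h
  rw [abs_le] at h h0
  have h1 := Int.emod_add_mul_ediv a K
  have h2 := Int.emod_add_mul_ediv b K
  have h3 := Int.emod_nonneg a hK.ne'
  have h4 := Int.emod_nonneg b hK.ne'
  have h5 := Int.emod_lt_of_pos a hK
  have h6 := Int.emod_lt_of_pos b hK
  rcases lt_or_gt_of_ne hne with hlt | hlt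
  · have he : b / K = a / K + 1 := by omega
    rw [he, mul_add, mul_one] at h2
    omega
  · have he : a / K = b / K + 1 := by omega
    rw [he, mul_add, mul_one] at h1
    omega

/-- Adjacent cells with different symbols are never both below the separator `l + 1`. -/
theorem pat_adj (l : ℕ) {c c' : Fin d → ℤ} (h : ∀ i, |c i - c' i| ≤ 1) :
    pat l c = pat l c' ∨ pat l c = l + 1 ∨ pat l c' = l + 1 := by
  have hK : 0 < ratio d l := by have := ratio_large d l; omega
  by_cases hq : c 0 / ratio d l = c' 0 / ratio d l
  · have h0 := h 0
    rw [abs_le] at h0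
    have h1 := Int.emod_add_mul_ediv (c 0) (ratio d l)
    have h2 := Int.emod_add_mul_ediv (c' 0) (ratio d l)
    have h3 := Int.emod_nonneg (c 0) hK.ne'
    have h4 := Int.emod_nonneg (c' 0) hK.ne'
    rw [hq] at h1
    unfold pat
    split_ifs with hA hB hB
    · simp
    · simp
    · simp
    · left
      push Not at hA hB
      have hA2 := hA.2
      have hB2 := hB.2
      clear hA hB
      generalize c 0 % ratio d l = r at *
      generalize c' 0 % ratio d l = r' at *
      have : |r - r'| ≤ 1 := by rw [abs_le]; constructor <;> linarith
      rw [abs_le] at this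
      omega
  · right; left
    exact pat_boundary l 0 (int_adj_cross hK (h 0) hq).1

/-- Coordinates of the cell of level `l` containing `z`. -/
def cell (l : ℕ) (z : Fin d → ℤ) : Fin d → ℤ := fun i => z i / side d l

/-- The periodic configurations generating the subshift: two constant ones, and `word (l + 2)`, in
which every cell of level `l` is filled with the restriction of `word j`, where `j` is the symbol
given to that cell by `pat l`. Each such `word j` is periodic under
`side d l • ℤ^d` (`word_congr`), so two cells with the same symbol have the same content. -/
def word : ℕ → (Fin d → ℤ) → Bool
  | 0, _ => false
  | 1, _ => true
  | l + 2, z => word (pat l (cell l z)) z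
termination_by m => m
decreasing_by
  have := pat_le l (cell l z)
  omega

theorem word_zero (z : Fin d → ℤ) : word 0 z = false := by rw [word]
theorem word_one (z : Fin d → ℤ) : word 1 z = true := by rw [word]
theorem word_add_two (l : ℕ) (z : Fin d → ℤ) :
    word (l + 2) z = word (pat l (cell l z)) z := by rw [word]

theorem ratio_pos (d l : ℕ) : 0 < ratio d l := by unfold ratio; positivity

theorem word_succ_eq {l j : ℕ} {z : Fin d → ℤ} (h : pat l (cell l z) = j) :
    word (l + 2) z = word j z := by rw [word_add_two, h]

theorem pat_cell_congr (l : ℕ) {z z' : Fin d → ℤ} (h : ∀ i, side d (l + 1) ∣ z i - z' i) :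
    pat l (cell l z) = pat l (cell l z') := by
  refine pat_congr l fun i => ?_
  obtain ⟨k, hk⟩ := h i
  have : z i = z' i + ratio d l * k * side d l := by
    rw [side_succ] at hk; linear_combination hk
  simp only [cell]
  rw [this, Int.add_mul_ediv_right _ _ (side_pos d l).ne', Int.add_mul_emod_self_left]

/-- `word j` is periodic under `side d l • ℤ^d` as soon as `j ≤ l + 1`. -/
theorem word_congr {j l : ℕ} (hj : j ≤ l + 1) {z z' : Fin d → ℤ}
    (h : ∀ i, side d l ∣ z i - z' i) : word j z = word j z' := by
  induction j using Nat.strong_induction_on generalizing l with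
  | _ j ih =>
    match j, hj, ih with
    | 0, _, _ => simp [word_zero]
    | 1, _, _ => simp [word_one]
    | m + 2, hj, ih =>
      have hd : ∀ i, side d (m + 1) ∣ z i - z' i := fun i =>
        (side_dvd d (by omega)).trans (h i)
      rw [word_add_two, word_add_two, pat_cell_congr m hd]
      have := pat_le m (cell m z')
      exact ih _ (by omega) (l := l) (by omega) h

/-- All words of index above `l` agree on the cube of level `l` at the origin, because corner cells
always carry the highest symbol available. -/
theorem word_corner {l j : ℕ} (hj : l + 1 ≤ j) {z : Fin d → ℤ}
    (h : ∀ i, 0 ≤ z i ∧ z i < side d l) : word j z = word (l + 1) z := by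
  induction j, hj using Nat.le_induction with
  | base => rfl
  | succ j hj ih =>
    rw [← ih]
    obtain ⟨k, rfl⟩ : ∃ k, j = k + 1 := ⟨j - 1, by omega⟩
    refine word_succ_eq (pat_boundary k 0 (Or.inl ?_))
    have := side_le d (show l ≤ k by omega)
    have h0 := h 0
    simp only [cell]
    rw [Int.ediv_eq_zero_of_lt h0.1 (by omega), Int.zero_emod]

/-- The upper faces of the cubes of level `l` consist of the letter `true` in `word (l + 1)`. -/
theorem word_boundary (l : ℕ) {z : Fin d → ℤ} (i : Fin d) (h : side d l ∣ z i + 1) :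
    word (l + 1) z = true := by
  induction l with
  | zero => exact word_one z
  | succ l ih =>
    rw [word_succ_eq (j := l + 1) (pat_boundary l i (Or.inr ?_))]
    · exact ih ((side_dvd d (Nat.le_succ l)).trans h)
    · obtain ⟨k, hk⟩ := h
      have hs := side_pos d l
      have hr := ratio_pos d l
      rw [side_succ] at hk
      have : z i = (side d l - 1) + (ratio d l * k - 1) * side d l := by linear_combination hk
      simp only [cell]
      rw [this, Int.add_mul_ediv_right _ _ hs.ne', Int.ediv_eq_zero_of_lt (by omega) (by omega),
        show 0 + (ratio d l * k - 1) = (ratio d l - 1) + ratio d l * (k - 1) by ring,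
        Int.add_mul_emod_self_left, Int.emod_eq_of_lt (by omega) (by omega)]

/-- Every word is, at each level `l`, a concatenation of cells filled with `word j`, `j ≤ l + 1`, and
adjacent cells which both avoid the symbol `l + 1` carry the same symbol. The parameter `k` only drives
the induction. -/
theorem level_structure (M k l : ℕ) (hM : M ≤ l + 1 + k) :
    ∃ s : (Fin d → ℤ) → ℕ, (∀ z, word M z = word (s (cell l z)) z) ∧ (∀ c, s c ≤ l + 1) ∧
      ∀ c c', (∀ i, |c i - c' i| ≤ 1) → s c = s c' ∨ s c = l + 1 ∨ s c' = l + 1 := by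
  induction k generalizing l with
  | zero => exact ⟨fun _ => M, fun _ => rfl, fun _ => by omega, fun _ _ _ => Or.inl rfl⟩
  | succ k ih =>
    obtain ⟨s, hs1, hs2, hs3⟩ := ih (l + 1) (by omega)
    have hr := ratio_pos d l
    refine ⟨fun c => if s (fun i => c i / ratio d l) = l + 2 then pat l c
      else s (fun i => c i / ratio d l), fun z => ?_, fun c => ?_, fun c c' h => ?_⟩
    · have hc : (fun i => cell l z i / ratio d l) = cell (l + 1) z := by
        funext i
        simp only [cell, side_succ]
        exact Int.ediv_ediv_of_nonneg (side_pos d l).le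
      simp only [hc]
      rw [hs1]
      split_ifs with h
      · rw [h, word_add_two]
      · rfl
    · dsimp only
      split_ifs with h
      · exact pat_le l c
      · have := hs2 (fun i => c i / ratio d l)
        omega
    · dsimp only
      have hadj := hs3 (fun i => c i / ratio d l) (fun i => c' i / ratio d l)
        fun i => int_adj hr (h i)
      by_cases he : (fun i => c i / ratio d l) = (fun i => c' i / ratio d l)
      · rw [he]
        split_ifs
        · exact pat_adj l h
        · exact Or.inl rfl
      · obtain ⟨i, hi⟩ := Function.ne_iff.1 he
        have hb := int_adj_cross hr (h i) hi
        have hb1 := pat_boundary l i hb.1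
        have hb2 := pat_boundary l i hb.2
        split_ifs <;> omega

/-- The block of `word (l + 1)` on the cube `[0, side d l)^d` occurs somewhere in `x`. -/
def Contains (x : (Fin d → ℤ) → Bool) (l : ℕ) : Prop :=
  ∃ v : Fin d → ℤ, ∀ z : Fin d → ℤ, (∀ i, 0 ≤ z i ∧ z i < side d l) →
    x (z + v) = word (l + 1) z

theorem contains_word (l : ℕ) : Contains (word (l + 1) : (Fin d → ℤ) → Bool) l :=
  ⟨0, fun z _ => by rw [add_zero]⟩

/-- The cell `(2 * j + 1, 1, ..., 1)` is a specimen of a cell with symbol `j`. -/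
theorem pat_interior {l j : ℕ} (hj : j ≤ l) {c : Fin d → ℤ} (h0 : c 0 = 2 * j + 1)
    (h : ∀ i, i ≠ 0 → c i = 1) : pat l c = j := by
  have hr := ratio_large d l
  have hc : ∀ i, c i % ratio d l = c i := fun i => by
    by_cases hi : i = 0
    · subst hi; exact Int.emod_eq_of_lt (by omega) (by omega)
    · have := h i hi; exact Int.emod_eq_of_lt (by omega) (by omega)
  unfold pat
  rw [if_neg]
  · rw [hc, h0]; omega
  · rintro (⟨i, hi⟩ | hi)
    · rw [hc] at hi
      by_cases h' : i = 0
      · subst h'; omega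
      · have := h i h'; omega
    · rw [hc] at hi; omega

/-- A window of radius `R` of `word j` occurs well inside the base cube of `word (l + 2)`, for all
large `l`. -/
theorem word_occurs (j R l : ℕ) (hl : j ≤ l) (hR : R * side d j + R < side d l) :
    ∃ t : Fin d → ℤ, (∀ i, R ≤ t i ∧ t i + R < side d (l + 1)) ∧
      ∀ z : Fin d → ℤ, (∀ i, |z i| ≤ R) → word (l + 2) (z + t) = word j z := by
  have hsj := side_pos d j
  have hs := side_pos d l
  have hr := ratio_large d l
  have hRR : (R : ℤ) ≤ R * side d j := by nlinarith
  set c : Fin d → ℤ := fun i => if i = 0 then 2 * (j : ℤ) + 1 else 1 with hc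
  have hc1 : ∀ i, 1 ≤ c i ∧ c i + 1 ≤ ratio d l := fun i => by
    simp only [hc]; split_ifs <;> omega
  refine ⟨fun i => c i * side d l + R * side d j, fun i => ⟨?_, ?_⟩, fun z hz => ?_⟩
  · have := hc1 i; nlinarith
  · have := hc1 i; rw [side_succ]; nlinarith
  · have hcell : cell l (z + fun i => c i * side d l + R * side d j) = c := by
      funext i
      have := abs_le.1 (hz i)
      simp only [cell, Pi.add_apply]
      rw [show z i + (c i * side d l + R * side d j) = (z i + R * side d j) + c i * side d l by ring,
        Int.add_mul_ediv_right _ _ hs.ne', Int.ediv_eq_zero_of_lt (by omega) (by omega), zero_add]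
    rw [word_succ_eq (j := j)]
    · refine word_congr (Nat.le_succ j) fun i => ?_
      simp only [Pi.add_apply, add_sub_cancel_left]
      exact dvd_add ((side_dvd d hl).mul_left _) (dvd_mul_left _ _)
    · rw [hcell]
      exact pat_interior hl (by simp [hc]) (fun i hi => by simp [hc, hi])

/-- A configuration containing the block of level `l + 1` has no period shorter than `side d l`: such a
period would move a point on the `true` face of a boundary cell into an adjacent cell filled with
`false`. -/
theorem not_periodic_of_contains {v : Fin d → ℤ} (hv : v ≠ 0) {l : ℕ}
    (hl : ∀ i, |v i| < side d l) {x : (Fin d → ℤ) → Bool} (hx : Contains x (l + 1)) :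
    ∃ u, x (u + v) ≠ x u := by
  by_contra hcon
  push Not at hcon
  -- after replacing `v` by `-v`, some coordinate of the period is positive
  obtain ⟨v, i, hi, hl, hcon⟩ : ∃ (v : Fin d → ℤ) (i : Fin d), 0 < v i ∧
      (∀ i, |v i| < side d l) ∧ ∀ u, x (u + v) = x u := by
    obtain ⟨i, hi⟩ := Function.ne_iff.1 hv
    rcases lt_or_gt_of_ne hi with h | h
    · refine ⟨-v, i, by simpa using h, by simpa using hl, fun u => ?_⟩
      rw [← hcon (u + -v), neg_add_cancel_right]
    · exact ⟨v, i, h, hl, hcon⟩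
  obtain ⟨p, hp⟩ := hx
  have hs := side_pos d l
  have hr := ratio_large d l
  have hs2 : 2 * side d l ≤ side d (l + 1) := by rw [side_succ]; nlinarith
  -- `u` is on the upper face, in direction `i`, of a boundary cell, and `u + v` is in the cell `(1, ..., 1)`
  set u : Fin d → ℤ := fun j => if j = i then side d l - 1 else side d l + max 0 (-v j) with hu
  have hui : u i = side d l - 1 := by simp [hu]
  have huj : ∀ j, j ≠ i → u j = side d l + max 0 (-v j) := fun j hj => by simp [hu, hj]
  have hrange : ∀ j, 0 ≤ u j ∧ u j < 2 * side d l ∧ side d l ≤ u j + v j ∧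
      u j + v j < 2 * side d l := fun j => by
    have := abs_lt.1 (hl j)
    by_cases hj : j = i
    · subst hj; omega
    · have := huj j hj; omega
  have h1 : x (u + p) = true := by
    rw [hp u fun j => ⟨(hrange j).1, by linarith [(hrange j).2.1]⟩,
      word_succ_eq (j := l + 1) (pat_boundary l i (Or.inl ?_))]
    · exact word_boundary l i ⟨1, by omega⟩
    · simp only [cell]
      rw [hui, Int.ediv_eq_zero_of_lt (by omega) (by omega), Int.zero_emod]
  have h2 : x (u + v + p) = false := by
    rw [hp (u + v) fun j => ⟨?_, ?_⟩, word_succ_eq (j := 0), word_zero]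
    · have hcell : ∀ j, cell l (u + v) j = 1 := fun j => by
        have := hrange j
        simp only [cell, Pi.add_apply]
        rw [show u j + v j = (u j + v j - side d l) + 1 * side d l by ring,
          Int.add_mul_ediv_right _ _ hs.ne', Int.ediv_eq_zero_of_lt (by omega) (by omega), zero_add]
      exact pat_interior (Nat.zero_le l) (by simp [hcell]) (fun j _ => hcell j)
    · have := hrange j; simp only [Pi.add_apply]; omega
    · have := hrange j; simp only [Pi.add_apply]; omega
  have h3 := hcon (u + p)
  rw [add_right_comm, h1, h2] at h3
  exact Bool.false_ne_true h3

end Combinatorics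

/-! ### Finite windows and shifts -/

section Windows

variable {d : ℕ}

theorem finite_window (R : ℕ) : {z : Fin d → ℤ | ∀ i, |z i| ≤ R}.Finite := by
  refine (Set.finite_Icc (fun _ : Fin d => -(R : ℤ)) (fun _ => (R : ℤ))).subset fun z hz => ?_
  exact ⟨fun i => (abs_le.1 (hz i)).1, fun i => (abs_le.1 (hz i)).2⟩

theorem exists_bound (S : Set (Fin d → ℤ)) (hS : S.Finite) :
    ∃ R : ℕ, ∀ z ∈ S, ∀ i, |z i| ≤ R := by
  refine ⟨hS.toFinset.sup fun z => Finset.univ.sup fun i => (z i).natAbs, fun z hz i => ?_⟩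
  have h1 : (z i).natAbs ≤ Finset.univ.sup fun i => (z i).natAbs :=
    Finset.le_sup (f := fun i => (z i).natAbs) (Finset.mem_univ i)
  have h2 : (Finset.univ.sup fun i => (z i).natAbs) ≤
      hS.toFinset.sup fun z => Finset.univ.sup fun i => (z i).natAbs :=
    Finset.le_sup (f := fun z : Fin d → ℤ => Finset.univ.sup fun i => (z i).natAbs)
      (hS.mem_toFinset.2 hz)
  have := h1.trans h2
  rw [Int.abs_eq_natAbs]
  exact_mod_cast this

/-- Basic neighbourhoods in `{0,1}^(ℤ^d)` are given by agreement on a window around the origin. -/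
theorem exists_window {O : Set ((Fin d → ℤ) → Bool)} (hO : IsOpen O) {x : (Fin d → ℤ) → Bool}
    (hx : x ∈ O) : ∃ R : ℕ, ∀ y : (Fin d → ℤ) → Bool,
      (∀ z : Fin d → ℤ, (∀ i, |z i| ≤ R) → y z = x z) → y ∈ O := by
  obtain ⟨I, u, hu, hI⟩ := isOpen_pi_iff.1 hO x hx
  obtain ⟨R, hR⟩ := exists_bound (I : Set (Fin d → ℤ)) I.finite_toSet
  refine ⟨R, fun y hy => hI fun z hz => ?_⟩
  rw [hy z (hR z hz)]
  exact (hu z hz).2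

theorem mem_closure_window {A : Set ((Fin d → ℤ) → Bool)} {x : (Fin d → ℤ) → Bool} :
    x ∈ closure A ↔ ∀ R : ℕ, ∃ y ∈ A, ∀ z : Fin d → ℤ, (∀ i, |z i| ≤ R) → y z = x z := by
  refine ⟨fun h R => ?_, fun h => mem_closure_iff.2 fun O hO hx => ?_⟩
  · have hopen : IsOpen ({z : Fin d → ℤ | ∀ i, |z i| ≤ R}.pi fun z => ({x z} : Set Bool)) :=
      isOpen_set_pi (finite_window R) fun _ _ => isOpen_discrete _
    obtain ⟨y, hy, hyA⟩ := mem_closure_iff.1 h _ hopen fun z _ => rfl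
    exact ⟨y, hyA, fun z hz => hy z hz⟩
  · obtain ⟨R, hR⟩ := exists_window hO hx
    obtain ⟨y, hy, hyx⟩ := h R
    exact ⟨y, hR y hyx, hy⟩

theorem shift_apply (v u : Fin d → ℤ) (x : (Fin d → ℤ) → Bool) :
    shiftZdHomeo d v x u = x (u + v) := rfl

theorem shift_shift (v w : Fin d → ℤ) (x : (Fin d → ℤ) → Bool) :
    shiftZdHomeo d v (shiftZdHomeo d w x) = shiftZdHomeo d (v + w) x := by
  funext u; simp only [shift_apply, add_assoc]

theorem shift_zero (x : (Fin d → ℤ) → Bool) : shiftZdHomeo d 0 x = x := by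
  funext u; simp only [shift_apply, add_zero]

end Windows

/-! ### The subshift -/

section Subshift

variable {d : ℕ} [NeZero d]

/-- All translates of all the words. -/
def translates (d : ℕ) [NeZero d] : Set ((Fin d → ℤ) → Bool) :=
  {x | ∃ (m : ℕ) (v : Fin d → ℤ), x = shiftZdHomeo d v (word m)}

/-- The subshift generated by the words. -/
def camShift (d : ℕ) [NeZero d] : Set ((Fin d → ℤ) → Bool) := closure (translates d)

theorem shift_mem_of_mem (v : Fin d → ℤ) {x : (Fin d → ℤ) → Bool} (hx : x ∈ camShift d) :
    shiftZdHomeo d v x ∈ camShift d := by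
  refine map_mem_closure (shiftZdHomeo d v).continuous hx ?_
  rintro _ ⟨m, w, rfl⟩
  exact ⟨m, v + w, shift_shift v w _⟩

theorem shift_mem_iff (v : Fin d → ℤ) (x : (Fin d → ℤ) → Bool) :
    x ∈ camShift d ↔ shiftZdHomeo d v x ∈ camShift d := by
  refine ⟨shift_mem_of_mem v, fun h => ?_⟩
  have := shift_mem_of_mem (-v) h
  rwa [shift_shift, neg_add_cancel, shift_zero] at this

theorem word_mem (m : ℕ) : word m ∈ camShift d :=
  subset_closure ⟨m, 0, (shift_zero _).symm⟩

theorem finite_orbit_word (j : ℕ) : (Set.range fun v => shiftZdHomeo d v (word j)).Finite := by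
  refine ((Set.finite_Icc (0 : Fin d → ℤ) (fun _ => side d j)).image
    fun v => shiftZdHomeo d v (word j)).subset ?_
  rintro _ ⟨v, rfl⟩
  have hs := side_pos d j
  refine ⟨fun i => v i % side d j, ⟨fun i => Int.emod_nonneg _ hs.ne',
    fun i => (Int.emod_lt_of_pos _ hs).le⟩, ?_⟩
  funext u
  refine word_congr (Nat.le_succ j) fun i => ?_
  simp only [Pi.add_apply, add_sub_add_left_eq_sub]
  exact ⟨-(v i / side d j), by linarith [Int.emod_add_mul_ediv (v i) (side d j)]⟩

/-- The translates of the words of index at most `l`. -/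
def periodicPoints (d : ℕ) [NeZero d] (l : ℕ) : Set ((Fin d → ℤ) → Bool) :=
  {x | ∃ j ≤ l, ∃ v : Fin d → ℤ, x = shiftZdHomeo d v (word j)}

theorem finite_periodicPoints (l : ℕ) : (periodicPoints d l).Finite := by
  refine ((Set.finite_Iic l).biUnion fun j _ => finite_orbit_word (d := d) j).subset ?_
  rintro _ ⟨j, hj, v, rfl⟩
  exact Set.mem_biUnion hj ⟨v, rfl⟩

/-- A point of the subshift which omits the block of level `l` is one of finitely many periodic points.
By `level_structure` at a level much larger than a given window, the at most `2^d` cells meeting the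
window carry symbols at most `l` (a higher symbol would produce the omitted block), hence all the same
symbol, so the point agrees on the window with a translate of a single `word j`. -/
theorem mem_periodicPoints {x : (Fin d → ℤ) → Bool} (hx : x ∈ camShift d) {l : ℕ}
    (hl : ¬ Contains x l) : x ∈ periodicPoints d l := by
  rw [← (finite_periodicPoints l).isClosed.closure_eq, mem_closure_window]
  intro R
  -- a level whose cells are larger than the diameter of the window
  set n := l + 2 * R with hn
  have hside : 2 * (R : ℤ) < side d n := by have := lt_side d n; omega
  obtain ⟨_, ⟨M, v, rfl⟩, hy⟩ := mem_closure_window.1 hx (R + (side d n).toNat)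
  have hs := side_pos d n
  obtain ⟨s, hs1, hs2, hs3⟩ := level_structure (d := d) M M n (by omega)
  simp only [shift_apply] at hy
  -- no cell meeting the window carries a symbol above `l`
  have hlow : ∀ z : Fin d → ℤ, (∀ i, |z i| ≤ R) → s (cell n (z + v)) ≤ l := by
    intro z hz
    by_contra hcon
    push Not at hcon
    refine hl ⟨fun i => cell n (z + v) i * side d n - v i, fun u hu => ?_⟩
    have hle := side_le d (show l ≤ n by omega)
    rw [← hy]
    · have hcell : cell n ((u + fun i => cell n (z + v) i * side d n - v i) + v)
          = cell n (z + v) := by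
        funext i
        have := hu i
        conv_lhs => simp only [cell, Pi.add_apply]
        rw [show u i + ((z i + v i) / side d n * side d n - v i) + v i
          = u i + (z i + v i) / side d n * side d n by ring, Int.add_mul_ediv_right _ _ hs.ne',
          Int.ediv_eq_zero_of_lt (by omega) (by omega), zero_add]
        rfl
      rw [hs1, hcell, ← word_corner hcon hu]
      refine word_congr (hs2 _) fun i => ?_
      simp only [Pi.add_apply]
      exact ⟨cell n (z + v) i, by ring⟩
    · intro i
      have h1 := hu i
      have h2 := abs_le.1 (hz i)
      have h3 := Int.emod_add_mul_ediv (z i + v i) (side d n)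
      have h4 := Int.emod_nonneg (z i + v i) hs.ne'
      have h5 := Int.emod_lt_of_pos (z i + v i) hs
      simp only [cell, Pi.add_apply]
      rw [mul_comm ((z i + v i) / side d n), abs_le]
      push_cast
      rw [Int.toNat_of_nonneg hs.le]
      constructor <;> linarith
  have h0 := hlow 0 (by simp)
  refine ⟨_, ⟨s (cell n (0 + v)), h0, v, rfl⟩, fun z hz => ?_⟩
  rw [shift_apply, ← hy z (fun i => (hz i).trans (by push_cast; omega)), hs1 (z + v)]
  have hz' := hlow z hz
  have hadj : ∀ i, |cell n (z + v) i - cell n (0 + v) i| ≤ 1 := by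
    intro i
    have h2 := abs_le.1 (hz i)
    have h3 := Int.emod_add_mul_ediv (z i + v i) (side d n)
    have h4 := Int.emod_nonneg (z i + v i) hs.ne'
    have h5 := Int.emod_lt_of_pos (z i + v i) hs
    have h3' := Int.emod_add_mul_ediv (v i) (side d n)
    have h4' := Int.emod_nonneg (v i) hs.ne'
    have h5' := Int.emod_lt_of_pos (v i) hs
    simp only [cell, Pi.add_apply, Pi.zero_apply, zero_add]
    rw [abs_le]
    constructor <;> by_contra hc <;> push Not at hc <;> nlinarith
  rcases hs3 _ _ hadj with h | h | h
  · rw [h]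
  · omega
  · omega

/-- Blocks of high level contain every pattern of the subshift: the orbit of any configuration
containing such a block meets a prescribed open set. -/
theorem exists_shift_mem {O : Set ((Fin d → ℤ) → Bool)} (hO : IsOpen O)
    (hne : (O ∩ camShift d).Nonempty) :
    ∃ l₀, ∀ l ≥ l₀, ∀ x, Contains x l → ∃ v, shiftZdHomeo d v x ∈ O := by
  obtain ⟨y, hyO, hy⟩ := hne
  obtain ⟨_, hwO, m, v, rfl⟩ := mem_closure_iff.1 hy O hO hyO
  obtain ⟨R, hR⟩ := exists_window hO hwO
  obtain ⟨V, hV⟩ := exists_bound {v} (Set.finite_singleton v)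
  set B := ((R + V : ℕ) * side d m + (R + V : ℕ)).toNat with hB
  refine ⟨m + B + 1, fun l hl x hx => ?_⟩
  obtain ⟨k, rfl⟩ : ∃ k, l = k + 1 := ⟨l - 1, by omega⟩
  obtain ⟨t, ht1, ht2⟩ := word_occurs (d := d) m (R + V) k (by omega) (by
    have := lt_side d k; omega)
  obtain ⟨p, hp⟩ := hx
  refine ⟨v + t + p, hR _ fun z hz => ?_⟩
  have hzv : ∀ i, |(z + v) i| ≤ ((R + V : ℕ) : ℤ) := fun i => by
    have := hV v rfl i
    have := hz i
    simp only [Pi.add_apply]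
    push_cast
    exact (abs_add_le _ _).trans (by omega)
  simp only [shift_apply]
  rw [← ht2 (z + v) hzv, show z + (v + t + p) = (z + v + t) + p by abel, hp]
  intro i
  have h1 := ht1 i
  have h2 := abs_le.1 (hzv i)
  rw [Pi.add_apply (z + v) t i]
  constructor <;> linarith

end Subshift

/-! ### Haar measure on `ℤ_2^d` and digit estimates -/

section Odometer

noncomputable instance : MeasurableSpace ℤ_[2] := borel _

instance : BorelSpace ℤ_[2] := ⟨rfl⟩

/-- The Haar probability measure on `ℤ_2^d`. -/
noncomputable def haar (d : ℕ) : Measure (Fin d → ℤ_[2]) := Measure.addHaarMeasure ⊤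

instance (d : ℕ) : (haar d).IsAddHaarMeasure := by unfold haar; infer_instance

instance (d : ℕ) : (haar d).InnerRegular := by unfold haar; infer_instance

instance (d : ℕ) : IsProbabilityMeasure (haar d) := ⟨Measure.addHaarMeasure_self⟩

variable {d : ℕ}

/-- The dense inclusion of `ℤ^d` in `ℤ_2^d`. -/
noncomputable def embed (v : Fin d → ℤ) : Fin d → ℤ_[2] := fun i => (v i : ℤ_[2])

theorem embed_add (v w : Fin d → ℤ) : embed (v + w) = embed v + embed w := by
  funext i; simp [embed]

theorem embed_zero : embed (0 : Fin d → ℤ) = 0 := by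
  funext i; simp [embed]

theorem denseRange_embed : DenseRange (embed : (Fin d → ℤ) → Fin d → ℤ_[2]) :=
  DenseRange.piMap fun _ => PadicInt.denseRange_intCast

/-- The residue of `g` modulo `side d l`, with coordinates in `[0, side d l)`. -/
noncomputable def res (l : ℕ) (g : Fin d → ℤ_[2]) : Fin d → ℤ :=
  fun i => ((g i).appr (aExp d l) : ℤ)

theorem appr_dvd_sub {n : ℕ} {x : ℤ_[2]} {a : ℤ}
    (h : x - (a : ℤ_[2]) ∈ Ideal.span {(2 : ℤ_[2]) ^ n}) : (2 : ℤ) ^ n ∣ (x.appr n : ℤ) - a := by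
  have h1 := PadicInt.appr_spec n x
  have h2 := PadicInt.zmod_congr_of_sub_mem_span_aux n x (x.appr n) a (by exact_mod_cast h1)
    (by exact_mod_cast h)
  have h3 := (ZMod.intCast_eq_intCast_iff_dvd_sub _ _ _).1 h2.symm
  exact_mod_cast h3

theorem res_nonneg (l : ℕ) (g : Fin d → ℤ_[2]) (i : Fin d) : 0 ≤ res l g i :=
  Int.natCast_nonneg _

theorem res_lt (l : ℕ) (g : Fin d → ℤ_[2]) (i : Fin d) : res l g i < side d l := by
  have := PadicInt.appr_lt (g i) (aExp d l)
  unfold res side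
  exact_mod_cast this

theorem res_dvd {l m : ℕ} (h : l ≤ m) (g : Fin d → ℤ_[2]) (i : Fin d) :
    side d l ∣ res m g i - res l g i := by
  have hle : aExp d l ≤ aExp d m := by
    induction m, h using Nat.le_induction with
    | base => exact le_rfl
    | succ m _ ih => exact ih.trans (Nat.le_add_right _ _)
  have h1 := PadicInt.dvd_appr_sub_appr (g i) _ _ hle
  have h2 := PadicInt.appr_mono (g i) hle
  unfold res side
  rw [← Nat.cast_sub h2]
  exact_mod_cast h1

theorem res_add_dvd (l : ℕ) (g : Fin d → ℤ_[2]) (v : Fin d → ℤ) (i : Fin d) :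
    side d l ∣ res l (g + embed v) i - (res l g + v) i := by
  refine appr_dvd_sub ?_
  have := PadicInt.appr_spec (aExp d l) (g i)
  simp only [Pi.add_apply, embed, res]
  push_cast
  rw [add_sub_add_right_eq_sub]
  exact_mod_cast this

theorem measurable_res (l : ℕ) : Measurable (res l : (Fin d → ℤ_[2]) → Fin d → ℤ) := by
  have h : ∀ n : ℕ, Measurable fun x : ℤ_[2] => x.appr n := by
    intro n
    refine measurable_to_countable' fun t => (Metric.isOpen_iff.2 fun x hx => ?_).measurableSet
    refine ⟨2 ^ (-(n : ℤ)), by positivity, fun y hy => ?_⟩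
    rw [Metric.mem_ball, dist_eq_norm] at hy
    have h1 : y - x ∈ Ideal.span {(2 : ℤ_[2]) ^ n} := by
      have := (PadicInt.norm_le_pow_iff_mem_span_pow (y - x) n).1 (by exact_mod_cast hy.le)
      exact_mod_cast this
    have h2 := PadicInt.appr_spec n x
    have h3 : y - ((x.appr n : ℤ) : ℤ_[2]) ∈ Ideal.span {(2 : ℤ_[2]) ^ n} := by
      have := Ideal.add_mem _ h1 (show x - (x.appr n : ℤ_[2]) ∈ Ideal.span {(2 : ℤ_[2]) ^ n} by
        exact_mod_cast h2)
      simpa using this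
    have h4 := appr_dvd_sub h3
    have h5 : x.appr n < 2 ^ n := PadicInt.appr_lt x n
    have h6 : y.appr n < 2 ^ n := PadicInt.appr_lt y n
    have h7 : y.appr n = x.appr n := by
      have h8 : ((y.appr n : ℕ) : ℤ) ≡ (x.appr n : ℕ) [ZMOD ((2 ^ n : ℕ) : ℤ)] :=
        (Int.modEq_iff_dvd.2 (by exact_mod_cast h4)).symm
      exact ((Int.natCast_modEq_iff).1 h8).eq_of_lt_of_lt h6 h5
    simp only [Set.mem_preimage, Set.mem_singleton_iff] at hx ⊢
    rw [h7, hx]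
  refine measurable_pi_lambda _ fun i => ?_
  exact (measurable_of_countable (fun n : ℕ => (n : ℤ))).comp ((h _).comp (measurable_pi_apply i))

/-- The `i`-th coordinate of the cell of level `l` in which `g` lies, within its cell of level `l + 1`.
These are the digits of `g` in the mixed-radix expansion with radices `ratio d l`. -/
noncomputable def digit (l : ℕ) (i : Fin d) (g : Fin d → ℤ_[2]) : ℤ :=
  res (l + 1) g i / side d l % ratio d l

theorem measurable_digit (l : ℕ) (i : Fin d) : Measurable (digit l i) :=
  (measurable_of_countable (fun n : ℤ => n / side d l % ratio d l)).comp
    ((measurable_pi_apply i).comp (measurable_res (l + 1)))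

theorem digit_add (l : ℕ) (i : Fin d) (a : ℤ) (g : Fin d → ℤ_[2]) :
    digit l i (g + embed (fun _ => a * side d l)) = (digit l i g + a) % ratio d l := by
  obtain ⟨k, hk⟩ := res_add_dvd (l + 1) g (fun _ => a * side d l) i
  rw [side_succ] at hk
  simp only [Pi.add_apply] at hk
  have : res (l + 1) (g + embed (fun _ => a * side d l)) i
      = res (l + 1) g i + (a + ratio d l * k) * side d l := by linear_combination hk
  unfold digit
  rw [this, Int.add_mul_ediv_right _ _ (side_pos d l).ne', ← add_assoc,
    Int.add_mul_emod_self_left, Int.emod_add_emod]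

/-- Digits are uniformly distributed, since translations by multiples of `side d l` permute the fibres
of `digit l i` transitively. -/
theorem haar_digit_le (l : ℕ) (i : Fin d) (t : ℤ) :
    haar d {g | digit l i g = t} ≤ ((2 : ENNReal) ^ kExp d l)⁻¹ := by
  by_cases ht : 0 ≤ t ∧ t < ratio d l
  · have hm : ∀ s, MeasurableSet {g : Fin d → ℤ_[2] | digit l i g = s} := fun s =>
      measurable_digit l i (measurableSet_singleton s)
    have heq : ∀ s ∈ Finset.range (2 ^ kExp d l),
        haar d {g | digit l i g = (s : ℤ)} = haar d {g | digit l i g = t} := by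
      intro s hs
      have hs' : (s : ℤ) < ratio d l := by
        unfold ratio; exact_mod_cast Finset.mem_range.1 hs
      rw [← (measurePreserving_add_right (haar d)
        (embed (fun _ => (t - s) * side d l))).measure_preimage (hm t).nullMeasurableSet]
      congr 1
      ext g
      have hr := ratio_pos d l
      have h1 : 0 ≤ digit l i g := Int.emod_nonneg _ hr.ne'
      have h2 : digit l i g < ratio d l := Int.emod_lt_of_pos _ hr
      simp only [Set.mem_ofPred_eq, Set.mem_preimage, digit_add]
      constructor
      · intro h
        rw [h, add_sub_cancel, Int.emod_eq_of_lt ht.1 ht.2]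
      · intro h
        have h3 : (digit l i g + (t - s)) % ratio d l = t % ratio d l := by
          rw [h, Int.emod_eq_of_lt ht.1 ht.2]
        have h4 : digit l i g % ratio d l = s % ratio d l := by
          have := Int.ModEq.sub_right (t - s) h3
          simpa [Int.ModEq] using this
        rwa [Int.emod_eq_of_lt h1 h2, Int.emod_eq_of_lt (by positivity) hs'] at h4
    have hsum : ∑ s ∈ Finset.range (2 ^ kExp d l), haar d {g | digit l i g = (s : ℤ)} ≤ 1 := by
      rw [← measure_biUnion_finset (f := fun s : ℕ => {g | digit l i g = (s : ℤ)}) _ fun s _ => hm s]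
      · exact prob_le_one
      · intro s _ s' _ hne
        refine Set.disjoint_left.2 fun g h h' => hne ?_
        have h : digit l i g = s := h
        have h' : digit l i g = s' := h'
        exact_mod_cast h.symm.trans h'
    rw [Finset.sum_congr rfl heq, Finset.sum_const, Finset.card_range, nsmul_eq_mul] at hsum
    rw [← one_div, ENNReal.le_div_iff_mul_le (by simp) (by simp), mul_comm]
    exact_mod_cast hsum
  · have : {g : Fin d → ℤ_[2] | digit l i g = t} = ∅ := by
      refine Set.eq_empty_of_forall_notMem fun g hg => ht ?_
      have hr := ratio_pos d l
      rw [← show digit l i g = t from hg]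
      exact ⟨Int.emod_nonneg _ hr.ne', Int.emod_lt_of_pos _ hr⟩
    rw [this]; simp

theorem ae_translate {P : (Fin d → ℤ_[2]) → Prop} (h : ∀ᵐ g ∂haar d, P g) (a : Fin d → ℤ_[2]) :
    ∀ᵐ g ∂haar d, P (g + a) :=
  (measurePreserving_add_right (haar d) a).quasiMeasurePreserving.tendsto_ae.eventually h

variable [NeZero d]

/-- The set of `g` for which the cell of level `l` containing the residue of `g` does not carry the
prevailing symbol `l`. -/
def bad (l : ℕ) : Set (Fin d → ℤ_[2]) := {g | pat l (cell l (res (l + 1) g)) ≠ l}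

/-- A bad cell has a digit on the boundary, or its first digit is below `2 * (l + 1)`; this excludes
`2 * d + 2 * (l + 1)` digit values, each of probability `1 / ratio d l`. -/
theorem haar_bad_le (l : ℕ) : haar d (bad l) ≤ (2 : ENNReal)⁻¹ ^ (l + 3) := by
  have hsub : (bad l : Set (Fin d → ℤ_[2])) ⊆
      ((⋃ i ∈ (Finset.univ : Finset (Fin d)), {g | digit l i g = 0}) ∪
        (⋃ i ∈ (Finset.univ : Finset (Fin d)), {g | digit l i g = ratio d l - 1})) ∪
      ⋃ t ∈ Finset.range (2 * (l + 1)), {g | digit l 0 g = (t : ℤ)} := by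
    intro g hg
    by_contra hcon
    refine hg ?_
    simp only [Set.mem_union, Set.mem_iUnion, Set.mem_ofPred_eq, Finset.mem_univ, exists_prop,
      true_and, Finset.mem_range, not_or, not_exists, not_and] at hcon
    obtain ⟨⟨h1, h2⟩, h3⟩ := hcon
    have h0 : 0 ≤ digit l 0 g := Int.emod_nonneg _ (ratio_pos d l).ne'
    have h4 : 2 * ((l : ℤ) + 1) ≤ digit l 0 g := by
      by_contra hlt
      exact h3 (digit l 0 g).toNat (by omega) (by omega)
    have hd : ∀ i, cell l (res (l + 1) g) i % ratio d l = digit l i g := fun i => rfl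
    unfold pat
    simp only [hd]
    rw [if_neg]
    · omega
    · rintro (⟨i, hi | hi⟩ | hi)
      · exact h1 i hi
      · exact h2 i hi
      · omega
  refine (measure_mono hsub).trans ?_
  refine (measure_union_le _ _).trans ((add_le_add ((measure_union_le _ _).trans (add_le_add
    (measure_biUnion_finset_le _ _) (measure_biUnion_finset_le _ _)))
    (measure_biUnion_finset_le _ _)).trans ?_)
  refine (add_le_add (add_le_add (Finset.sum_le_sum fun i _ => haar_digit_le l i _)
    (Finset.sum_le_sum fun i _ => haar_digit_le l i _))
    (Finset.sum_le_sum fun t _ => haar_digit_le l 0 _)).trans ?_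
  simp only [Finset.sum_const, Finset.card_univ, Fintype.card_fin, Finset.card_range, nsmul_eq_mul]
  rw [← add_mul, ← add_mul]
  set N := 2 * d + 2 * (l + 1) with hN
  have h1 : ((d : ENNReal) + d + ((2 * (l + 1) : ℕ) : ENNReal)) = (N : ENNReal) := by
    rw [hN]; push_cast; ring
  have h2 : (N : ENNReal) ≤ 2 ^ N := by exact_mod_cast Nat.lt_two_pow_self.le
  rw [h1, show kExp d l = N + (l + 3) by simp [kExp, hN]; ring, pow_add,
    ENNReal.mul_inv (by simp) (by simp), ← mul_assoc]
  refine (mul_le_mul_left (mul_le_mul_left h2 _) _).trans ?_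
  rw [ENNReal.mul_inv_cancel (by simp) (by simp), one_mul, ENNReal.inv_pow]

theorem tsum_haar_bad_le (b : ℕ) : ∑' n, haar d (bad (b + 2 * n)) ≤ 4⁻¹ := by
  have h : ∀ n, haar d (bad (b + 2 * n)) ≤ (2 : ENNReal)⁻¹ ^ (n + 3) := fun n =>
    (haar_bad_le _).trans (pow_le_pow_right_of_le_one' (by simp) (by omega))
  refine (ENNReal.tsum_le_tsum h).trans ?_
  simp_rw [pow_add]
  rw [ENNReal.tsum_mul_right, ENNReal.tsum_geometric, ENNReal.one_sub_inv_two, inv_inv,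
    show (4 : ENNReal) = 2 * 2 by norm_num, ENNReal.mul_inv (by simp) (by simp), pow_succ', ← mul_assoc,
    ENNReal.mul_inv_cancel (by simp) (by simp), one_mul, pow_two]

/-! ### The equivariant map from `ℤ_2^d` to the subshift -/

/-- Outside `bad m`, the letter at `g` does not change in passing from `word m` to `word (m + 2)`. -/
theorem word_res_add_two {m : ℕ} {g : Fin d → ℤ_[2]} (hg : g ∉ bad m) :
    word (m + 2) (res (m + 2) g) = word m (res m g) := by
  have hg : pat m (cell m (res (m + 1) g)) = m := not_not.1 hg
  rw [word_congr (l := m + 1) le_rfl (res_dvd (Nat.le_succ (m + 1)) g), word_succ_eq hg,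
    word_congr (Nat.le_succ m) (res_dvd (Nat.le_succ m) g)]

theorem word_res_eq {b n₀ n : ℕ} {g : Fin d → ℤ_[2]} (hg : ∀ n ≥ n₀, g ∉ bad (b + 2 * n))
    (hn : n₀ ≤ n) :
    word (b + 2 * n) (res (b + 2 * n) g) = word (b + 2 * n₀) (res (b + 2 * n₀) g) := by
  induction n, hn using Nat.le_induction with
  | base => rfl
  | succ n hn ih => rw [← ih]; exact word_res_add_two (hg n hn)

open Classical in
/-- The eventual value of `word (b + 2 * n)` at `g` as `n → ∞`, with value `false` if the sequence does
not stabilise at `true`. -/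
noncomputable def limitValue (b : ℕ) (g : Fin d → ℤ_[2]) : Bool :=
  decide (∃ N, ∀ n ≥ N, word (b + 2 * n) (res (b + 2 * n) g) = true)

theorem limitValue_eq {b n₀ : ℕ} {g : Fin d → ℤ_[2]} (hg : ∀ n ≥ n₀, g ∉ bad (b + 2 * n)) :
    limitValue b g = word (b + 2 * n₀) (res (b + 2 * n₀) g) := by
  rw [Bool.eq_iff_iff]
  simp only [limitValue, decide_eq_true_eq]
  constructor
  · rintro ⟨N, hN⟩
    rw [← word_res_eq hg (le_max_left n₀ N)]
    exact hN _ (le_max_right _ _)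
  · intro h
    exact ⟨n₀, fun n hn => by rw [word_res_eq hg hn, h]⟩

theorem measurable_limitValue (b : ℕ) : Measurable (limitValue (d := d) b) := by
  refine measurable_to_bool ?_
  have : limitValue (d := d) b ⁻¹' {true} =
      ⋃ N, ⋂ n, ⋂ (_ : n ≥ N), {g | word (b + 2 * n) (res (b + 2 * n) g) = true} := by
    ext g
    simp [limitValue]
  rw [this]
  refine MeasurableSet.iUnion fun N => MeasurableSet.iInter fun n => MeasurableSet.iInter fun _ => ?_
  exact ((measurable_of_countable (word (b + 2 * n))).comp (measurable_res _))
    (measurableSet_singleton true)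

/-- The configuration read off from `limitValue` along the `ℤ^d`-orbit of `g`. -/
noncomputable def point (b : ℕ) (g : Fin d → ℤ_[2]) : (Fin d → ℤ) → Bool :=
  fun u => limitValue b (g + embed u)

theorem measurable_point (b : ℕ) : Measurable (point (d := d) b) :=
  measurable_pi_lambda _ fun _ => (measurable_limitValue b).comp (measurable_add_const _)

theorem point_add (b : ℕ) (g : Fin d → ℤ_[2]) (v : Fin d → ℤ) :
    point b (g + embed v) = shiftZdHomeo d v (point b g) := by
  funext u
  rw [shift_apply, point, point, add_assoc, ← embed_add, add_comm v u]

/-- Borel–Cantelli for the bad sets. -/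
theorem ae_eventually_notMem_bad (b : ℕ) :
    ∀ᵐ g ∂haar d, ∃ n₀, ∀ n ≥ n₀, g ∉ bad (b + 2 * n) := by
  have h4 : (4⁻¹ : ENNReal) < ⊤ := by simp
  have := ae_eventually_notMem (μ := haar d) (s := fun n => bad (b + 2 * n))
    ((tsum_haar_bad_le b).trans_lt h4).ne
  exact this.mono fun g hg => Filter.eventually_atTop.1 hg

/-- Almost every `g` has a stabilising sequence of letters at every point of its `ℤ^d`-orbit. -/
theorem ae_good (b : ℕ) :
    ∀ᵐ g ∂haar d, ∀ v : Fin d → ℤ, ∃ n₀, ∀ n ≥ n₀, g + embed v ∉ bad (b + 2 * n) := by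
  refine ae_all_iff.2 fun v => ?_
  exact ae_translate (P := fun g => ∃ n₀, ∀ n ≥ n₀, g ∉ bad (b + 2 * n))
    (ae_eventually_notMem_bad b) (embed v)

/-- On a finite window the configuration `point b g` coincides with a translate of `word (b + 2 * n)`
for `n` large. -/
theorem point_mem {b : ℕ} {g : Fin d → ℤ_[2]}
    (hg : ∀ v : Fin d → ℤ, ∃ n₀, ∀ n ≥ n₀, g + embed v ∉ bad (b + 2 * n)) :
    point b g ∈ camShift d := by
  refine mem_closure_window.2 fun R => ?_
  have h : ∀ᶠ n in Filter.atTop, ∀ z ∈ {z : Fin d → ℤ | ∀ i, |z i| ≤ R},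
      word (b + 2 * n) (res (b + 2 * n) (g + embed z)) = limitValue b (g + embed z) := by
    refine (Filter.eventually_all_finite (finite_window R)).2 fun z _ => ?_
    obtain ⟨n₀, hn₀⟩ := hg z
    filter_upwards [Filter.eventually_ge_atTop n₀] with n hn
    rw [limitValue_eq hn₀, word_res_eq hn₀ hn]
  obtain ⟨n, hn⟩ := h.exists
  refine ⟨_, ⟨b + 2 * n, res (b + 2 * n) g, rfl⟩, fun z hz => ?_⟩
  rw [shift_apply, point, ← hn z hz, add_comm z]
  refine (word_congr (Nat.le_succ _) fun i => ?_).symm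
  exact res_add_dvd _ g z i

/-- Translates of `g` within the same cell of level `b + 2 * n₀` lie in the same cells of all higher
levels, hence are good from the same index on. -/
theorem good_translate {b n₀ : ℕ} {g : Fin d → ℤ_[2]} (hg : ∀ n ≥ n₀, g ∉ bad (b + 2 * n))
    {v : Fin d → ℤ} (hv : ∀ i, 0 ≤ res (b + 2 * n₀) g i + v i ∧
      res (b + 2 * n₀) g i + v i < side d (b + 2 * n₀)) :
    ∀ n ≥ n₀, g + embed v ∉ bad (b + 2 * n) := by
  intro n hn
  have h : pat (b + 2 * n) (cell (b + 2 * n) (res (b + 2 * n + 1) g)) = b + 2 * n :=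
    not_not.1 (hg n hn)
  refine not_not.2 ?_
  rw [pat_cell_congr _ (res_add_dvd (b + 2 * n + 1) g v)]
  convert h using 2
  funext i
  obtain ⟨q, hq⟩ := side_dvd d (show b + 2 * n₀ ≤ b + 2 * n by omega)
  obtain ⟨k, hk⟩ := res_dvd (show b + 2 * n₀ ≤ b + 2 * n + 1 by omega) g i
  have hs := side_pos d (b + 2 * n₀)
  simp only [cell, Pi.add_apply]
  rw [hq, ← Int.ediv_ediv_of_nonneg hs.le, ← Int.ediv_ediv_of_nonneg hs.le]
  congr 1
  have h1 := hv i
  have h2 := res_nonneg (b + 2 * n₀) g i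
  have h3 := res_lt (b + 2 * n₀) g i
  rw [show res (b + 2 * n + 1) g i = res (b + 2 * n₀) g i + k * side d (b + 2 * n₀) by
    linear_combination hk, add_right_comm, Int.add_mul_ediv_right _ _ hs.ne',
    Int.add_mul_ediv_right _ _ hs.ne', Int.ediv_eq_zero_of_lt h1.1 h1.2,
    Int.ediv_eq_zero_of_lt h2 h3]

/-- The cell of level `b + 2 * n` around `g` is filled with the block of `word (b + 2 * n)` as soon as
`g` is good from index `n` on. -/
theorem point_contains {b n₀ : ℕ} {g : Fin d → ℤ_[2]} (hg : ∀ n ≥ n₀, g ∉ bad (b + 2 * n))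
    (N : ℕ) : ∃ l ≥ N, Contains (point b g) l := by
  obtain ⟨l, hl, n, hn, hln⟩ : ∃ l ≥ N, ∃ n ≥ n₀, b + 2 * n = l + 1 :=
    ⟨b + 2 * (n₀ + N + 1) - 1, by omega, n₀ + N + 1, by omega, by omega⟩
  have hgn : ∀ m ≥ n, g ∉ bad (b + 2 * m) := fun m hm => hg m (by omega)
  refine ⟨l, hl, fun i => -res (b + 2 * n) g i, fun z hz => ?_⟩
  have hz' : ∀ i, 0 ≤ z i ∧ z i < side d (b + 2 * n) := fun i =>
    ⟨(hz i).1, (hz i).2.trans_le (side_le d (by omega))⟩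
  rw [point, limitValue_eq (good_translate hgn fun i => ?_), ← hln]
  · refine word_congr (Nat.le_succ _) fun i => ?_
    have := res_add_dvd (b + 2 * n) g (z + fun i => -res (b + 2 * n) g i) i
    simpa using this
  · simpa using hz' i

open Classical in
/-- `point b g` as an element of the subshift. On the exceptional null set it takes a fixed point of the
shift as its value, which keeps the map equivariant everywhere. -/
noncomputable def pointX (b : ℕ) (g : Fin d → ℤ_[2]) : camShift d :=
  if h : point b g ∈ camShift d then ⟨point b g, h⟩ else ⟨word 0, word_mem 0⟩

theorem pointX_coe {b : ℕ} {g : Fin d → ℤ_[2]} (h : point b g ∈ camShift d) :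
    (pointX b g : (Fin d → ℤ) → Bool) = point b g := by
  simp [pointX, h]

theorem isClosed_camShift : IsClosed (camShift d) := isClosed_closure

theorem measurable_pointX (b : ℕ) : Measurable (pointX (d := d) b) := by
  classical
  refine (MeasurableEmbedding.subtype_coe isClosed_camShift.measurableSet).measurable_comp_iff.1 ?_
  change Measurable fun g : Fin d → ℤ_[2] => (pointX b g : (Fin d → ℤ) → Bool)
  have : (fun g : Fin d → ℤ_[2] => (pointX b g : (Fin d → ℤ) → Bool)) =
      fun g => if point b g ∈ camShift d then point b g else word 0 := by
    funext g
    unfold pointX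
    split_ifs <;> rfl
  rw [this]
  exact Measurable.ite (measurable_point b isClosed_camShift.measurableSet) (measurable_point b)
    measurable_const

/-- The shift action on the subshift. -/
def shiftX (v : Fin d → ℤ) : camShift d ≃ₜ camShift d :=
  restrictHomeo (shiftZdHomeo d v) (camShift d) (shift_mem_iff v)

theorem shiftX_coe (v : Fin d → ℤ) (x : camShift d) :
    (shiftX v x : (Fin d → ℤ) → Bool) = shiftZdHomeo d v x := rfl

theorem shiftX_pointX (b : ℕ) (g : Fin d → ℤ_[2]) (v : Fin d → ℤ) :
    shiftX v (pointX b g) = pointX b (g + embed v) := by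
  apply Subtype.ext
  rw [shiftX_coe]
  unfold pointX
  by_cases h : point b g ∈ camShift d
  · have h' : point b (g + embed v) ∈ camShift d := by
      rw [point_add]; exact shift_mem_of_mem v h
    rw [dif_pos h, dif_pos h']
    exact (point_add b g v).symm
  · have h' : point b (g + embed v) ∉ camShift d := by
      rw [point_add]; exact fun hc => h ((shift_mem_iff v _).2 hc)
    rw [dif_neg h, dif_neg h']
    funext u
    simp [shift_apply, word_zero]

/-! ### The invariant measures -/

/-- The image of Haar measure under `pointX b`; only the parities `b = 0` and `b = 1` are used. -/
noncomputable def limitMeasure (d : ℕ) [NeZero d] (b : ℕ) : Measure (camShift d) :=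
  (haar d).map (pointX b)

instance (b : ℕ) : IsProbabilityMeasure (limitMeasure d b) :=
  Measure.isProbabilityMeasure_map (measurable_pointX b).aemeasurable

theorem limitMeasure_preserving (b : ℕ) (v : Fin d → ℤ) :
    MeasurePreserving (shiftX v) (limitMeasure d b) (limitMeasure d b) := by
  have hm : Measurable (shiftX (d := d) v) := (shiftX v).continuous.measurable
  refine ⟨hm, ?_⟩
  unfold limitMeasure
  rw [Measure.map_map hm (measurable_pointX b)]
  conv_rhs => rw [← (measurePreserving_add_right (haar d) (embed v)).map_eq]
  rw [Measure.map_map (measurable_pointX b) (measurable_add_const _)]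
  congr 1
  funext g
  exact shiftX_pointX b g v

/-- Ergodicity is inherited from the translations of `ℤ_2^d` by the dense subgroup `ℤ^d`. -/
theorem limitMeasure_ergodic (b : ℕ) (B : Set (camShift d)) (hB : MeasurableSet B)
    (hinv : ∀ v, shiftX v ⁻¹' B = B) : limitMeasure d b B = 0 ∨ limitMeasure d b B = 1 := by
  have hm := measurable_pointX (d := d) b
  have hpre : MeasurableSet (pointX b ⁻¹' B) := hm hB
  have hdense : Dense {g : Fin d → ℤ_[2] |
      (fun x => g +ᵥ x) ⁻¹' (pointX b ⁻¹' B) = pointX b ⁻¹' B} := by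
    refine denseRange_embed.mono ?_
    rintro _ ⟨v, rfl⟩
    ext g
    change pointX b (embed v + g) ∈ B ↔ pointX b g ∈ B
    rw [add_comm, ← shiftX_pointX]
    exact Set.ext_iff.1 (hinv v) (pointX b g)
  have := aeconst_of_dense_setOfPred_preimage_vadd_eq (μ := haar d) hpre.nullMeasurableSet hdense
  unfold limitMeasure
  rw [Measure.map_apply hm hB]
  rcases Filter.eventuallyConst_set'.1 this with h | h
  · left; rw [measure_congr h, measure_empty]
  · right; rw [measure_congr h, measure_univ]

theorem not_periodic_of_frequently {x : (Fin d → ℤ) → Bool} (hx : ∀ N, ∃ l ≥ N, Contains x l)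
    {v : Fin d → ℤ} (hv : v ≠ 0) : shiftZdHomeo d v x ≠ x := by
  obtain ⟨V, hV⟩ := exists_bound {v} (Set.finite_singleton v)
  obtain ⟨l, hl, hc⟩ := hx (V + 1)
  obtain ⟨k, rfl⟩ : ∃ k, l = k + 1 := ⟨l - 1, by omega⟩
  obtain ⟨u, hu⟩ := not_periodic_of_contains hv (l := k)
    (fun i => by have := hV v rfl i; have := lt_side d k; omega) hc
  exact fun h => hu (congrFun h u)

/-- The orbit of an atom would be an infinite set of atoms of equal mass, since generic points contain
blocks of arbitrarily high level and so have no periods. -/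
theorem limitMeasure_singleton (b : ℕ) (x : camShift d) : limitMeasure d b {x} = 0 := by
  by_contra hne
  have hms : ∀ y : camShift d, MeasurableSet ({y} : Set (camShift d)) := measurableSet_singleton
  have hpre : limitMeasure d b {x} = haar d (pointX b ⁻¹' {x}) :=
    Measure.map_apply (measurable_pointX b) (hms x)
  -- a positive-measure fibre contains a generic point
  obtain ⟨g, hgx, hg⟩ : ∃ g, pointX b g = x ∧
      ∀ v : Fin d → ℤ, ∃ n₀, ∀ n ≥ n₀, g + embed v ∉ bad (b + 2 * n) := by
    by_contra hcon
    push Not at hcon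
    refine hne (hpre.trans (measure_mono_null ?_ (ae_iff.1 (ae_good (d := d) b))))
    intro g hg hgood
    obtain ⟨v, hv⟩ := hcon g hg
    obtain ⟨n₀, hn₀⟩ := hgood v
    obtain ⟨n, hn, hb⟩ := hv n₀
    exact hn₀ n hn hb
  have hx : ∀ N, ∃ l ≥ N, Contains (x : (Fin d → ℤ) → Bool) l := by
    intro N
    obtain ⟨n₀, hn₀⟩ := hg 0
    rw [embed_zero, add_zero] at hn₀
    rw [← hgx, pointX_coe (point_mem hg)]
    exact point_contains hn₀ N
  -- the translates of `x` along the diagonal are distinct atoms of equal mass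
  have hinj : Function.Injective fun k : ℕ => shiftX (fun _ : Fin d => (k : ℤ)) x := by
    intro k k' h
    by_contra hkk
    have h1 : shiftZdHomeo d (fun _ => (k : ℤ)) x = shiftZdHomeo d (fun _ => (k' : ℤ)) x :=
      congrArg Subtype.val h
    have h2 := congrArg (shiftZdHomeo d (-fun _ => (k' : ℤ))) h1
    rw [shift_shift, shift_shift, neg_add_cancel, shift_zero] at h2
    refine not_periodic_of_frequently hx (fun h3 => hkk ?_) h2
    have := congrFun h3 0
    simp only [Pi.add_apply, Pi.neg_apply, Pi.zero_apply] at this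
    omega
  have hmass : ∀ v, limitMeasure d b {shiftX v x} = limitMeasure d b {x} := by
    intro v
    rw [← (limitMeasure_preserving b v).measure_preimage (hms _).nullMeasurableSet]
    congr 1
    ext y
    simp
  have hsum : ∑' k : ℕ, limitMeasure d b {shiftX (fun _ : Fin d => (k : ℤ)) x} ≤ 1 := by
    rw [← measure_iUnion _ fun k => hms _]
    · exact prob_le_one
    · intro k k' hk
      simpa using fun h => hk (hinj h)
  simp_rw [hmass] at hsum
  rw [ENNReal.tsum_const_eq_top_of_ne_zero hne] at hsum
  simp at hsum

/-- The letter at the origin equals `true` with probability at most `1/4` for `b = 0`, and at least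
`3/4` for `b = 1`. -/
theorem limitMeasure_ne : limitMeasure d 0 ≠ limitMeasure d 1 := by
  have hm : ∀ c : Bool, MeasurableSet {x : camShift d | (x : (Fin d → ℤ) → Bool) 0 = c} :=
    fun c => (show Measurable fun x : camShift d => (x : (Fin d → ℤ) → Bool) 0 from
      (measurable_pi_apply 0).comp measurable_subtype_coe) (measurableSet_singleton c)
  -- outside all the bad sets the letter at the origin is that of the constant configuration `word b`
  have key : ∀ (b : ℕ) (c : Bool), (∀ z : Fin d → ℤ, word b z = !c) →
      limitMeasure d b {x : camShift d | (x : (Fin d → ℤ) → Bool) 0 = c} ≤ 4⁻¹ := by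
    intro b c hc
    unfold limitMeasure
    rw [Measure.map_apply (measurable_pointX b) (hm c)]
    refine le_trans ?_ (tsum_haar_bad_le (d := d) b)
    refine le_trans (measure_mono_ae ?_) (measure_iUnion_le _)
    filter_upwards [ae_good (d := d) b] with g hg hgc
    by_contra hcon
    have hgood : ∀ n ≥ 0, g ∉ bad (b + 2 * n) := fun n _ hn => hcon (Set.mem_iUnion.2 ⟨n, hn⟩)
    have h1 : (pointX b g : (Fin d → ℤ) → Bool) 0 = c := hgc
    rw [pointX_coe (point_mem hg), point, embed_zero, add_zero, limitValue_eq hgood, mul_zero,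
      add_zero, hc] at h1
    cases c <;> simp at h1
  intro heq
  have h0 := key 0 true (by simp [word_zero])
  have h1 := key 1 false (by simp [word_one])
  rw [heq] at h0
  have huniv : (Set.univ : Set (camShift d)) ⊆ {x | (x : (Fin d → ℤ) → Bool) 0 = true} ∪
      {x | (x : (Fin d → ℤ) → Bool) 0 = false} := by
    intro x _
    cases hx : (x : (Fin d → ℤ) → Bool) 0
    · exact Or.inr hx
    · exact Or.inl hx
  have h2 : (1 : ENNReal) ≤ 4⁻¹ + 4⁻¹ := by
    rw [← measure_univ (μ := limitMeasure d 1)]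
    exact (measure_mono huniv).trans ((measure_union_le _ _).trans (add_le_add h0 h1))
  have h3 : (4⁻¹ + 4⁻¹ : ENNReal) < 1 := by
    rw [← ENNReal.toReal_lt_toReal (by simp) (by simp), ENNReal.toReal_add (by simp) (by simp)]
    norm_num
  exact absurd h2 (not_le.2 h3)

end Odometer

/-! ### Chaotic almost minimality -/

section Chaos

variable {d : ℕ} [NeZero d]

theorem shiftX_faithful (v : Fin d → ℤ) (h : shiftX v = 1) : v = 0 := by
  by_contra hv
  obtain ⟨V, hV⟩ := exists_bound {v} (Set.finite_singleton v)
  obtain ⟨u, hu⟩ := not_periodic_of_contains hv (l := V)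
    (fun i => by have := hV v rfl i; have := lt_side d V; omega) (contains_word (V + 1))
  have h1 : shiftX v ⟨word (V + 2), word_mem _⟩ = ⟨word (V + 2), word_mem _⟩ := by
    rw [h]; rfl
  exact hu (congrFun (congrArg Subtype.val h1) u)

theorem shiftX_transitive (U V : Set (camShift d)) (hU : IsOpen U) (hV : IsOpen V)
    (hU' : U.Nonempty) (hV' : V.Nonempty) : ∃ v, (shiftX v '' U ∩ V).Nonempty := by
  obtain ⟨U, hUo, rfl⟩ := isOpen_induced_iff.1 hU
  obtain ⟨V, hVo, rfl⟩ := isOpen_induced_iff.1 hV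
  obtain ⟨x, hx⟩ := hU'
  obtain ⟨y, hy⟩ := hV'
  obtain ⟨l₁, h₁⟩ := exists_shift_mem hUo ⟨x, hx, x.2⟩
  obtain ⟨l₂, h₂⟩ := exists_shift_mem hVo ⟨y, hy, y.2⟩
  obtain ⟨u, hu⟩ := h₁ (max l₁ l₂) (le_max_left _ _) _ (contains_word _)
  obtain ⟨v, hv⟩ := h₂ (max l₁ l₂) (le_max_right _ _) _ (contains_word _)
  let p : camShift d := ⟨word (max l₁ l₂ + 1), word_mem _⟩
  refine ⟨v - u, shiftX v p, ⟨shiftX u p, hu, ?_⟩, hv⟩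
  apply Subtype.ext
  rw [shiftX_coe, shiftX_coe, shiftX_coe, shift_shift, sub_add_cancel]

theorem shiftX_dense : Dense {x : camShift d | (Set.range fun v => shiftX v x).Finite} := by
  intro x
  refine mem_closure_iff.2 fun U hU hxU => ?_
  obtain ⟨U, hUo, rfl⟩ := isOpen_induced_iff.1 hU
  obtain ⟨_, hyU, m, v, rfl⟩ := mem_closure_iff.1 x.2 U hUo hxU
  refine ⟨⟨shiftZdHomeo d v (word m), shift_mem_of_mem v (word_mem m)⟩, hyU, ?_⟩
  refine Set.Finite.of_finite_image ((finite_orbit_word (d := d) m).subset ?_)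
    Subtype.val_injective.injOn
  rintro _ ⟨_, ⟨w, rfl⟩, rfl⟩
  exact ⟨w + v, (shift_shift w v _).symm⟩

/-- A closed invariant set either omits a block, and is finite by `mem_periodicPoints`, or contains
blocks of all levels, and is dense by `exists_shift_mem`. -/
theorem shiftX_almost_minimal (A : Set (camShift d)) (hA : IsClosed A)
    (hinv : ∀ v, shiftX v '' A = A) (hne : A ≠ Set.univ) : A.Finite := by
  by_cases h : ∃ l, ∀ x ∈ A, ¬ Contains (x : (Fin d → ℤ) → Bool) l
  · obtain ⟨l, hl⟩ := h
    refine Set.Finite.of_finite_image ((finite_periodicPoints (d := d) l).subset ?_)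
      Subtype.val_injective.injOn
    rintro _ ⟨x, hx, rfl⟩
    exact mem_periodicPoints x.2 (hl x hx)
  · exfalso
    push Not at h
    apply hne
    rw [← hA.closure_eq, Set.eq_univ_iff_forall]
    intro y
    refine mem_closure_iff.2 fun U hU hyU => ?_
    obtain ⟨U, hUo, rfl⟩ := isOpen_induced_iff.1 hU
    obtain ⟨l, hl⟩ := exists_shift_mem hUo ⟨y, hyU, y.2⟩
    obtain ⟨x, hxA, hx⟩ := h l
    obtain ⟨v, hv⟩ := hl l le_rfl x hx
    refine ⟨shiftX v x, hv, ?_⟩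
    rw [← hinv v]
    exact ⟨x, hxA, rfl⟩

end Chaos

/-- For every `d ≥ 1` there exists a nonempty closed shift-invariant subset
`X` of `{0,1}^(ℤ^d)` such that the `ℤ^d`-shift action restricted to `X` is chaotic almost
minimal and supports two distinct nonatomic ergodic shift-invariant probability measures. -/
theorem statement1 (d : ℕ) (hd : 1 ≤ d) :
    ∃ (X : Set ((Fin d → ℤ) → Bool))
      (hinv : ∀ (v : Fin d → ℤ) (x : (Fin d → ℤ) → Bool),
        x ∈ X ↔ shiftZdHomeo d v x ∈ X)
      (S : (Fin d → ℤ) → (X ≃ₜ X)),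
      (∀ v, S v = restrictHomeo (shiftZdHomeo d v) X (hinv v)) ∧
      X.Nonempty ∧ IsClosed X ∧
      -- the ℤ^d-action is faithful
      (∀ v, S v = 1 → v = 0) ∧
      -- topologically transitive
      (∀ U V : Set X, IsOpen U → IsOpen V → U.Nonempty → V.Nonempty →
        ∃ v, ((S v) '' U ∩ V).Nonempty) ∧
      -- dense set of points with finite orbit
      Dense {x : X | (Set.range fun v => S v x).Finite} ∧
      -- every proper closed invariant subset is finite
      (∀ A : Set X, IsClosed A → (∀ v, S v '' A = A) → A ≠ Set.univ → A.Finite) ∧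
      -- two distinct nonatomic ergodic invariant probability measures
      ∃ μ ν : Measure X,
        IsProbabilityMeasure μ ∧ IsProbabilityMeasure ν ∧
        (∀ v, MeasurePreserving (S v) μ μ) ∧
        (∀ v, MeasurePreserving (S v) ν ν) ∧
        (∀ B : Set X, MeasurableSet B → (∀ v, (S v) ⁻¹' B = B) → μ B = 0 ∨ μ B = 1) ∧
        (∀ B : Set X, MeasurableSet B → (∀ v, (S v) ⁻¹' B = B) → ν B = 0 ∨ ν B = 1) ∧
        (∀ x : X, μ {x} = 0) ∧ (∀ x : X, ν {x} = 0) ∧ μ ≠ ν := by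
  have : NeZero d := ⟨by omega⟩
  exact ⟨camShift d, shift_mem_iff, shiftX, fun _ => rfl, ⟨word 0, word_mem 0⟩, isClosed_camShift,
    shiftX_faithful, shiftX_transitive, shiftX_dense, shiftX_almost_minimal,
    limitMeasure d 0, limitMeasure d 1, inferInstance, inferInstance,
    limitMeasure_preserving 0, limitMeasure_preserving 1,
    limitMeasure_ergodic 0, limitMeasure_ergodic 1,
    limitMeasure_singleton 0, limitMeasure_singleton 1, limitMeasure_ne⟩
end

section
/- Let G be a group acting by homeomorphisms on a compact metric space X such that the set of points with finite G-orbit is dense in X and some point of X has dense G-orbit. Then there exists a G-invariant Borel probability measure on X with full support (i.e., assigning positive measure to every nonempty open subset of X). -/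
/-!
Each finite orbit carries an invariant probability measure, namely the uniform one. Since `X` is
separable metric, countably many points with finite orbit are already dense; a convex combination
with positive weights `2⁻¹ ^ (n + 1)` of the uniform measures on their orbits is an invariant
probability measure with atoms at a dense set, hence of full support. The point with dense
orbit guarantees that `X` is nonempty, so that there is at least one finite orbit to start from.
-/

open Set MeasureTheory

/-- The uniform measure on a finite set is preserved by a homeomorphism that preserves the set. -/
theorem map_uniformOn_of_preimage_eq {X : Type*} [TopologicalSpace X] [T1Space X]
    [MeasurableSpace X] [BorelSpace X] (e : X ≃ₜ X) (s : Set X) (hs : e ⁻¹' s = s)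
    (hfin : s.Finite) :
    Measure.map e (ProbabilityTheory.uniformOn s) = ProbabilityTheory.uniformOn s := by
  ext A hA
  rw [Measure.map_apply e.continuous.measurable hA, ProbabilityTheory.uniformOn,
    ProbabilityTheory.cond_apply hfin.measurableSet, ProbabilityTheory.cond_apply hfin.measurableSet]
  congr 1
  have h : s ∩ e ⁻¹' A = e ⁻¹' (s ∩ A) := by rw [preimage_inter, hs]
  rw [h, Measure.count_apply (e.continuous.measurable (hfin.measurableSet.inter hA)),
    Measure.count_apply (hfin.measurableSet.inter hA), ← e.image_symm]
  congr 1
  exact e.symm.injective.encard_image _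

theorem preimage_orbit_eq {G X : Type*} [Group G] [TopologicalSpace X] (T : G →* (X ≃ₜ X))
    (g : G) (x : X) :
    T g ⁻¹' (Set.range fun h : G => T h x) = Set.range fun h : G => T h x := by
  have hmul : ∀ (a b : G) (y : X), T (a * b) y = T a (T b y) := fun a b y => by
    rw [map_mul]; rfl
  ext y
  constructor
  · rintro ⟨h, hh⟩
    refine ⟨g⁻¹ * h, ?_⟩
    apply (T g).injective
    change T g (T (g⁻¹ * h) x) = T g y
    rw [← hmul, mul_inv_cancel_left]
    exact hh
  · rintro ⟨h, rfl⟩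
    exact ⟨g * h, hmul g h x⟩

/-- A group action by homeomorphisms on a compact metric space with a dense
set of points with finite orbit and a point with dense orbit admits an invariant Borel
probability measure of full support. -/
theorem statement3 {G X : Type*} [Group G] [MetricSpace X] [CompactSpace X]
    [MeasurableSpace X] [BorelSpace X]
    (T : G →* (X ≃ₜ X))
    (hfin : Dense {x : X | (Set.range fun g : G => T g x).Finite})
    (htrans : ∃ x : X, Dense (Set.range fun g : G => T g x)) :
    ∃ μ : Measure X, IsProbabilityMeasure μ ∧
      (∀ g : G, Measure.map (T g) μ = μ) ∧
      (∀ U : Set X, IsOpen U → U.Nonempty → 0 < μ U) := by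
  obtain ⟨x₀, -⟩ := htrans
  obtain ⟨t, hts, htc, htd⟩ := hfin.exists_countable_dense_subset
  have htne : t.Nonempty := have : Nonempty X := ⟨x₀⟩; htd.nonempty
  obtain ⟨f, rfl⟩ := htc.exists_eq_range htne
  let O : ℕ → Set X := fun n => Set.range fun g : G => T g (f n)
  have hOfin : ∀ n, (O n).Finite := fun n => hts ⟨n, rfl⟩
  have hmem : ∀ n, f n ∈ O n := fun n => ⟨1, by beta_reduce; rw [map_one]; rfl⟩
  have hprob : ∀ n, IsProbabilityMeasure (ProbabilityTheory.uniformOn (O n)) := fun n =>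
    ProbabilityTheory.isProbabilityMeasure_uniformOn (hOfin n) ⟨_, hmem n⟩
  refine ⟨Measure.sum fun n => (2⁻¹ : ENNReal) ^ (n + 1) • ProbabilityTheory.uniformOn (O n),
    ⟨?_⟩, fun g => ?_, fun U hU hne => ?_⟩
  · rw [Measure.sum_apply _ MeasurableSet.univ]
    simp only [Measure.smul_apply, measure_univ, smul_eq_mul, mul_one]
    rw [ENNReal.tsum_geometric_add_one, ENNReal.one_sub_inv_two, inv_inv]
    exact ENNReal.inv_mul_cancel (by simp) (by simp)
  · rw [Measure.map_sum (T g).continuous.measurable.aemeasurable]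
    congr 1
    funext n
    rw [Measure.map_smul,
      map_uniformOn_of_preimage_eq (T g) (O n) (preimage_orbit_eq T g (f n)) (hOfin n)]
  · obtain ⟨_, hxU, n, rfl⟩ := htd.inter_open_nonempty U hU hne
    rw [Measure.sum_apply _ hU.measurableSet, pos_iff_ne_zero]
    intro h0
    have hn := ENNReal.tsum_eq_zero.1 h0 n
    rw [Measure.smul_apply, smul_eq_mul, mul_eq_zero] at hn
    rcases hn with hn | hn
    · exact absurd hn (by simp)
    · have := (ProbabilityTheory.uniformOn_eq_zero_iff (hOfin n)).1 hn
      exact (this ▸ (⟨hmem n, hxU⟩ : f n ∈ O n ∩ U) : f n ∈ (∅ : Set X))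
end

section
/- Let (X,T) be a chaotic almost minimal system, where T is an expansive homeomorphism of the compact metric space X. Then (X,T) is topologically conjugate to a subshift: there exist a finite alphabet A, a nonempty closed shift-invariant subset Y ⊆ A^ℤ, and a homeomorphism h: X → Y with h ∘ T = σ ∘ h. -/
/-!
The point is that `X` is totally disconnected; given this, a finite clopen cover by sets of diameter
at most the expansivity constant `ε` codes orbits, and expansivity makes the coding injective.

Total disconnectedness follows a variant of Mañé's argument that minimal expansive systems are
zero-dimensional. Let `P` be a periodic orbit. A *seed* is a continuum `D` of diameter at least `r`
whose past iterates up to time `N` have diameter at most `ε` and which stays at distance `r` from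
`P`. If `N` is large in terms of `r`, expansivity forces some iterate `T ^ n D`, `1 ≤ n ≤ N`, to have
diameter greater than `ε` (`IsSeed.grow`), and such a grown continuum contains a new seed, which can
moreover be chosen to avoid all points that `ε / 2`-shadow a prescribed point `g` up to time `N`
(`IsGrown.exists_seed`), because the shadowing points of a grown continuum lie in one ball of radius
`r`. Iterating gives nested continua, hence a point `y` whose forward orbit is outside the
`r`-neighbourhood of `P` at times with gaps at most `N`. Thus the forward orbit of `y` avoids a
neighbourhood of `P`. The set `F` of points whose full orbit avoids that neighbourhood is closed,
invariant and proper, hence finite, so `y` is forward asymptotic to some `f ∈ F`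
(`exists_asymptotic`). Letting `g` run through the orbits of the points of `F`, each infinitely
often, excludes this. So there are no grown continua (`exists_forall_not_isGrown`).

Finally, a nontrivial connected component contains nontrivial continua of arbitrarily small diameter
(`boundary_bumping`); the first iterate, forward or backward, at which such a continuum gets diameter
greater than `ε` is grown for `T` or for `T⁻¹`, a contradiction.
-/

open Set MeasureTheory

/-! ### Subcontinua -/

/-- Boundary bumping: in a continuum not contained in the ball of radius `r` about `c`, the
component of `c` in the closed ball reaches the sphere. Otherwise, as components of compact spaces
are intersections of clopen sets, a clopen piece would split off the continuum. -/
theorem boundary_bumping {X : Type*} [MetricSpace X] {C : Set X} (hC : IsCompact C)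
    (hconn : IsPreconnected C) {c x : X} (hc : c ∈ C) (hx : x ∈ C) {r : ℝ} (hr : 0 < r)
    (hxc : r < dist x c) :
    ∃ D ⊆ C, IsCompact D ∧ IsPreconnected D ∧ c ∈ D ∧ (∃ w ∈ D, dist w c = r) ∧
      ∀ w ∈ D, dist w c ≤ r := by
  set K : Set X := C ∩ Metric.closedBall c r with hK
  have hKc : IsCompact K := hC.inter_right Metric.isClosed_closedBall
  have : CompactSpace K := isCompact_iff_compactSpace.mp hKc
  have hcK : c ∈ K := ⟨hc, by simp [hr.le]⟩
  set c' : K := ⟨c, hcK⟩ with hc'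
  refine ⟨Subtype.val '' connectedComponent c', ?_, ?_, ?_, ?_, ?_, ?_⟩
  · rintro _ ⟨w, -, rfl⟩
    exact w.2.1
  · exact isClosed_connectedComponent.isCompact.image continuous_subtype_val
  · exact isPreconnected_connectedComponent.image _ continuous_subtype_val.continuousOn
  · exact ⟨c', mem_connectedComponent, rfl⟩
  · by_contra hno
    push Not at hno
    have hS : IsClosed {w : K | dist (w : X) c = r} :=
      isClosed_eq (continuous_subtype_val.dist continuous_const) continuous_const
    -- a clopen piece of `K` around `c` that misses the sphere
    obtain ⟨Z, hZ, hcZ, hZS⟩ : ∃ Z : Set K, IsClopen Z ∧ c' ∈ Z ∧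
        ∀ w ∈ Z, dist (w : X) c ≠ r := by
      have : Nonempty {s : Set K // IsClopen s ∧ c' ∈ s} := ⟨⟨univ, isClopen_univ, mem_univ _⟩⟩
      obtain ⟨Z, hZ⟩ := hS.isCompact.elim_directed_family_closed
        (fun s : {s : Set K // IsClopen s ∧ c' ∈ s} => (s : Set K))
        (fun s => s.2.1.1) (by
          rw [← connectedComponent_eq_iInter_isClopen]
          ext w
          simp only [mem_inter_iff, mem_ofPred_eq, mem_empty_iff_false, iff_false, not_and]
          exact fun h1 h2 => hno w ⟨w, h2, rfl⟩ h1)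
        (fun s t => ⟨⟨s ∩ t, s.2.1.inter t.2.1, s.2.2, t.2.2⟩,
          inter_subset_left, inter_subset_right⟩)
      refine ⟨Z, Z.2.1, Z.2.2, fun w hw hwr => ?_⟩
      have : w ∈ ({w : K | dist (w : X) c = r} ∩ (Z : Set K)) := ⟨hwr, hw⟩
      rw [hZ] at this
      exact this
    have h1 : IsClosed (Subtype.val '' Z : Set X) :=
      (hZ.1.isCompact.image continuous_subtype_val).isClosed
    have h2 : IsClosed (Subtype.val '' Zᶜ ∪ (C ∩ {w | r ≤ dist w c}) : Set X) :=
      (hZ.compl.1.isCompact.image continuous_subtype_val).isClosed.union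
        (hC.isClosed.inter (isClosed_le continuous_const (continuous_id.dist continuous_const)))
    obtain ⟨w, hwC, ⟨z, hz, rfl⟩, hw2⟩ := isPreconnected_closed_iff.mp hconn _ _ h1 h2 (by
        intro w hw
        by_cases hwr : r ≤ dist w c
        · exact Or.inr (Or.inr ⟨hw, hwr⟩)
        · have hwK : w ∈ K := ⟨hw, (not_le.mp hwr).le⟩
          by_cases hwZ : (⟨w, hwK⟩ : K) ∈ Z
          · exact Or.inl ⟨_, hwZ, rfl⟩
          · exact Or.inr (Or.inl ⟨_, hwZ, rfl⟩))
      ⟨c, hc, c', hcZ, rfl⟩ ⟨x, hx, Or.inr ⟨hx, hxc.le⟩⟩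
    rcases hw2 with ⟨z', hz', h⟩ | ⟨-, h⟩
    · exact hz' (Subtype.ext h ▸ hz)
    · exact hZS z hz (le_antisymm z.2.2 h)
  · rintro _ ⟨w, -, rfl⟩
    exact w.2.2

/-- A continuum of diameter greater than `ε` has a subcontinuum of diameter between `r` and `2 * r`
at distance at least `r` from a given finite set `P`, where `r` depends only on `ε` and `P.card`.
It is found around a point whose distance to an endpoint is far from the distances of `P`. -/
theorem exists_cut {X : Type*} [MetricSpace X] {ε r : ℝ} (hr : 0 < r) (P : Finset X)
    (hPr : 4 * r * (P.card + 1) ≤ ε) {C : Set X} (hC : IsCompact C)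
    (hconn : IsPreconnected C) (hbig : ∃ x ∈ C, ∃ y ∈ C, ε < dist x y) :
    ∃ D ⊆ C, IsCompact D ∧ IsPreconnected D ∧ (∃ x ∈ D, ∃ y ∈ D, r ≤ dist x y) ∧
      (∀ x ∈ D, ∀ y ∈ D, dist x y ≤ 2 * r) ∧ ∀ x ∈ D, ∀ p ∈ P, r ≤ dist x p := by
  obtain ⟨x, hx, y, hy, hxy⟩ := hbig
  -- one of the levels `4 * r * (i + 1)`, `i ≤ P.card`, is far from all values `dist p x`
  obtain ⟨i, hi, hfar⟩ : ∃ i ∈ Finset.range (P.card + 1),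
      ∀ p ∈ P, 2 * r ≤ |4 * r * (i + 1) - dist p x| := by
    by_contra! hcon
    have : Nonempty X := ⟨x⟩
    choose! f hfP hf using hcon
    obtain ⟨i, hi, j, hj, hij, hfij⟩ := Finset.exists_ne_map_eq_of_card_lt_of_maps_to
      (s := Finset.range (P.card + 1)) (t := P) (by simp) (f := f) hfP
    have h1 := abs_lt.mp (hf i hi)
    have h2 := abs_lt.mp (hf j hj)
    rw [hfij] at h1
    rcases lt_or_gt_of_ne hij with h | h
    · have : (i : ℝ) + 1 ≤ j := by exact_mod_cast h
      nlinarith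
    · have : (j : ℝ) + 1 ≤ i := by exact_mod_cast h
      nlinarith
  have hiP : (i : ℝ) + 1 ≤ P.card + 1 := by
    have := Finset.mem_range.mp hi
    exact_mod_cast this
  have hi0 : (0 : ℝ) ≤ i := Nat.cast_nonneg i
  obtain ⟨c, hc, hcx⟩ : ∃ c ∈ C, dist c x = 4 * r * (i + 1) := by
    have := hconn.intermediate_value hx hy
      (f := fun z => dist z x) (continuous_id.dist continuous_const).continuousOn
    refine this ⟨by simp; positivity, ?_⟩
    rw [dist_comm] at hxy
    nlinarith
  obtain ⟨D, hDC, hD, hDconn, hcD, ⟨w, hw, hwc⟩, hDr⟩ := boundary_bumping hC hconn hc hx hr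
    (by rw [dist_comm, hcx]; nlinarith)
  refine ⟨D, hDC, hD, hDconn, ⟨w, hw, c, hcD, hwc.ge⟩, fun a ha b hb => ?_, fun a ha p hp => ?_⟩
  · have := dist_triangle_right a b c
    linarith [hDr a ha, hDr b hb]
  · have h1 := hfar p hp
    rw [← hcx] at h1
    have h2 := abs_dist_sub_le c p x
    have h3 := dist_triangle_left c p a
    linarith [hDr a ha]

/-! ### Expansivity and iterates -/

/-- Uniform expansivity, by compactness of the set of pairs at distance at least `δ`. -/
theorem exists_separation_time {X : Type*} [MetricSpace X] [CompactSpace X] (T : X ≃ₜ X) {ε : ℝ}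
    (hexp : ∀ x y : X, x ≠ y → ∃ n : ℤ, ε < dist ((T ^ n) x) ((T ^ n) y)) {δ : ℝ} (hδ : 0 < δ) :
    ∃ N : ℕ, ∀ x y : X, δ ≤ dist x y → ∃ n : ℤ, |n| ≤ N ∧ ε < dist ((T ^ n) x) ((T ^ n) y) := by
  have hcomp : IsCompact {z : X × X | δ ≤ dist z.1 z.2} :=
    (isClosed_le continuous_const (continuous_fst.dist continuous_snd)).isCompact
  obtain ⟨N, hN⟩ := hcomp.elim_directed_cover
    (fun N : ℕ => {z : X × X | ∃ n : ℤ, |n| ≤ N ∧ ε < dist ((T ^ n) z.1) ((T ^ n) z.2)})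
    (fun N => by
      have : {z : X × X | ∃ n : ℤ, |n| ≤ N ∧ ε < dist ((T ^ n) z.1) ((T ^ n) z.2)} =
          ⋃ n : ℤ, ⋃ _ : |n| ≤ N, {z : X × X | ε < dist ((T ^ n) z.1) ((T ^ n) z.2)} := by
        ext; simp
      rw [this]
      exact isOpen_iUnion fun n => isOpen_iUnion fun _ => isOpen_lt continuous_const
        (((T ^ n).continuous.comp continuous_fst).dist ((T ^ n).continuous.comp continuous_snd)))
    (fun z hz => by
      obtain ⟨n, hn⟩ := hexp z.1 z.2 (dist_pos.mp (hδ.trans_le hz))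
      exact mem_iUnion.mpr ⟨n.natAbs, n, by simp, hn⟩)
    (directed_of_isDirected_le fun M N hMN z ⟨n, hn, h⟩ =>
      ⟨n, hn.trans (by exact_mod_cast hMN), h⟩)
  exact ⟨N, fun x y hxy => hN (show (x, y) ∈ {z : X × X | δ ≤ dist z.1 z.2} from hxy)⟩

theorem zpow_add_apply {X : Type*} [TopologicalSpace X] (T : X ≃ₜ X) (m n : ℤ) (x : X) :
    (T ^ (m + n)) x = (T ^ m) ((T ^ n) x) := by
  rw [zpow_add]; rfl

theorem zpow_succ_apply {X : Type*} [TopologicalSpace X] (T : X ≃ₜ X) (n : ℤ) (x : X) :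
    (T ^ (n + 1)) x = T ((T ^ n) x) := by
  rw [add_comm, zpow_add_apply, zpow_one]

theorem zpow_zero_apply {X : Type*} [TopologicalSpace X] (T : X ≃ₜ X) (x : X) :
    (T ^ (0 : ℤ)) x = x := by
  rw [zpow_zero]; rfl

/-! ### Seeds and grown continua -/

/-- A grown continuum: its diameter exceeds `ε`, but its iterates under `T ^ (-j)`, `1 ≤ j ≤ N`,
have diameter at most `ε`. Connectedness is encoded as `IsPreconnected`, nonemptiness being implied
by `large`. -/
structure IsGrown {X : Type*} [MetricSpace X] (T : X ≃ₜ X) (ε : ℝ) (N : ℕ) (C : Set X) : Prop where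
  isCompact : IsCompact C
  isPreconnected : IsPreconnected C
  large : ∃ x ∈ C, ∃ y ∈ C, ε < dist x y
  past : ∀ x ∈ C, ∀ y ∈ C, ∀ j : ℕ, 1 ≤ j → j ≤ N →
    dist ((T ^ (-j : ℤ)) x) ((T ^ (-j : ℤ)) y) ≤ ε

/-- A seed: a continuum of diameter at least `r`, at distance at least `r` from `P`, all of whose
iterates under `T ^ (-j)`, `0 ≤ j ≤ N`, have diameter at most `ε`. -/
structure IsSeed {X : Type*} [MetricSpace X] (T : X ≃ₜ X) (ε r : ℝ) (N : ℕ) (P : Finset X)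
    (D : Set X) : Prop where
  isCompact : IsCompact D
  isPreconnected : IsPreconnected D
  large : ∃ x ∈ D, ∃ y ∈ D, r ≤ dist x y
  past : ∀ x ∈ D, ∀ y ∈ D, ∀ j : ℕ, j ≤ N → dist ((T ^ (-j : ℤ)) x) ((T ^ (-j : ℤ)) y) ≤ ε
  avoid : ∀ x ∈ D, ∀ p ∈ P, r ≤ dist x p

/-- Expansivity separates two points of the seed within time `N`; this cannot happen in the past, so
it happens in the future, and the first iterate of large diameter is grown. -/
theorem IsSeed.grow {X : Type*} [MetricSpace X] {T : X ≃ₜ X} {ε r : ℝ} {N : ℕ} {P : Finset X}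
    {D : Set X} (hD : IsSeed T ε r N P D)
    (hN : ∀ x y : X, r ≤ dist x y → ∃ n : ℤ, |n| ≤ N ∧ ε < dist ((T ^ n) x) ((T ^ n) y)) :
    ∃ n : ℕ, 1 ≤ n ∧ n ≤ N ∧ IsGrown T ε N ((T ^ (n : ℤ)) '' D) := by
  classical
  have hex : ∃ n : ℕ, n ≤ N ∧
      ∃ x ∈ D, ∃ y ∈ D, ε < dist ((T ^ (n : ℤ)) x) ((T ^ (n : ℤ)) y) := by
    obtain ⟨x, hx, y, hy, hxy⟩ := hD.large
    obtain ⟨n, hn, hlt⟩ := hN x y hxy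
    rcases le_total 0 n with h | h
    · lift n to ℕ using h
      exact ⟨n, by simpa using hn, x, hx, y, hy, hlt⟩
    · obtain ⟨j, rfl⟩ : ∃ j : ℕ, n = -j := ⟨n.natAbs, by omega⟩
      exact absurd hlt (not_lt.mpr (hD.past x hx y hy j (by simpa using hn)))
  obtain ⟨hnN, hlarge⟩ := Nat.find_spec hex
  have hmin := fun m (hm : m < Nat.find hex) => Nat.find_min hex hm
  generalize Nat.find hex = n at hnN hlarge hmin
  have hback : ∀ x ∈ D, ∀ y ∈ D, ∀ j : ℤ, j < n → -N ≤ j →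
      dist ((T ^ j) x) ((T ^ j) y) ≤ ε := by
    intro x hx y hy j hjn hjN
    rcases le_total 0 j with h | h
    · lift j to ℕ using h
      by_contra hlt
      exact hmin j (by omega) ⟨by omega, x, hx, y, hy, not_le.mp hlt⟩
    · obtain ⟨i, rfl⟩ : ∃ i : ℕ, j = -i := ⟨j.natAbs, by omega⟩
      exact hD.past x hx y hy i (by omega)
  have hn1 : 1 ≤ n := by
    by_contra h
    obtain rfl : n = 0 := by omega
    obtain ⟨x, hx, y, hy, hlt⟩ := hlarge
    have := hD.past x hx y hy 0 (Nat.zero_le _)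
    simp only [Nat.cast_zero, neg_zero] at this hlt
    linarith
  refine ⟨n, hn1, hnN, hD.isCompact.image (T ^ (n : ℤ)).continuous,
    hD.isPreconnected.image _ (T ^ (n : ℤ)).continuous.continuousOn, ?_, ?_⟩
  · obtain ⟨x, hx, y, hy, hlt⟩ := hlarge
    exact ⟨_, ⟨x, hx, rfl⟩, _, ⟨y, hy, rfl⟩, hlt⟩
  · rintro _ ⟨x, hx, rfl⟩ _ ⟨y, hy, rfl⟩ j hj hjN
    rw [← zpow_add_apply, ← zpow_add_apply]
    exact hback x hx y hy _ (by omega) (by omega)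

/-- A grown continuum contains a seed none of whose points `ε / 2`-shadows `g` up to time `N`. -/
theorem IsGrown.exists_seed {X : Type*} [MetricSpace X] {T : X ≃ₜ X} {ε r : ℝ} {N : ℕ}
    {P : Finset X} (hr : 0 < r) (hPr : 4 * r * (P.card + 2) ≤ ε)
    (hN : ∀ x y : X, r ≤ dist x y → ∃ n : ℤ, |n| ≤ N ∧ ε < dist ((T ^ n) x) ((T ^ n) y))
    {C : Set X} (hC : IsGrown T ε N C) (g : X) :
    ∃ D ⊆ C, IsSeed T ε r N P D ∧ ∀ x ∈ D, ∃ j : ℕ, j ≤ N ∧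
      ε / 2 < dist ((T ^ (j : ℤ)) x) ((T ^ (j : ℤ)) g) := by
  classical
  -- `z` is a point of `C` shadowing `g` up to time `N`, if there is one
  obtain ⟨z, hz⟩ : ∃ z : X, ∀ x ∈ C,
      (∀ j : ℕ, j ≤ N → dist ((T ^ (j : ℤ)) x) ((T ^ (j : ℤ)) g) ≤ ε / 2) → dist x z < r := by
    by_cases hex : ∃ z ∈ C, ∀ j : ℕ, j ≤ N → dist ((T ^ (j : ℤ)) z) ((T ^ (j : ℤ)) g) ≤ ε / 2
    · obtain ⟨z, hzC, hz⟩ := hex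
      refine ⟨z, fun x hxC hx => ?_⟩
      by_contra hlt
      obtain ⟨n, hn, hlt⟩ := hN x z (not_lt.mp hlt)
      rcases le_or_gt 0 n with h | h
      · lift n to ℕ using h
        have hnN : n ≤ N := by simpa using hn
        have := dist_triangle_right ((T ^ (n : ℤ)) x) ((T ^ (n : ℤ)) z) ((T ^ (n : ℤ)) g)
        linarith [hx n hnN, hz n hnN]
      · obtain ⟨i, rfl⟩ : ∃ i : ℕ, n = -i := ⟨n.natAbs, by omega⟩
        exact absurd hlt (not_lt.mpr (hC.past x hxC z hzC i (by omega) (by simpa using hn)))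
    · exact ⟨g, fun x hxC hx => absurd ⟨x, hxC, hx⟩ hex⟩
  have hcard : ((insert z P).card : ℝ) ≤ P.card + 1 := by exact_mod_cast Finset.card_insert_le z P
  obtain ⟨D, hDC, hD, hDconn, hlarge, hsmall, havoid⟩ := exists_cut hr (insert z P) (ε := ε)
    (by nlinarith) hC.isCompact hC.isPreconnected hC.large
  refine ⟨D, hDC, ⟨hD, hDconn, hlarge, ?_, fun x hx p hp =>
    havoid x hx p (Finset.mem_insert_of_mem hp)⟩, fun x hx => ?_⟩
  · intro x hx y hy j hj
    rcases Nat.eq_zero_or_pos j with rfl | h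
    · simp only [Nat.cast_zero, neg_zero, zpow_zero_apply]
      have : (0 : ℝ) ≤ P.card := Nat.cast_nonneg _
      nlinarith [hsmall x hx y hy]
    · exact hC.past x (hDC hx) y (hDC hy) j h hj
  · by_contra! hcon
    have h1 := hz x (hDC hx) hcon
    have h2 := havoid x hx z (Finset.mem_insert_self z P)
    linarith

/-! ### Orbits attracted by a finite set -/

/-- An orbit accumulating only on a finite invariant set `F` is forward asymptotic to the orbit of a
point of `F`: once `T ^ n y` is much closer to `F` than the points of `F` are to each other, the
nearest point of `F` moves along with `T`. -/
theorem exists_asymptotic {X : Type*} [MetricSpace X] [CompactSpace X] (T : X ≃ₜ X) {F : Set X}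
    (hF : F.Finite) (hFT : ∀ n : ℤ, ∀ x ∈ F, (T ^ n) x ∈ F) (y : X)
    (hlim : ∀ η > 0, ∃ m : ℕ, ∀ n : ℕ, m ≤ n → ∃ f ∈ F, dist ((T ^ (n : ℤ)) y) f < η)
    {η : ℝ} (hη : 0 < η) :
    ∃ m : ℕ, ∃ f ∈ F, ∀ n : ℕ, m ≤ n → dist ((T ^ (n : ℤ)) y) ((T ^ (n : ℤ)) f) < η := by
  obtain ⟨s, hs, hs0⟩ : ∃ s : ℝ, (∀ f ∈ F, ∀ g ∈ F, f ≠ g → s ≤ dist f g) ∧ 0 < s := by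
    have h1 : ∀ᶠ s in nhdsWithin (0 : ℝ) (Ioi 0), ∀ f ∈ F, ∀ g ∈ F, f ≠ g → s ≤ dist f g := by
      rw [Filter.eventually_all_finite hF]
      intro f _
      rw [Filter.eventually_all_finite hF]
      intro g _
      by_cases hfg : f = g
      · simp [hfg]
      · filter_upwards [Ioo_mem_nhdsGT (dist_pos.mpr hfg)] with s hs _ using hs.2.le
    exact (h1.and self_mem_nhdsWithin).exists
  obtain ⟨θ, hθ, hθT⟩ := Metric.uniformContinuous_iff.mp
    (CompactSpace.uniformContinuous_of_continuous T.continuous) (s / 2) (by positivity)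
  obtain ⟨m, hm⟩ := hlim (min η (min θ (s / 2))) (by positivity)
  obtain ⟨f, hf, hfm⟩ := hm m le_rfl
  have key : ∀ k : ℕ, dist ((T ^ ((m + k : ℕ) : ℤ)) y) ((T ^ (k : ℤ)) f) <
      min η (min θ (s / 2)) := by
    intro k
    induction k with
    | zero => simpa [zpow_zero_apply] using hfm
    | succ k ih =>
      obtain ⟨g, hg, hgm⟩ := hm (m + (k + 1)) (by omega)
      have h1 := hθT (ih.trans_le ((min_le_right _ _).trans (min_le_left _ _)))
      rw [← zpow_succ_apply, ← zpow_succ_apply] at h1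
      have h2 := hgm.trans_le ((min_le_right _ _).trans (min_le_right _ _))
      have h3 : g = (T ^ ((k + 1 : ℕ) : ℤ)) f := by
        by_contra hne
        have h4 := hs _ hg _ (hFT _ f hf) hne
        have h5 := dist_triangle_left g ((T ^ ((k + 1 : ℕ) : ℤ)) f)
          ((T ^ ((m + (k + 1) : ℕ) : ℤ)) y)
        push_cast at h1 h2 h4 h5
        rw [add_assoc] at h1
        linarith
      rw [← h3]
      exact hgm
  refine ⟨m, (T ^ (-m : ℤ)) f, hFT _ f hf, fun n hn => ?_⟩
  obtain ⟨k, rfl⟩ := Nat.exists_eq_add_of_le hn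
  have := (key k).trans_le (min_le_left _ _)
  have hk : ((m + k : ℕ) : ℤ) + -m = k := by push_cast; ring
  rw [← zpow_add_apply, hk]
  exact this

/-- Dependent choice along `ℕ`, with a step relation depending on the index. -/
theorem exists_seq_of_step {S : Type*} (P : S → Prop) (R : ℕ → S → S → Prop)
    (h : ∀ k s, P s → ∃ s', P s' ∧ R k s s') (s₀ : S) (h₀ : P s₀) :
    ∃ u : ℕ → S, ∀ k, P (u k) ∧ R k (u k) (u (k + 1)) := by
  choose! f hfP hfR using h
  let u : ℕ → S := fun n => Nat.rec s₀ (fun k s => f k s) n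
  have hu : ∀ k, P (u k) := by
    intro k
    induction k with
    | zero => exact h₀
    | succ k ih => exact hfP k _ ih
  exact ⟨u, fun k => ⟨hu k, hfR k _ (hu k)⟩⟩

/-! ### Total disconnectedness -/

/-- Grown continua do not exist once `N` is large, if proper closed invariant sets are finite and
there is a finite invariant set `P`. -/
theorem exists_forall_not_isGrown {X : Type*} [MetricSpace X] [CompactSpace X] (T : X ≃ₜ X)
    {ε : ℝ} (hε : 0 < ε)
    (hexp : ∀ x y : X, x ≠ y → ∃ n : ℤ, ε < dist ((T ^ n) x) ((T ^ n) y))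
    (P : Finset X) (hPne : P.Nonempty) (hPT : ∀ n : ℤ, ∀ x ∈ P, (T ^ n) x ∈ P)
    (hfin : ∀ A : Set X, IsClosed A → T '' A = A → A ≠ univ → A.Finite) :
    ∃ N : ℕ, ∀ C : Set X, ¬ IsGrown T ε N C := by
  set r : ℝ := ε / (4 * (P.card + 2)) with hr_def
  have hr : 0 < r := by positivity
  have hPr : 4 * r * (P.card + 2) ≤ ε := by
    rw [hr_def]; field_simp; exact le_rfl
  obtain ⟨N, hN⟩ := exists_separation_time T hexp hr
  refine ⟨N, fun C hC => ?_⟩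
  obtain ⟨p, hp⟩ := hPne
  have : Nonempty X := ⟨p⟩
  -- points whose orbit is outside the `r`-neighbourhood of `P` at some time between `0` and `N`
  set L : Set X := {x | ∃ j : ℕ, j ≤ N ∧ ∀ q ∈ P, r ≤ dist ((T ^ (j : ℤ)) x) q} with hL_def
  have hL : IsClosed L := by
    have : L = ⋃ j ∈ Set.Iic N, ⋂ q ∈ P, {x | r ≤ dist ((T ^ (j : ℤ)) x) q} := by
      ext; simp [L]
    rw [this]
    exact (Set.finite_Iic N).isClosed_biUnion fun j _ => isClosed_biInter fun q _ =>
      isClosed_le continuous_const ((T ^ (j : ℤ)).continuous.dist continuous_const)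
  set F : Set X := {x | ∀ n : ℤ, (T ^ n) x ∈ L} with hF_def
  have hFT : ∀ n : ℤ, ∀ x ∈ F, (T ^ n) x ∈ F := by
    intro n x hx m
    rw [← zpow_add_apply]
    exact hx _
  have hFfin : F.Finite := by
    refine hfin F ?_ ?_ ?_
    · have : F = ⋂ n : ℤ, (T ^ n) ⁻¹' L := by ext; simp [F]
      rw [this]
      exact isClosed_iInter fun n => hL.preimage (T ^ n).continuous
    · apply Subset.antisymm
      · rintro _ ⟨x, hx, rfl⟩
        have := hFT 1 x hx
        rwa [zpow_one] at this
      · intro x hx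
        refine ⟨_, hFT (-1) x hx, ?_⟩
        rw [← zpow_succ_apply, neg_add_cancel, zpow_zero_apply]
    · intro hF
      have hpF : p ∈ F := hF ▸ mem_univ p
      obtain ⟨j, -, hj⟩ := hpF 0
      rw [zpow_zero_apply] at hj
      have := hj _ (hPT j p hp)
      rw [dist_self] at this
      linarith
  obtain ⟨e, he⟩ := Set.countable_iff_exists_subset_range.mp hFfin.countable
  obtain ⟨D₀, -, hD₀, -⟩ := hC.exists_seed hr hPr hN p
  -- `u k` is a pair of a time and a seed at that time; step `k` avoids the orbit of `e k.unpair.1`,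
  -- and `k ↦ k.unpair.1` takes each value infinitely often
  obtain ⟨u, hu⟩ := exists_seq_of_step (S := ℕ × Set X) (fun s => IsSeed T ε r N P s.2)
    (fun k s s' => s.1 < s'.1 ∧ s'.1 ≤ s.1 + N ∧
      (∀ x, (T ^ (s'.1 : ℤ)) x ∈ s'.2 → (T ^ (s.1 : ℤ)) x ∈ s.2) ∧
      ∀ x ∈ s'.2, ∃ j : ℕ, j ≤ N ∧ ε / 2 < dist ((T ^ (j : ℤ)) x)
        ((T ^ (j : ℤ)) ((T ^ (s'.1 : ℤ)) (e k.unpair.1)))) (by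
      rintro k ⟨t, D⟩ hD
      obtain ⟨n, hn1, hnN, hgrown⟩ := hD.grow hN
      obtain ⟨D', hD'sub, hD', hav⟩ := hgrown.exists_seed hr hPr hN
        ((T ^ ((t + n : ℕ) : ℤ)) (e k.unpair.1))
      refine ⟨(t + n, D'), hD', by simp; omega, by simpa using hnN, fun x hx => ?_, hav⟩
      obtain ⟨x', hx', hxx⟩ := hD'sub hx
      have hcast : ((t + n : ℕ) : ℤ) = n + t := by push_cast; ring
      simp only [hcast, zpow_add_apply] at hxx
      rwa [← (T ^ (n : ℤ)).injective hxx]) (0, D₀) hD₀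
  have hmono : StrictMono fun k => (u k).1 := strictMono_nat_of_lt_succ fun k => (hu k).2.1
  -- a point that follows all the seeds
  obtain ⟨y, hy⟩ : ∃ y : X, ∀ k, (T ^ ((u k).1 : ℤ)) y ∈ (u k).2 := by
    have hclosed : ∀ k, IsClosed ((T ^ ((u k).1 : ℤ)) ⁻¹' (u k).2) := fun k =>
      (hu k).1.isCompact.isClosed.preimage (T ^ ((u k).1 : ℤ)).continuous
    obtain ⟨y, hy⟩ := IsCompact.nonempty_iInter_of_sequence_nonempty_isCompact_isClosed
      (fun k => (T ^ ((u k).1 : ℤ)) ⁻¹' (u k).2) (fun k x hx => (hu k).2.2.2.1 x hx)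
      (fun k => by
        obtain ⟨x, hx, -⟩ := (hu k).1.large
        exact Set.Nonempty.preimage ⟨x, hx⟩ (T ^ ((u k).1 : ℤ)).surjective)
      (hclosed 0).isCompact hclosed
    exact ⟨y, fun k => mem_iInter.mp hy k⟩
  have hyL : ∀ n : ℕ, (u 0).1 ≤ n → (T ^ (n : ℤ)) y ∈ L := by
    intro n hn
    obtain ⟨k, hk1, hk2⟩ : ∃ k, n ≤ (u k).1 ∧ (u k).1 ≤ n + N := by
      classical
      have hex : ∃ k, n ≤ (u k).1 := ⟨n, hmono.le_apply⟩
      have h1 := Nat.find_spec hex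
      have h2 := fun k (hk : k < Nat.find hex) => Nat.find_min hex hk
      generalize Nat.find hex = k at h1 h2
      refine ⟨k, h1, ?_⟩
      cases k with
      | zero => omega
      | succ k =>
        have := h2 k (Nat.lt_succ_self k)
        have := (hu k).2.2.1
        omega
    refine ⟨(u k).1 - n, by omega, fun q hq => ?_⟩
    rw [← zpow_add_apply]
    have hcast : (((u k).1 - n : ℕ) : ℤ) + n = (u k).1 := by omega
    rw [hcast]
    exact (hu k).1.avoid _ (hy k) q hq
  -- the limit points of the forward orbit of `y` lie in `F`
  have hlim : ∀ η > 0, ∃ m : ℕ, ∀ n : ℕ, m ≤ n → ∃ f ∈ F, dist ((T ^ (n : ℤ)) y) f < η := by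
    by_contra! hcon
    obtain ⟨η, hη, hcon⟩ := hcon
    choose ν hν hfar using hcon
    obtain ⟨w, -, φ, hφ, hw⟩ := isCompact_univ.tendsto_subseq
      (x := fun m => (T ^ (ν m : ℤ)) y) (fun m => mem_univ _)
    have hwF : w ∈ F := by
      intro n
      have h1 := ((T ^ n).continuous.tendsto w).comp hw
      refine hL.mem_of_tendsto h1 ?_
      filter_upwards [Filter.eventually_ge_atTop ((u 0).1 + n.natAbs)] with k hk
      have h2 := hν (φ k)
      have h3 := hφ.le_apply (x := k)
      obtain ⟨i, hi⟩ : ∃ i : ℕ, n + (ν (φ k) : ℤ) = i := ⟨(n + ν (φ k)).toNat, by omega⟩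
      simp only [Function.comp]
      rw [← zpow_add_apply, hi]
      exact hyL i (by omega)
    obtain ⟨k, hk⟩ := (Metric.tendsto_nhds.mp hw η hη).exists
    exact absurd hk (not_lt.mpr (hfar (φ k) w hwF))
  obtain ⟨m, f, hf, hasym⟩ := exists_asymptotic T hFfin hFT y hlim (half_pos hε)
  obtain ⟨a, rfl⟩ := he hf
  -- a step at which the orbit of `e a` was avoided, late enough for the asymptotics to apply
  obtain ⟨j, -, hj⟩ := (hu (Nat.pair a m)).2.2.2.2 _ (hy (Nat.pair a m + 1))
  rw [Nat.unpair_pair, ← zpow_add_apply, ← zpow_add_apply, ← Nat.cast_add] at hj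
  have h1 : m ≤ j + (u (Nat.pair a m + 1)).1 := by
    have h2 := hmono.le_apply (x := Nat.pair a m + 1)
    have h3 := Nat.right_le_pair a m
    omega
  exact absurd (hasym _ h1) (not_lt.mpr hj.le)

theorem totallyDisconnected_of_cam {X : Type*} [MetricSpace X] [CompactSpace X] (T : X ≃ₜ X)
    {ε : ℝ} (hε : 0 < ε)
    (hexp : ∀ x y : X, x ≠ y → ∃ n : ℤ, ε < dist ((T ^ n) x) ((T ^ n) y))
    (P : Finset X) (hPne : P.Nonempty) (hPT : ∀ n : ℤ, ∀ x ∈ P, (T ^ n) x ∈ P)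
    (hfin : ∀ A : Set X, IsClosed A → T '' A = A → A ≠ univ → A.Finite) :
    TotallyDisconnectedSpace X := by
  have hinv : ∀ n : ℤ, T⁻¹ ^ n = T ^ (-n) := fun n => inv_zpow' T n
  obtain ⟨N₁, hN₁⟩ := exists_forall_not_isGrown T hε hexp P hPne hPT hfin
  obtain ⟨N₂, hN₂⟩ := exists_forall_not_isGrown T⁻¹ hε
    (fun x y hxy => by
      obtain ⟨n, hn⟩ := hexp x y hxy
      exact ⟨-n, by rwa [hinv, neg_neg]⟩)
    P hPne (fun n x hx => by rw [hinv]; exact hPT _ x hx)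
    (fun A hA hTA => hfin A hA (by
      have h1 : T '' ((T⁻¹ : X ≃ₜ X) '' A) = A := by
        rw [image_image]
        simp only [show ∀ x, T ((T⁻¹ : X ≃ₜ X) x) = x from fun x => T.apply_symm_apply x, image_id']
      rwa [hTA] at h1))
  set N := max N₁ N₂ with hN
  rw [totallyDisconnectedSpace_iff_connectedComponent_subsingleton]
  intro x₀ a ha b hb
  by_contra hab
  -- all iterates of order at most `N` map `θ`-close points to `ε`-close points
  obtain ⟨θ, hθ, hθT⟩ : ∃ θ > 0, ∀ n : ℤ, |n| ≤ N → ∀ x y : X, dist x y < θ →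
      dist ((T ^ n) x) ((T ^ n) y) < ε := by
    have h1 : ∀ᶠ θ in nhdsWithin (0 : ℝ) (Ioi 0), ∀ n ∈ Set.Icc (-N : ℤ) N, ∀ x y : X,
        dist x y < θ → dist ((T ^ n) x) ((T ^ n) y) < ε := by
      rw [Filter.eventually_all_finite (Set.finite_Icc _ _)]
      intro n _
      obtain ⟨θ, hθ, h⟩ := Metric.uniformContinuous_iff.mp
        (CompactSpace.uniformContinuous_of_continuous (T ^ n).continuous) ε hε
      filter_upwards [Ioo_mem_nhdsGT hθ] with s hs x y hxy using h (hxy.trans hs.2)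
    obtain ⟨θ, h, hθ⟩ := (h1.and self_mem_nhdsWithin).exists
    exact ⟨θ, hθ, fun n hn => h n (abs_le.mp hn)⟩
  have hab0 : 0 < dist a b := dist_pos.mpr hab
  set ρ := min (dist a b / 2) (θ / 3) with hρ
  have hρ0 : 0 < ρ := by positivity
  have hρ1 : ρ ≤ dist a b / 2 := min_le_left _ _
  have hρ2 : ρ ≤ θ / 3 := min_le_right _ _
  obtain ⟨D, -, hD, hDconn, hbD, ⟨w, hw, hwb⟩, hDρ⟩ := boundary_bumping
    isClosed_connectedComponent.isCompact (isPreconnected_connectedComponent (x := x₀)) hb ha hρ0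
    (by linarith)
  have hsmall : ∀ n : ℤ, |n| ≤ N → ∀ x ∈ D, ∀ y ∈ D, dist ((T ^ n) x) ((T ^ n) y) ≤ ε := by
    intro n hn x hx y hy
    refine (hθT n hn x y ?_).le
    linarith [dist_triangle_right x y b, hDρ x hx, hDρ y hy]
  have hwne : w ≠ b := dist_pos.mp (hwb ▸ hρ0)
  classical
  -- the time `n` of least absolute value at which the iterate of `D` has diameter above `ε`
  have hex : ∃ k : ℕ, ∃ n : ℤ, n.natAbs = k ∧ ∃ x ∈ D, ∃ y ∈ D,
      ε < dist ((T ^ n) x) ((T ^ n) y) := by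
    obtain ⟨n, hn⟩ := hexp w b hwne
    exact ⟨_, n, rfl, w, hw, b, hbD, hn⟩
  obtain ⟨n, hnk, x, hx, y, hy, hxy⟩ := Nat.find_spec hex
  have hmin : ∀ m : ℤ, m.natAbs < n.natAbs → ∀ x ∈ D, ∀ y ∈ D,
      dist ((T ^ m) x) ((T ^ m) y) ≤ ε := by
    intro m hm x hx y hy
    by_contra h
    exact Nat.find_min hex (hnk ▸ hm) ⟨m, rfl, x, hx, y, hy, not_le.mp h⟩
  have hnN : (N : ℤ) < |n| := by
    by_contra h
    exact absurd hxy (not_lt.mpr (hsmall n (not_lt.mp h) x hx y hy))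
  have hcomp : IsCompact ((T ^ n) '' D) := hD.image (T ^ n).continuous
  have hconn : IsPreconnected ((T ^ n) '' D) := hDconn.image _ (T ^ n).continuous.continuousOn
  have hlarge : ∃ x ∈ (T ^ n) '' D, ∃ y ∈ (T ^ n) '' D, ε < dist x y :=
    ⟨_, ⟨x, hx, rfl⟩, _, ⟨y, hy, rfl⟩, hxy⟩
  rcases le_total 0 n with h | h
  · rw [abs_of_nonneg h] at hnN
    refine hN₁ _ ⟨hcomp, hconn, hlarge, ?_⟩
    rintro _ ⟨x, hx, rfl⟩ _ ⟨y, hy, rfl⟩ j hj1 hj2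
    rw [← zpow_add_apply, ← zpow_add_apply]
    exact hmin _ (by omega) x hx y hy
  · rw [abs_of_nonpos h] at hnN
    refine hN₂ _ ⟨hcomp, hconn, hlarge, ?_⟩
    rintro _ ⟨x, hx, rfl⟩ _ ⟨y, hy, rfl⟩ j hj1 hj2
    rw [hinv, ← zpow_add_apply, ← zpow_add_apply]
    exact hmin _ (by omega) x hx y hy

/-! ### Symbolic coding -/

theorem exists_clopen_cover {X : Type*} [MetricSpace X] [CompactSpace X]
    [TotallyDisconnectedSpace X] {ε : ℝ} (hε : 0 < ε) :
    ∃ (m : ℕ) (U : Fin m → Set X), (∀ i, IsClopen (U i)) ∧ (∀ x, ∃ i, x ∈ U i) ∧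
      ∀ i, ∀ x ∈ U i, ∀ y ∈ U i, dist x y ≤ ε := by
  have h : ∀ x : X, ∃ V : Set X, IsClopen V ∧ x ∈ V ∧ V ⊆ Metric.ball x (ε / 2) := fun x =>
    compact_exists_isClopen_in_isOpen Metric.isOpen_ball (Metric.mem_ball_self (by positivity))
  choose V hV hxV hVb using h
  obtain ⟨t, ht⟩ := isCompact_univ.elim_finite_subcover V (fun x => (hV x).isOpen)
    (fun x _ => mem_iUnion.mpr ⟨x, hxV x⟩)
  refine ⟨t.card, fun i => V (t.equivFin.symm i), fun i => hV _, fun x => ?_, ?_⟩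
  · obtain ⟨z, hz, hxz⟩ := mem_iUnion₂.mp (ht (mem_univ x))
    exact ⟨t.equivFin ⟨z, hz⟩, by simpa using hxz⟩
  · intro i x hx y hy
    have h1 := Metric.mem_ball.mp (hVb _ hx)
    have h2 := Metric.mem_ball.mp (hVb _ hy)
    linarith [dist_triangle_right x y (t.equivFin.symm i : X)]

/-- An expansive chaotic almost minimal `ℤ`-system is topologically
conjugate to a subshift over some finite alphabet. -/
theorem statement7 {X : Type*} [MetricSpace X] [CompactSpace X] (T : X ≃ₜ X)
    (hcam : IsCAMZ T)
    (hexp : ∃ ε : ℝ, 0 < ε ∧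
      ∀ x y : X, x ≠ y → ∃ n : ℤ, ε < dist ((T ^ n) x) ((T ^ n) y)) :
    ∃ (A : Type) (_ : Fintype A) (_ : TopologicalSpace A) (_ : DiscreteTopology A)
      (Y : Set (ℤ → A)) (hYinv : ∀ y, y ∈ Y ↔ shiftHomeo A y ∈ Y),
      Y.Nonempty ∧ IsClosed Y ∧
      ∃ h : X ≃ₜ Y,
        ∀ x : X, h (T x) = restrictHomeo (shiftHomeo A) Y hYinv (h x) := by
  obtain ⟨hfaith, -, hdense, hfin⟩ := hcam
  obtain ⟨ε, hε, hexp⟩ := hexp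
  have hne : Nonempty X := by
    by_contra h
    rw [not_nonempty_iff] at h
    exact hfaith 1 one_ne_zero (Homeomorph.ext fun x => h.elim x)
  obtain ⟨p, k, hk, hpk⟩ := hdense.nonempty
  -- the orbit of the periodic point `p`
  obtain ⟨P, hP⟩ : ∃ P : Finset X, ∀ x, x ∈ P ↔ ∃ n : ℤ, (T ^ n) p = x := by
    have hmul : ∀ m : ℤ, (T ^ (k * m : ℤ)) p = p := by
      have hkp : (T ^ (k : ℤ)) p = p := by rwa [zpow_natCast]
      intro m
      induction m using Int.induction_on with
      | zero => rw [mul_zero, zpow_zero_apply]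
      | succ i ih => rw [mul_add, mul_one, zpow_add_apply, hkp, ih]
      | pred i ih =>
        apply (T ^ (k : ℤ)).injective
        rw [← zpow_add_apply, hkp]
        convert ih using 3
        ring
    have hfinite : (range fun n : ℤ => (T ^ n) p).Finite := by
      refine ((Set.finite_Ico (0 : ℤ) k).image fun n => (T ^ n) p).subset ?_
      rintro _ ⟨n, rfl⟩
      have hk0 : (0 : ℤ) < k := by exact_mod_cast hk
      refine ⟨n % k, ⟨Int.emod_nonneg _ hk0.ne', Int.emod_lt_of_pos _ hk0⟩, ?_⟩
      dsimp only
      conv_rhs => rw [← Int.emod_add_mul_ediv n k, zpow_add_apply, hmul]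
    exact ⟨hfinite.toFinset, fun x => by simp⟩
  have : TotallyDisconnectedSpace X := totallyDisconnected_of_cam T hε hexp P
    ⟨p, (hP p).mpr ⟨0, zpow_zero_apply T p⟩⟩
    (fun n x hx => by
      obtain ⟨m, rfl⟩ := (hP x).mp hx
      exact (hP _).mpr ⟨n + m, zpow_add_apply T n m p⟩) hfin
  obtain ⟨m, U, hU, hcov, hsmall⟩ := exists_clopen_cover (X := X) hε
  classical
  -- the symbol of a point records which members of the cover contain it
  let code : X → Fin m → Bool := fun x i => decide (x ∈ U i)
  have hcode : Continuous code := continuous_pi fun i => by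
    refine (continuous_bool_rng true).mpr ?_
    convert hU i using 1
    ext x
    simp [code]
  let φ : X → ℤ → Fin m → Bool := fun x n => code ((T ^ n) x)
  have hφ : Continuous φ := continuous_pi fun n => hcode.comp (T ^ n).continuous
  have hφinj : Function.Injective φ := by
    intro x y hxy
    by_contra hne
    obtain ⟨n, hn⟩ := hexp x y hne
    obtain ⟨i, hi⟩ := hcov ((T ^ n) x)
    have h1 : decide ((T ^ n) x ∈ U i) = decide ((T ^ n) y ∈ U i) :=
      congrFun (congrFun hxy n) i
    have h2 : (T ^ n) y ∈ U i := by simpa [hi] using h1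
    exact absurd hn (not_lt.mpr (hsmall i _ hi _ h2))
  have hemb : Topology.IsClosedEmbedding φ := hφ.isClosedEmbedding hφinj
  have hφT : ∀ x, φ (T x) = shiftHomeo (Fin m → Bool) (φ x) := by
    intro x
    funext n
    change code ((T ^ n) (T x)) = code ((T ^ (n + 1)) x)
    rw [zpow_add_apply, zpow_one]
  refine ⟨Fin m → Bool, inferInstance, inferInstance, inferInstance, range φ, ?_,
    range_nonempty φ, hemb.isClosed_range, hemb.isEmbedding.toHomeomorph, fun x =>
      Subtype.ext (hφT x)⟩
  intro y
  constructor
  · rintro ⟨x, rfl⟩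
    exact ⟨T x, hφT x⟩
  · rintro ⟨x, hx⟩
    refine ⟨T.symm x, (shiftHomeo (Fin m → Bool)).injective ?_⟩
    rw [← hφT, T.apply_symm_apply, hx]
end
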